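/- arXiv:1712.03145 — 5 statements merged into one kernel-verified Lean document; each statement's English description precedes it below -/
import Mathlib

section
/- Let r ≥ 2 be a fixed integer and let ε, K > 0 be constants. Let W ⊆ [n] be a fixed set of at most n/2 vertices, and let G ~ G(n,p) where p = p(n) ≥ n^{-1/r + ε}. Then with high probability, in every r-coloring of the edges of G, every subset Q ⊆ W of size at most K/p can be covered by 400 r^4 · log(4r^2) monochromatic cycles. -/
open MeasureTheory Filter

noncomputable def bernoulliM (q : ℝ) : Measure Bool :=
  ENNReal.ofReal q • Measure.dirac true + ENNReal.ofReal (1 - q) • Measure.dirac false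

noncomputable def gnp (n : ℕ) (q : ℝ) : Measure (Sym2 (Fin n) → Bool) :=
  Measure.pi fun _ => bernoulliM q

def graphOf {n : ℕ} (ω : Sym2 (Fin n) → Bool) : SimpleGraph (Fin n) :=
  SimpleGraph.fromRel (fun u v => ω s(u, v))

def IsMonoCycle {V ι : Type*} (G : SimpleGraph V) (c : Sym2 V → ι) (i : ι) (S : Set V) : Prop :=
  (∃ v, S = {v}) ∨
  (∃ u v, G.Adj u v ∧ c s(u, v) = i ∧ S = {u, v}) ∨
  (∃ (v : V) (w : G.Walk v v), w.IsCycle ∧ (∀ e ∈ w.edges, c e = i) ∧ S = {x | x ∈ w.support})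

set_option linter.unusedSectionVars false
set_option linter.unusedVariables false

section PartOne
open Finset
variable {V : Type*} [DecidableEq V]

/-- cyclic list -/
def CycL (R : V → V → Prop) (l : List V) : Prop :=
  l.Nodup ∧ ∃ a t, l = a :: t ∧ (t = [] ∨ List.IsChain R (a :: (t ++ [a])))

def IndS (R : V → V → Prop) (I : Finset V) : Prop :=
  ∀ x ∈ I, ∀ y ∈ I, x ≠ y → ¬ R x y

def CovL (P : List V → Prop) (A : Finset V) (k : ℕ) : Prop :=
  ∃ L : List (List V), L.length ≤ k ∧ (∀ l ∈ L, P l) ∧ ∀ x ∈ A, ∃ l ∈ L, x ∈ l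

theorem CovL.union {P : List V → Prop} {A B : Finset V} {j k : ℕ}
    (hA : CovL P A j) (hB : CovL P B k) : CovL P (A ∪ B) (j + k) := by
  obtain ⟨L, h1, h2, h3⟩ := hA
  obtain ⟨M, g1, g2, g3⟩ := hB
  refine ⟨L ++ M, by simp; omega, ?_, ?_⟩
  · intro l hl
    rcases List.mem_append.1 hl with h | h
    exacts [h2 l h, g2 l h]
  · intro x hx
    rcases Finset.mem_union.1 hx with h | h
    · obtain ⟨l, hl, hx⟩ := h3 x h
      exact ⟨l, by simp [hl], hx⟩
    · obtain ⟨l, hl, hx⟩ := g3 x h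
      exact ⟨l, by simp [hl], hx⟩

theorem CovL.mono {P P' : List V → Prop} {A A' : Finset V} {j k : ℕ}
    (h : CovL P A j) (hP : ∀ l, P l → ∃ l', P' l' ∧ ∀ x ∈ l, x ∈ l') (hA : A' ⊆ A) (hj : j ≤ k) :
    CovL P' A' k := by
  obtain ⟨L, h1, h2, h3⟩ := h
  choose f hf using hP
  refine ⟨L.attach.map (fun l => f l.1 (h2 l.1 l.2)), by simp; omega, ?_, ?_⟩
  · intro l hl
    obtain ⟨m, hm, rfl⟩ := List.mem_map.1 hl
    exact (hf _ _).1
  · intro x hx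
    obtain ⟨l, hl, hx⟩ := h3 x (hA hx)
    exact ⟨f l (h2 l hl), List.mem_map.2 ⟨⟨l, hl⟩, by simp, rfl⟩, (hf _ _).2 x hx⟩

theorem CovL.biUnion {ι : Type*} [DecidableEq ι] {P : List V → Prop} (s : Finset ι)
    (A : ι → Finset V) (k : ℕ)
    (h : ∀ i ∈ s, CovL P (A i) k) : CovL P (s.biUnion A) (s.card * k) := by
  induction s using Finset.induction_on with
  | empty => exact ⟨[], by simp, by simp, by simp⟩
  | insert i s hi ih =>
    rw [Finset.biUnion_insert, Finset.card_insert_of_notMem hi]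
    have := (h i (by simp)).union (ih (fun j hj => h j (by simp [hj])))
    exact this.mono (fun l hl => ⟨l, hl, fun _ h => h⟩) (Finset.Subset.refl _) (by ring_nf; omega)

theorem last_split {α : Type*} (p : α → Prop) (t : List α) (h : ∃ x ∈ t, p x) :
    ∃ t1 w t2, t = t1 ++ w :: t2 ∧ p w ∧ ∀ x ∈ t2, ¬ p x := by
  induction t with
  | nil => simp at h
  | cons a t ih =>
    by_cases h' : ∃ x ∈ t, p x
    · obtain ⟨t1, w, t2, rfl, h1, h2⟩ := ih h'
      exact ⟨a :: t1, w, t2, by simp, h1, h2⟩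
    · refine ⟨[], a, t, by simp, ?_, by push Not at h'; exact h'⟩
      obtain ⟨x, hx, hp⟩ := h
      rcases List.mem_cons.1 hx with rfl | hx
      · exact hp
      · exact absurd ⟨x, hx, hp⟩ h'

theorem cyc_nbrs (R : V → V → Prop) (hR : ∀ x y, R x y → R y x) (A : Finset V) (hA : A.Nonempty) :
    ∃ v ∈ A, ∃ l : List V, CycL R l ∧ (∀ x ∈ l, x ∈ A) ∧ v ∈ l ∧
      ∀ w ∈ A, w ≠ v → R v w → w ∈ l := by
  classical
  let P : ℕ → Prop := fun k => ∃ l : List V, l.Nodup ∧ List.IsChain R l ∧ (∀ x ∈ l, x ∈ A) ∧ l.length = k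
  have hb : ∀ k, P k → k ≤ A.card := by
    rintro k ⟨l, h1, -, h3, rfl⟩
    rw [← List.toFinset_card_of_nodup h1]
    exact Finset.card_le_card (fun x hx => h3 x (by simpa using hx))
  obtain ⟨a, ha⟩ := hA
  have h1 : P 1 := ⟨[a], by simp, by simp, by simpa using ha, rfl⟩
  set k := Nat.findGreatest P A.card with hk
  have hPk : P k := Nat.findGreatest_spec (hb 1 h1) h1
  have hk1 : 1 ≤ k := Nat.le_findGreatest (hb 1 h1) h1
  have hmax : ∀ j, P j → j ≤ k := fun j hj => Nat.le_findGreatest (hb j hj) hj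
  obtain ⟨l, hnd, hch, hsub, hlen⟩ := hPk
  match l, hlen with
  | [], hlen => simp at hlen; omega
  | v :: t, hlen =>
    have key : ∀ w ∈ A, w ≠ v → R v w → w ∈ t := by
      intro w hw hwv hR'
      by_contra hwt
      have : P (k + 1) := by
        refine ⟨w :: v :: t, ?_, ?_, ?_, by simp [← hlen]⟩
        · exact List.nodup_cons.2 ⟨by simp [hwv, hwt], hnd⟩
        · exact List.IsChain.cons_cons (hR _ _ hR') hch
        · intro x hx
          rcases List.mem_cons.1 hx with rfl | hx
          exacts [hw, hsub x hx]
      have := hmax _ this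
      omega
    have hvA : v ∈ A := hsub v (by simp)
    by_cases hex : ∃ w ∈ t, R v w
    · obtain ⟨t1, w, t2, rfl, hw, hlast⟩ := last_split (fun w => R v w) t hex
      have hsp : v :: (t1 ++ w :: t2) = (v :: (t1 ++ [w])) ++ t2 := by simp
      rw [hsp] at hnd hch hsub
      refine ⟨v, hvA, v :: (t1 ++ [w]), ⟨hnd.of_append_left, v, t1 ++ [w], rfl, Or.inr ?_⟩, 
        fun x hx => hsub x (List.mem_append_left _ hx), by simp, ?_⟩
      · have h2 := hch.left_of_append
        rw [← List.cons_append]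
        refine List.IsChain.append h2 (by simp) ?_
        intro x hx y hy
        rw [← List.cons_append, List.getLast?_append] at hx
        simp at hx hy
        subst hx; subst hy
        exact hR _ _ hw
      · intro x hx hxv hRx
        have := key x hx hxv hRx
        simp only [List.mem_append, List.mem_cons] at this
        rcases this with h | h | h
        · simp [h]
        · simp [h]
        · exact absurd hRx (hlast x h)
    · refine ⟨v, hvA, [v], ⟨by simp, v, [], rfl, Or.inl rfl⟩, by simpa using hvA, by simp, ?_⟩
      intro w hw hwv hR'
      exact absurd ⟨w, key w hw hwv hR', hR'⟩ hex

theorem posa (R : V → V → Prop) (hR : ∀ x y, R x y → R y x) (k : ℕ) (A : Finset V)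
    (hI : ∀ I ⊆ A, IndS R I → I.card ≤ k) :
    CovL (fun l => CycL R l ∧ ∀ x ∈ l, x ∈ A) A k := by
  classical
  induction k generalizing A with
  | zero =>
    refine ⟨[], by simp, by simp, fun x hx => ?_⟩
    have := hI {x} (by simpa using hx) (by intro a ha b hb hab; simp at ha hb; simp_all)
    simp at this
  | succ k ih =>
    rcases A.eq_empty_or_nonempty with rfl | hne
    · exact ⟨[], by simp, by simp, by simp⟩
    obtain ⟨v, hv, l, hl, hlA, hvl, hnb⟩ := cyc_nbrs R hR A hne
    have := ih (A \ l.toFinset) (by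
      intro I hIs hind
      have hvI : v ∉ I := fun h => by
        have := hIs h; simp [hvl] at this
      have := hI (insert v I) (by
        intro x hx
        rcases Finset.mem_insert.1 hx with rfl | hx
        · exact hv
        · exact (Finset.mem_sdiff.1 (hIs hx)).1) (by
        have hvx : ∀ x ∈ I, ¬ R v x := by
          intro x hx hRx
          have h1 := Finset.mem_sdiff.1 (hIs hx)
          exact h1.2 (by simpa using hnb x h1.1 (by rintro rfl; exact hvI hx) hRx)
        intro x hx y hy hxy
        rcases Finset.mem_insert.1 hx with hx' | hx' <;> rcases Finset.mem_insert.1 hy with hy' | hy'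
        · exact absurd (hx'.trans hy'.symm) hxy
        · rw [hx']; exact hvx y hy'
        · rw [hy']; exact fun h => hvx x hx' (hR _ _ h)
        · exact hind x hx' y hy' hxy)
      rw [Finset.card_insert_of_notMem hvI] at this
      omega)
    have h2 : CovL (fun l => CycL R l ∧ ∀ x ∈ l, x ∈ A) l.toFinset 1 :=
      ⟨[l], by simp, by simpa using ⟨hl, hlA⟩, by simp⟩
    have h3 := h2.union (this.mono (P' := fun l => CycL R l ∧ ∀ x ∈ l, x ∈ A)
      (fun m hm => ⟨m, ⟨hm.1, fun x hx => (Finset.mem_sdiff.1 (hm.2 x hx)).1⟩, fun _ h => h⟩) 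
      (Finset.Subset.refl _) le_rfl)
    refine h3.mono (fun l hl => ⟨l, hl, fun _ h => h⟩) ?_ (by omega)
    intro x hx; simp; tauto

theorem turan (T : V → V → Prop) [DecidableRel T] (hT : ∀ x y, T x y → T y x) (D : ℕ) (A : Finset V)
    (h : ∀ A' ⊆ A, A'.Nonempty → ∃ x ∈ A', (A'.filter (fun y => y ≠ x ∧ T x y)).card ≤ D) :
    ∃ I ⊆ A, IndS T I ∧ A.card ≤ (D + 1) * I.card := by
  induction A using Finset.strongInduction with
  | H A ih =>
    rcases A.eq_empty_or_nonempty with rfl | hne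
    · exact ⟨∅, by simp, by intro x hx; simp at hx, by simp⟩
    obtain ⟨x, hx, hd⟩ := h A (Finset.Subset.refl _) hne
    set N := A.filter (fun y => y ≠ x ∧ T x y) with hN
    set A' := (A \ N).erase x with hA'
    have hsub : A' ⊆ A := (Finset.erase_subset _ _).trans Finset.sdiff_subset
    have hss : A' ⊂ A := ⟨hsub, fun hh => by have := hh hx; simp [hA'] at this⟩
    obtain ⟨I, hIA, hind, hc⟩ := ih A' hss (fun B hB => h B (hB.trans hsub))
    have hxI : x ∉ I := fun hh => by have := hIA hh; simp [hA'] at this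
    have hxn : ∀ y ∈ I, ¬ T x y := by
      intro y hy hxy
      have := hIA hy
      simp only [hA', hN, Finset.mem_erase, Finset.mem_sdiff, Finset.mem_filter] at this
      tauto
    refine ⟨insert x I, ?_, ?_, ?_⟩
    · intro y hy
      rcases Finset.mem_insert.1 hy with rfl | hy
      exacts [hx, hsub (hIA hy)]
    · intro y hy z hz hyz
      rcases Finset.mem_insert.1 hy with hy' | hy' <;> rcases Finset.mem_insert.1 hz with hz' | hz'
      · exact absurd (hy'.trans hz'.symm) hyz
      · rw [hy']; exact hxn z hz'
      · rw [hz']; exact fun hh => hxn y hy' (hT _ _ hh)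
      · exact hind y hy' z hz' hyz
    · rw [Finset.card_insert_of_notMem hxI]
      have h1 : A ⊆ insert x (N ∪ A') := by
        intro y hy
        simp only [hA', Finset.mem_insert, Finset.mem_union, Finset.mem_erase, Finset.mem_sdiff]
        tauto
      have h2 := (Finset.card_le_card h1).trans (Finset.card_insert_le _ _)
      have h3 := Finset.card_union_le N A'
      rw [mul_add]; omega

theorem degen (T : V → V → Prop) [DecidableRel T] (hT : ∀ x y, T x y → T y x) (d : ℕ) (A : Finset V)
    (h : ∀ A' ⊆ A, A'.Nonempty → ∃ x ∈ A', (A'.filter (fun y => y ≠ x ∧ T x y)).card ≤ d) :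
    ∑ x ∈ A, (A.filter (fun y => y ≠ x ∧ T x y)).card ≤ 2 * d * A.card := by
  induction A using Finset.strongInduction with
  | H A ih =>
    rcases A.eq_empty_or_nonempty with rfl | hne
    · simp
    obtain ⟨x, hx, hd⟩ := h A (Finset.Subset.refl _) hne
    have hih := ih (A.erase x) (Finset.erase_ssubset hx)
      (fun B hB => h B (hB.trans (Finset.erase_subset _ _)))
    have h1 : ∑ y ∈ A.erase x, (A.filter (fun z => z ≠ y ∧ T y z)).card
        ≤ ∑ y ∈ A.erase x, (((A.erase x).filter (fun z => z ≠ y ∧ T y z)).card + if T x y then 1 else 0) := by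
      refine Finset.sum_le_sum (fun y hy => ?_)
      split_ifs with hxy
      · refine le_trans (Finset.card_le_card (t := insert x ((A.erase x).filter (fun z => z ≠ y ∧ T y z))) ?_)
          (Finset.card_insert_le _ _)
        intro z; simp only [Finset.mem_insert, Finset.mem_filter, Finset.mem_erase]; tauto
      · refine le_of_eq (congrArg _ ?_)
        ext z
        simp only [Finset.mem_filter, Finset.mem_erase]
        constructor
        · rintro ⟨h1, h2, h3⟩
          exact ⟨⟨fun h => hxy (by subst h; exact hT _ _ h3), h1⟩, h2, h3⟩
        · tauto
    rw [Finset.sum_add_distrib, ← Finset.sum_filter, ← Finset.card_eq_sum_ones] at h1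
    have h2 : ((A.erase x).filter (fun y => T x y)).card = (A.filter (fun y => y ≠ x ∧ T x y)).card := by
      congr 1; ext z; simp only [Finset.mem_filter, Finset.mem_erase]; tauto
    rw [← Finset.add_sum_erase A _ hx]
    have h3 := Finset.card_erase_add_one hx
    have : 2 * d * A.card = 2 * d * (A.erase x).card + 2 * d := by rw [← h3]; ring
    omega

theorem big_cycle {r : ℕ} (H : Fin r → V → V → Prop) (hH : ∀ i x y, H i x y → H i y x) (α : ℕ)
    (hr : 0 < r)
    (A : Finset V) (hA : A.Nonempty)
    (hI : ∀ I ⊆ A, IndS (fun x y => ∃ i, H i x y) I → I.card ≤ α) :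
    ∃ i l, CycL (H i) l ∧ (∀ x ∈ l, x ∈ A) ∧ A.card ≤ 2 * α * r * l.length := by
  classical
  let P : ℕ → Prop := fun k => ∃ i l, CycL (H i) l ∧ (∀ x ∈ l, x ∈ A) ∧ l.length = k
  have hb : ∀ k, P k → k ≤ A.card := by
    rintro k ⟨i, l, h1, h3, rfl⟩
    rw [← List.toFinset_card_of_nodup h1.1]
    exact Finset.card_le_card (fun x hx => h3 x (by simpa using hx))
  obtain ⟨a, ha⟩ := hA
  have h1 : P 1 := ⟨⟨0, hr⟩, [a], ⟨by simp, a, [], rfl, Or.inl rfl⟩, by simpa using ha, rfl⟩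
  set k := Nat.findGreatest P A.card with hk
  have hPk : P k := Nat.findGreatest_spec (hb 1 h1) h1
  have hk1 : 1 ≤ k := Nat.le_findGreatest (hb 1 h1) h1
  have hmax : ∀ j, P j → j ≤ k := fun j hj => Nat.le_findGreatest (hb j hj) hj
  obtain ⟨i, l, hl, hlA, hlen⟩ := hPk
  refine ⟨i, l, hl, hlA, ?_⟩
  have hdeg : ∀ i, ∀ A' ⊆ A, A'.Nonempty → ∃ x ∈ A', (A'.filter (fun y => y ≠ x ∧ H i x y)).card ≤ k - 1 := by
    intro i A' hA' hne
    obtain ⟨v, hv, m, hm, hmA, hvm, hnb⟩ := cyc_nbrs (H i) (hH i) A' hne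
    refine ⟨v, hv, ?_⟩
    have h2 := hmax _ ⟨i, m, hm, fun x hx => hA' (hmA x hx), rfl⟩
    rw [← List.toFinset_card_of_nodup hm.1] at h2
    have h3 : A'.filter (fun y => y ≠ v ∧ H i v y) ⊆ m.toFinset.erase v := by
      intro y hy
      simp only [Finset.mem_filter] at hy
      simp only [Finset.mem_erase, List.mem_toFinset]
      exact ⟨hy.2.1, hnb y hy.1 hy.2.1 hy.2.2⟩
    have h4 := Finset.card_le_card h3
    rw [Finset.card_erase_of_mem (by simpa using hvm)] at h4
    omega
  obtain ⟨I, hIA, hind, hc⟩ := turan (fun x y => ∃ i, H i x y) (fun x y ⟨i, h⟩ => ⟨i, hH i x y h⟩)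
    (2 * r * (k - 1)) A (by
      intro A' hA' hne
      by_contra! hcon
      have h1 : ∀ i ∈ (Finset.univ : Finset (Fin r)), ∑ x ∈ A', (A'.filter (fun y => y ≠ x ∧ H i x y)).card ≤ 2 * (k - 1) * A'.card :=
        fun i _ => degen (H i) (hH i) (k - 1) A' (fun B hB => hdeg i B (hB.trans hA'))
      have h2 := Finset.sum_le_sum h1
      rw [Finset.sum_comm] at h2
      have h3 : ∑ x ∈ A', (2 * r * (k - 1) + 1) ≤ ∑ x ∈ A', ∑ i, (A'.filter (fun y => y ≠ x ∧ H i x y)).card := by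
        refine Finset.sum_le_sum (fun x hx => (Nat.succ_le_of_lt (hcon x hx)).trans ?_)
        refine le_trans (Finset.card_le_card ?_) (Finset.card_biUnion_le)
        intro y hy
        simp only [Finset.mem_filter, Finset.mem_biUnion, Finset.mem_univ, true_and] at hy ⊢
        obtain ⟨h1, h2, i, h3⟩ := hy
        exact ⟨i, h1, h2, h3⟩
      have h4 := h3.trans h2
      simp at h4
      have := hne.card_pos
      nlinarith)
  have hIα := hI I hIA hind
  clear_value k
  obtain ⟨k', rfl⟩ : ∃ k', k = k' + 1 := ⟨k - 1, by omega⟩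
  rw [hlen]
  simp only [Nat.add_sub_cancel] at hc
  calc A.card ≤ _ := hc
    _ ≤ (2 * r * k' + 1) * α := Nat.mul_le_mul_left _ hIα
    _ ≤ 2 * α * r * (k' + 1) := by nlinarith

end PartOne

section PartTwo
open Finset
variable {V : Type*} [DecidableEq V]

theorem greedy_cyc {r : ℕ} (H : Fin r → V → V → Prop) (hH : ∀ i x y, H i x y → H i y x) (α : ℕ)
    (hr : 0 < r) (hα : 0 < α)
    (A : Finset V)
    (hI : ∀ I ⊆ A, IndS (fun x y => ∃ i, H i x y) I → I.card ≤ α) (s : ℕ) :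
    ∃ B ⊆ A, CovL (fun l => ∃ i, CycL (H i) l ∧ ∀ x ∈ l, x ∈ A) (A \ B) s ∧
      (B.card : ℝ) ≤ (1 - 1 / (2 * α * r : ℝ)) ^ s * A.card := by
  induction s with
  | zero => exact ⟨A, Finset.Subset.refl _, ⟨[], by simp, by simp, by simp⟩, by simp⟩
  | succ s ih =>
    obtain ⟨B, hB, hc, hs⟩ := ih
    have hpos : (0:ℝ) < 2 * α * r := by positivity
    have h1 : (1:ℝ) ≤ 2 * α * r := by
      have : 1 ≤ 2 * α * r := Nat.succ_le_of_lt (by positivity)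
      exact_mod_cast this
    have hnn : (0:ℝ) ≤ 1 - 1 / (2 * α * r : ℝ) := by
      rw [sub_nonneg, div_le_one hpos]; exact h1
    rcases B.eq_empty_or_nonempty with rfl | hne
    · refine ⟨∅, by simp, hc.mono (fun l hl => ⟨l, hl, fun _ h => h⟩) (by simp) (by omega), ?_⟩
      simpa using mul_nonneg (pow_nonneg hnn (s+1)) (Nat.cast_nonneg A.card)
    obtain ⟨i, l, hl, hlB, hlen⟩ := big_cycle H hH α hr B hne (fun I hI' => hI I (hI'.trans hB))
    refine ⟨B \ l.toFinset, Finset.sdiff_subset.trans hB, ?_, ?_⟩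
    · have h2 : CovL (fun l => ∃ i, CycL (H i) l ∧ ∀ x ∈ l, x ∈ A) l.toFinset 1 :=
        ⟨[l], by simp, fun m hm => by rw [List.mem_singleton.1 hm]; exact ⟨i, hl, fun x hx => hB (hlB x hx)⟩, by simp⟩
      refine (hc.union h2).mono (fun l hl => ⟨l, hl, fun _ h => h⟩) ?_ le_rfl
      intro x; simp only [Finset.mem_sdiff, Finset.mem_union, List.mem_toFinset]; tauto
    · have h3 : l.toFinset ⊆ B := fun x hx => hlB x (by simpa using hx)
      have h4 := Finset.card_sdiff_add_card_eq_card h3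
      rw [List.toFinset_card_of_nodup hl.1] at h4
      have h4' : ((B \ l.toFinset).card : ℝ) + l.length = B.card := by exact_mod_cast h4
      have hlen' : (B.card : ℝ) ≤ 2 * α * r * l.length := by exact_mod_cast hlen
      have h5 : (B.card : ℝ) / (2 * α * r) ≤ l.length := by
        rw [div_le_iff₀ hpos]; linarith
      calc ((B \ l.toFinset).card : ℝ) ≤ B.card - B.card / (2 * α * r) := by linarith
        _ = (1 - 1 / (2 * α * r : ℝ)) * B.card := by ring
        _ ≤ (1 - 1 / (2 * α * r : ℝ)) * ((1 - 1 / (2 * α * r : ℝ)) ^ s * A.card) := by gcongr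
        _ = _ := by ring

theorem exists_map_list (l l2 : List V) (hl : l.Nodup) (h : l.length = l2.length) :
    ∃ f : V → V, l.map f = l2 := by
  induction l generalizing l2 with
  | nil => exact ⟨id, by simp at h; simp [List.eq_nil_of_length_eq_zero h.symm]⟩
  | cons a t ih =>
    match l2, h with
    | b :: t2, h =>
      obtain ⟨f, hf⟩ := ih t2 (List.nodup_cons.1 hl).2 (by simpa using h)
      refine ⟨Function.update f a b, ?_⟩
      simp only [List.map_cons, Function.update_self, List.cons.injEq, true_and]
      rw [← hf]
      apply List.map_congr_left
      intro x hx
      rw [Function.update_of_ne]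
      rintro rfl
      exact (List.nodup_cons.1 hl).1 hx

theorem chain_iff_map (R : V → V → Prop) (f : V → V) (a : V) (t : List V) (b : V)
    (hf : (a :: t).map f = t ++ [b]) :
    List.IsChain R (a :: (t ++ [b])) ↔ ∀ u ∈ a :: t, R u (f u) := by
  induction t generalizing a with
  | nil => simp at hf; simp [hf]
  | cons c t ih =>
    have h1 : f a = c := by simpa using congrArg List.head? hf
    have h2 : (c :: t).map f = t ++ [b] := by
      have := congrArg List.tail hf
      simpa using this
    rw [List.cons_append, List.isChain_cons_cons, ih c h2, List.forall_mem_cons (a := a), h1]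

def insList (ins : V → Option V) (l : List V) : List V := l.flatMap (fun u => u :: (ins u).toList)

theorem insList_mem (ins : V → Option V) (l : List V) (x : V) :
    x ∈ insList ins l ↔ x ∈ l ∨ ∃ u ∈ l, ins u = some x := by
  simp only [insList, List.mem_flatMap, List.mem_cons, Option.mem_toList]
  constructor
  · rintro ⟨u, hu, rfl | h⟩
    · exact Or.inl hu
    · exact Or.inr ⟨u, hu, h⟩
  · rintro (h | ⟨u, hu, h⟩)
    · exact ⟨x, h, Or.inl rfl⟩
    · exact ⟨u, hu, Or.inr h⟩

theorem insList_length_le (ins : V → Option V) (l : List V) : (insList ins l).length ≤ 2 * l.length := by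
  induction l with
  | nil => simp [insList]
  | cons a t ih =>
    have : insList ins (a :: t) = a :: ((ins a).toList ++ insList ins t) := by simp [insList]
    rw [this]
    cases ins a <;> simp <;> omega

theorem insList_length_eq (ins : V → Option V) (l : List V) (h : ∀ u ∈ l, (ins u).isSome) :
    (insList ins l).length = 2 * l.length := by
  induction l with
  | nil => simp [insList]
  | cons a t ih =>
    have h0 : insList ins (a :: t) = a :: ((ins a).toList ++ insList ins t) := by simp [insList]
    rw [h0]
    obtain ⟨b, hb⟩ := Option.isSome_iff_exists.1 (h a (by simp))
    have := ih (fun u hu => h u (by simp [hu]))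
    simp [hb]; omega

theorem insList_le_length (ins : V → Option V) (l : List V) : l.length ≤ (insList ins l).length := by
  induction l with
  | nil => simp [insList]
  | cons a t ih =>
    have : insList ins (a :: t) = a :: ((ins a).toList ++ insList ins t) := by simp [insList]
    rw [this]
    simp; omega

theorem insList_nodup (ins : V → Option V) (l : List V) (hl : l.Nodup)
    (h1 : ∀ u ∈ l, ∀ x, ins u = some x → x ∉ l)
    (h2 : ∀ u ∈ l, ∀ v ∈ l, ∀ x, ins u = some x → ins v = some x → u = v) :
    (insList ins l).Nodup := by
  refine List.nodup_flatMap.2 ⟨?_, ?_⟩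
  · intro u hu
    cases h : ins u with
    | none => simp
    | some x =>
      simp
      rintro rfl
      exact h1 u hu u h hu
  · refine List.Pairwise.imp_of_mem ?_ hl
    intro u v hu hv huv x hx hy
    simp only [List.mem_cons, Option.mem_toList] at hx hy
    rcases hx with rfl | hx <;> rcases hy with hy | hy
    · exact huv hy
    · exact h1 v hv x hy hu
    · subst hy; exact h1 u hu x hx hv
    · exact huv (h2 u hu v hv x hx hy)

theorem insList_chain (R : V → V → Prop) (ins : V → Option V) (f : V → V) (a : V) (t : List V) (b : V)
    (hf : (a :: t).map f = t ++ [b])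
    (h : ∀ u ∈ a :: t, (ins u = none ∧ R u (f u)) ∨ ∃ x, ins u = some x ∧ R u x ∧ R x (f u)) :
    List.IsChain R (insList ins (a :: t) ++ [b]) := by
  induction t generalizing a with
  | nil =>
    have h1 : f a = b := by simpa using hf
    rcases h a (by simp) with ⟨h2, h3⟩ | ⟨x, h2, h3, h4⟩
    · simp [insList, h2, ← h1, h3]
    · simp [insList, h2, ← h1, h3, h4]
  | cons c t ih =>
    have h1 : f a = c := by simpa using congrArg List.head? hf
    have h2 : (c :: t).map f = t ++ [b] := by
      have := congrArg List.tail hf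
      simpa using this
    have h0 : insList ins (a :: c :: t) = a :: ((ins a).toList ++ insList ins (c :: t)) := by simp [insList]
    have hc0 : insList ins (c :: t) = c :: ((ins c).toList ++ insList ins t) := by simp [insList]
    have ih' := ih c h2 (fun u hu => h u (by simp [List.mem_cons.1 hu]))
    rw [h0]
    rw [hc0] at ih' ⊢
    rcases h a (by simp) with ⟨h2, h3⟩ | ⟨x, h2, h3, h4⟩
    · rw [h2]; simp only [Option.toList_none, List.nil_append, List.cons_append] at ih' ⊢
      exact List.IsChain.cons_cons (h1 ▸ h3) ih'
    · rw [h2]; simp only [Option.toList_some, List.nil_append, List.cons_append] at ih' ⊢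
      exact List.IsChain.cons_cons h3 (List.IsChain.cons_cons (h1 ▸ h4) ih')

/-- one round of insertion in a cyclic list -/
theorem cyc_insert (R : V → V → Prop) (ins : V → Option V) (f : V → V) (a : V) (t : List V)
    (hnd : (a :: t).Nodup)
    (hf : (a :: t).map f = t ++ [a])
    (h : ∀ u ∈ a :: t, (ins u = none ∧ R u (f u)) ∨ ∃ x, ins u = some x ∧ R u x ∧ R x (f u))
    (h1 : ∀ u ∈ a :: t, ∀ x, ins u = some x → x ∉ a :: t)
    (h2 : ∀ u ∈ a :: t, ∀ v ∈ a :: t, ∀ x, ins u = some x → ins v = some x → u = v) :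
    (insList ins (a :: t)).Nodup ∧ ∃ t', insList ins (a :: t) = a :: t' ∧
      List.IsChain R (a :: (t' ++ [a])) := by
  refine ⟨insList_nodup ins _ hnd h1 h2, (ins a).toList ++ insList ins t, by simp [insList], ?_⟩
  have := insList_chain R ins f a t a hf h
  simpa [insList] using this

theorem hall_fin (S : Finset V) (C : V → Finset V) (h : ∀ X ⊆ S, X.card ≤ (X.biUnion C).card) :
    ∃ f : V → V, (∀ u ∈ S, f u ∈ C u) ∧ ∀ u ∈ S, ∀ v ∈ S, f u = f v → u = v := by
  classical
  have := (Finset.all_card_le_biUnion_card_iff_exists_injective (fun u : S => C u.1)).1 (by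
    intro s
    have h1 := h (s.map (Function.Embedding.subtype _)) (by
      intro x hx; simp at hx; obtain ⟨a, b⟩ := hx; exact a)
    rw [Finset.card_map] at h1
    refine h1.trans (Finset.card_le_card ?_)
    intro x; simp)
  obtain ⟨g, hg, hg2⟩ := this
  refine ⟨fun u => if hu : u ∈ S then g ⟨u, hu⟩ else u, ?_, ?_⟩
  · intro u hu; simp only [hu, dif_pos]; exact hg2 ⟨u, hu⟩
  · intro u hu v hv huv
    simp only [hu, hv, dif_pos] at huv
    simpa using hg huv

theorem bonferroni (I : Finset V) (X : V → Finset V) (B : Finset V) (y : ℕ) (hX : ∀ v ∈ I, X v ⊆ B)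
    (h : ∀ v ∈ I, ∀ w ∈ I, v ≠ w → (X v ∩ X w).card ≤ y) :
    2 * ∑ v ∈ I, (X v).card ≤ 2 * B.card + I.card * (I.card - 1) * y := by
  suffices hs : 2 * ∑ v ∈ I, (X v).card ≤ 2 * (I.biUnion X).card + I.card * (I.card - 1) * y by
    have := Finset.card_le_card (Finset.biUnion_subset.2 hX)
    omega
  induction I using Finset.induction_on with
  | empty => simp
  | insert a I ha ih =>
    rw [Finset.sum_insert ha, Finset.biUnion_insert, Finset.card_insert_of_notMem ha]
    have ih' := ih (fun v hv => hX v (by simp [hv])) (fun v hv w hw => h v (by simp [hv]) w (by simp [hw]))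
    have h1 := Finset.card_union_add_card_inter (X a) (I.biUnion X)
    have h2 : (X a ∩ I.biUnion X).card ≤ I.card * y := by
      rw [Finset.inter_biUnion]
      refine Finset.card_biUnion_le_card_mul _ _ _ (fun w hw => ?_)
      exact h a (by simp) w (by simp [hw]) (by rintro rfl; exact ha hw)
    have h3 : (I.card + 1) * (I.card + 1 - 1) * y = I.card * (I.card - 1) * y + 2 * (I.card * y) := by
      rcases Nat.eq_zero_or_pos I.card with h | h
      · simp [h]
      · obtain ⟨c, hc⟩ : ∃ c, I.card = c + 1 := ⟨I.card - 1, by omega⟩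
        rw [hc]; simp; ring
    omega

theorem unbal (R : V → V → Prop) (hR : ∀ x y, R x y → R y x) (A B : Finset V) (hAB : Disjoint A B)
    [DecidableRel R]
    (q a : ℕ) (ha : 0 < a) (hB : B.card ≤ q) (hA : 8 * a ^ 2 * A.card ≤ q)
    (hdeg : ∀ v ∈ A, q ≤ 2 * a * (B.filter (fun w => R v w)).card) :
    CovL (fun l => CycL R l ∧ ∀ x ∈ l, x ∈ A ∪ B) A (4 * a) := by
  set T : V → V → Prop := fun v w => A.card ≤ (B.filter (fun x => R v x) ∩ B.filter (fun x => R w x)).card with hTdef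
  have hT : ∀ x y, T x y → T y x := by
    intro x y h; simp only [hTdef] at h ⊢; rwa [Finset.inter_comm]
  have := posa T hT (4 * a) A (by
    intro I hIA hind
    by_contra! hcon
    obtain ⟨I', hI', hc⟩ := Finset.exists_subset_card_eq hcon.le
    have hpos : 0 < I'.card := by omega
    obtain ⟨x0, hx0⟩ := Finset.card_pos.1 hpos
    have hApos : 0 < A.card := Finset.card_pos.2 ⟨x0, hIA (hI' hx0)⟩
    have h1 := bonferroni I' (fun v => B.filter (fun x => R v x)) B (A.card) (fun v _ => Finset.filter_subset _ _)
      (fun v hv w hw hvw => by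
        have := hind v (hI' hv) w (hI' hw) hvw
        simp only [hTdef] at this
        omega)
    have h2 : I'.card * q ≤ 2 * a * ∑ v ∈ I', (B.filter (fun w => R v w)).card := by
      rw [Finset.mul_sum, ← smul_eq_mul, ← Finset.sum_const]
      exact Finset.sum_le_sum (fun v hv => hdeg v (hIA (hI' hv)))
    rw [hc] at h1 h2
    have hq : 0 < q := lt_of_lt_of_le (by positivity) hA
    obtain ⟨b, hb⟩ : ∃ b, 4 * a = b + 1 := ⟨4 * a - 1, by omega⟩
    have h3 : 4 * a * (4 * a - 1) * A.card + 4 * a * A.card = 16 * a^2 * A.card := by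
      rw [hb, Nat.add_sub_cancel]
      have : 16 * a^2 = (b+1)*(b+1) := by rw [← hb]; ring
      rw [this]; ring
    have h4 : 0 < 4 * a * A.card := by positivity
    have h5 : 2 * q ≤ ∑ v ∈ I', (B.filter (fun w => R v w)).card := by
      have : (2 * a) * (2 * q) ≤ (2 * a) * ∑ v ∈ I', (B.filter (fun w => R v w)).card := by
        calc (2 * a) * (2 * q) = 4 * a * q := by ring
          _ ≤ _ := h2
      exact Nat.le_of_mul_le_mul_left this (by positivity)
    nlinarith)
  refine this.mono ?_ (Finset.Subset.refl _) le_rfl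
  rintro l ⟨⟨hnd, a0, t, rfl, hch⟩, hlA⟩
  rcases hch with rfl | hch
  · exact ⟨[a0], ⟨⟨by simp, a0, [], rfl, Or.inl rfl⟩, fun x hx => Finset.mem_union_left _ (hlA x hx)⟩, fun x hx => hx⟩
  obtain ⟨f, hf⟩ := exists_map_list (a0 :: t) (t ++ [a0]) hnd (by simp)
  rw [chain_iff_map _ f _ _ _ hf] at hch
  obtain ⟨g, hg1, hg2⟩ := hall_fin (a0 :: t).toFinset
    (fun u => B.filter (fun x => R u x) ∩ B.filter (fun x => R (f u) x)) (by
      intro X hX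
      rcases X.eq_empty_or_nonempty with rfl | ⟨u, hu⟩
      · simp
      have h1 : X.card ≤ A.card := Finset.card_le_card (fun x hx => hlA x (by simpa using hX hx))
      refine h1.trans ((hch u (by simpa using hX hu)).trans (Finset.card_le_card ?_))
      exact Finset.subset_biUnion_of_mem (fun u => B.filter (fun x => R u x) ∩ B.filter (fun x => R (f u) x)) hu)
  have hgB : ∀ u ∈ a0 :: t, g u ∈ B := fun u hu => by
    have := hg1 u (by simpa using hu); simp at this; exact this.1.1
  have h3 := cyc_insert R (fun u => some (g u)) f a0 t hnd hf (by
      intro u hu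
      right
      have := hg1 u (by simpa using hu)
      simp only [mem_inter, mem_filter] at this
      exact ⟨g u, rfl, this.1.2, hR _ _ this.2.2⟩) (by
      intro u hu x hx hxl
      simp at hx; subst hx
      exact Finset.disjoint_left.1 hAB (hlA _ hxl) (hgB u hu)) (by
      intro u hu v hv x hux hvx
      simp at hux hvx
      exact hg2 u (by simpa using hu) v (by simpa using hv) (hux.trans hvx.symm))
  obtain ⟨h4, t', h5, h6⟩ := h3
  refine ⟨_, ⟨⟨h4, a0, t', h5, Or.inr h6⟩, ?_⟩, ?_⟩
  · intro x hx
    rw [insList_mem] at hx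
    rcases hx with hx | ⟨u, hu, hx⟩
    · exact Finset.mem_union_left _ (hlA x hx)
    · simp at hx; subst hx; exact Finset.mem_union_right _ (hgB u hu)
  · intro x hx; rw [insList_mem]; exact Or.inl hx

theorem abstract_cover {r : ℕ} (H : Fin r → V → V → Prop) (hH : ∀ i x y, H i x y → H i y x) (α : ℕ)
    (hr : 0 < r) (hα : 0 < α) (s : ℕ)
    (hs : (1 - 1 / (2 * α * r : ℝ)) ^ s * (8 * (α * r) ^ 2) ≤ 1) (k : ℕ) (hk : k ≤ α)
    (Q : Finset V)
    (hI : ∀ I ⊆ Q, IndS (fun x y => ∃ i, H i x y) I → I.card ≤ k) :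
    CovL (fun l => ∃ i, CycL (H i) l ∧ ∀ x ∈ l, x ∈ Q) Q (k * (s + 4 * (α * r) * r)) := by
  classical
  induction k generalizing Q with
  | zero =>
    refine ⟨[], by simp, by simp, fun x hx => ?_⟩
    have := hI {x} (by simpa using hx) (by intro a ha b hb hab; simp at ha hb; simp_all)
    simp at this
  | succ k ih =>
    let N : V → Finset V := fun v => Q.filter (fun w => w ≠ v ∧ ∃ i, H i v w)
    set D := Q.filter (fun v => α * ((N v).card + 1) < Q.card) with hD
    have hDQ : D ⊆ Q := Finset.filter_subset _ _
    have hcD := ih (by omega) D (by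
      intro I hID hind
      by_contra! hcon
      have hle := hI I (hID.trans hDQ) hind
      have hIk : I.card = k + 1 := by omega
      have hc : (I.biUnion (fun v => insert v (N v))).card < Q.card := by
        have h1 : (I.biUnion (fun v => insert v (N v))).card ≤ ∑ v ∈ I, ((N v).card + 1) :=
          Finset.card_biUnion_le.trans (Finset.sum_le_sum (fun v _ => Finset.card_insert_le _ _))
        have h2 : ∑ v ∈ I, α * ((N v).card + 1) < ∑ v ∈ I, Q.card :=
          Finset.sum_lt_sum_of_nonempty (Finset.card_pos.1 (by omega))
            (fun v hv => (Finset.mem_filter.1 (hID hv)).2)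
        rw [← Finset.mul_sum, Finset.sum_const, smul_eq_mul] at h2
        have h3 : I.card * Q.card ≤ α * Q.card := Nat.mul_le_mul_right _ (by omega)
        have h4 := lt_of_lt_of_le h2 h3
        have h5 := Nat.lt_of_mul_lt_mul_left h4
        omega
      obtain ⟨y, hyQ, hy⟩ : ∃ y ∈ Q, y ∉ I.biUnion (fun v => insert v (N v)) := by
        by_contra! hcon'
        exact absurd (Finset.card_le_card (fun y hy => hcon' y hy)) (by omega)
      simp only [Finset.mem_biUnion, Finset.mem_insert, not_exists, not_and, not_or] at hy
      have hyI : y ∉ I := fun h => (hy y h).1 rfl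
      have hny : ∀ x ∈ I, ¬ ∃ i, H i x y := by
        intro x hx hex
        exact (hy x hx).2 (Finset.mem_filter.2 ⟨hyQ, (hy x hx).1, hex⟩)
      have := hI (insert y I) (Finset.insert_subset hyQ (hID.trans hDQ)) (by
        intro u hu v hv huv
        rcases Finset.mem_insert.1 hu with hu' | hu' <;> rcases Finset.mem_insert.1 hv with hv' | hv'
        · exact absurd (hu'.trans hv'.symm) huv
        · rw [hu']; rintro ⟨i, hi⟩; exact hny v hv' ⟨i, hH _ _ _ hi⟩
        · rw [hv']; exact hny u hu'
        · exact hind u hu' v hv' huv)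
      rw [Finset.card_insert_of_notMem hyI] at this
      omega)
    set E := Q \ D with hE
    have hEQ : E ⊆ Q := Finset.sdiff_subset
    obtain ⟨A, hAE, hcov, hAc⟩ := greedy_cyc H hH α hr hα E
      (fun I hI' hind => (hI I (hI'.trans hEQ) hind).trans hk) s
    have hAq : 8 * (α * r) ^ 2 * A.card ≤ Q.card := by
      have h1 : (E.card : ℝ) ≤ Q.card := by exact_mod_cast Finset.card_le_card hEQ
      have h2 : (8 * (α * r : ℝ) ^ 2) * A.card ≤ Q.card := by
        calc (8 * (α * r : ℝ) ^ 2) * A.card ≤ (8 * (α * r : ℝ) ^ 2) * ((1 - 1 / (2 * α * r : ℝ)) ^ s * E.card) := by gcongr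
          _ = ((1 - 1 / (2 * α * r : ℝ)) ^ s * (8 * (α * r) ^ 2)) * E.card := by ring
          _ ≤ 1 * E.card := by gcongr
          _ ≤ Q.card := by linarith
      exact_mod_cast h2
    set B := Q \ A with hB
    have hAi : A ⊆ Finset.univ.biUnion (fun i : Fin r => A.filter (fun v => Q.card ≤ 2 * (α * r) * (B.filter (fun w => H i v w)).card)) := by
      intro v hv
      by_contra hcon
      simp only [Finset.mem_biUnion, Finset.mem_univ, true_and, Finset.mem_filter, not_exists, not_and, not_le] at hcon
      have hvE := Finset.mem_sdiff.1 (hAE hv)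
      have hvN : Q.card ≤ α * ((N v).card + 1) := by
        by_contra! h
        exact hvE.2 (Finset.mem_filter.2 ⟨hvE.1, h⟩)
      have hN : insert v (N v) ⊆ A ∪ Finset.univ.biUnion (fun i : Fin r => B.filter (fun w => H i v w)) := by
        intro w hw
        simp only [Finset.mem_insert, N, Finset.mem_filter] at hw
        rcases hw with rfl | ⟨hwQ, hwv, i, hi⟩
        · exact Finset.mem_union_left _ hv
        · by_cases hwA : w ∈ A
          · exact Finset.mem_union_left _ hwA
          · refine Finset.mem_union_right _ (Finset.mem_biUnion.2 ⟨i, by simp, Finset.mem_filter.2 ⟨Finset.mem_sdiff.2 ⟨hwQ, hwA⟩, hi⟩⟩)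
      have h1 := Finset.card_le_card hN
      rw [Finset.card_insert_of_notMem (by simp [N])] at h1
      have h2 := h1.trans (Finset.card_union_le _ _)
      have h3 : (Finset.univ.biUnion (fun i : Fin r => B.filter (fun w => H i v w))).card ≤ ∑ i : Fin r, (B.filter (fun w => H i v w)).card := Finset.card_biUnion_le
      have h4 : ∑ i : Fin r, 2 * (α * r) * (B.filter (fun w => H i v w)).card < ∑ i : Fin r, Q.card :=
        Finset.sum_lt_sum_of_nonempty ⟨⟨0, hr⟩, by simp⟩ (fun i _ => hcon i hv)
      rw [← Finset.mul_sum, Finset.sum_const, smul_eq_mul, Finset.card_univ, Fintype.card_fin] at h4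
      set S := ∑ i : Fin r, (B.filter (fun w => H i v w)).card
      have h5 : r * (2 * α * S) < r * Q.card := by
        calc r * (2 * α * S) = 2 * (α * r) * S := by ring
          _ < _ := h4
      have h6 := Nat.lt_of_mul_lt_mul_left h5
      have h7 : α * ((N v).card + 1) ≤ α * (A.card + S) := Nat.mul_le_mul_left _ (by omega)
      have hr2 : 1 ≤ r ^ 2 := Nat.one_le_pow _ _ hr
      have h8 : 2 * α * A.card ≤ 8 * (α * r) ^ 2 * A.card := by
        refine Nat.mul_le_mul_right _ ?_
        calc 2 * α ≤ 8 * (α * 1) * (α * 1) := by nlinarith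
          _ ≤ 8 * (α * r) * (α * r) := by gcongr <;> exact hr
          _ = _ := by ring
      nlinarith
    have hfin : CovL (fun l => ∃ i, CycL (H i) l ∧ ∀ x ∈ l, x ∈ Q) A (r * (4 * (α * r))) := by
      have := CovL.biUnion (P := fun l => ∃ i, CycL (H i) l ∧ ∀ x ∈ l, x ∈ Q) Finset.univ
        (fun i : Fin r => A.filter (fun v => Q.card ≤ 2 * (α * r) * (B.filter (fun w => H i v w)).card)) (4 * (α * r)) (by
          intro i _
          have h0 := unbal (H i) (hH i) (A.filter (fun v => Q.card ≤ 2 * (α * r) * (B.filter (fun w => H i v w)).card)) B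
            (Finset.disjoint_of_subset_left (Finset.filter_subset _ _) Finset.disjoint_sdiff) Q.card (α * r) (by positivity)
            (Finset.card_le_card Finset.sdiff_subset)
            (le_trans (Nat.mul_le_mul_left _ (Finset.card_le_card (Finset.filter_subset _ _))) hAq)
            (fun v hv => (Finset.mem_filter.1 hv).2)
          refine h0.mono (fun l hl => ⟨l, ⟨i, hl.1, fun x hx => ?_⟩, fun _ h => h⟩) (Finset.Subset.refl _) le_rfl
          rcases Finset.mem_union.1 (hl.2 x hx) with h | h
          · exact hEQ (hAE (Finset.mem_filter.1 h).1)
          · exact (Finset.mem_sdiff.1 h).1)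
      rw [Finset.card_univ, Fintype.card_fin] at this
      exact this.mono (fun l hl => ⟨l, hl, fun _ h => h⟩) hAi le_rfl
    have hmonoP : ∀ (C : Finset V), C ⊆ Q → ∀ l, (∃ i, CycL (H i) l ∧ ∀ x ∈ l, x ∈ C) →
        ∃ l', (∃ i, CycL (H i) l' ∧ ∀ x ∈ l', x ∈ Q) ∧ ∀ x ∈ l, x ∈ l' :=
      fun C hC l ⟨i, h1, h2⟩ => ⟨l, ⟨i, h1, fun x hx => hC (h2 x hx)⟩, fun _ h => h⟩
    have h1 := (hcD.mono (hmonoP D hDQ) (Finset.Subset.refl _) le_rfl).union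
      ((hcov.mono (hmonoP E hEQ) (Finset.Subset.refl _) le_rfl).union hfin)
    refine h1.mono (fun l hl => ⟨l, hl, fun _ h => h⟩) ?_ (le_of_eq (by ring))
    intro x hx
    simp only [Finset.mem_union, Finset.mem_sdiff, hE]
    tauto

end PartTwo

section PartThree
open Finset Classical
variable {V ι : Type*} [DecidableEq V] [DecidableEq ι]

def SysOf (S : Finset ι) (P : ι → Finset V → Prop) (M : ι → Finset V) : Prop :=
  (∀ i ∈ S, P i (M i)) ∧ ∀ i ∈ S, ∀ j ∈ S, i ≠ j → Disjoint (M i) (M j)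

def Blk (M : ι → Finset V) (es : List (Finset V)) (i : ι) : Prop := ∃ e ∈ es, ¬ Disjoint (M i) e

def AgreeOn (S : Finset ι) (M M' : ι → Finset V) (es : List (Finset V)) : Prop :=
  ∀ i ∈ S, (Blk M es i ∨ Blk M' es i) → M' i = M i

noncomputable def blkOne (S : Finset ι) (M : ι → Finset V) (e : Finset V) : Finset ι :=
  S.filter (fun i => ¬ Disjoint (M i) e)

theorem haxell_step (S : Finset ι) (i0 : ι) (hi0 : i0 ∉ S) (P : ι → Finset V → Prop) (N : ℕ)
    (hN : ∀ i F, P i F → F.card ≤ N)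
    (cond : ∀ I ⊆ insert i0 S, I.Nonempty → ∀ Y : Finset V, Y.card ≤ 2 * N * I.card →
      ∃ i ∈ I, ∃ F, P i F ∧ Disjoint F Y)
    (d : ℕ) (M : ι → Finset V) (hM : SysOf S P M) (es : List (Finset V))
    (he : ∀ e ∈ es, e.card ≤ N) (hlen : es.length ≤ (S.filter (fun i => Blk M es i)).card)
    (hd : S.card < es.length + d) :
    (∃ F, SysOf (insert i0 S) P F) ∨ ∃ new e old M', es = new ++ e :: old ∧ SysOf S P M' ∧
      AgreeOn S M M' old ∧ (blkOne S M' e).card < (blkOne S M e).card := by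
  induction d generalizing M es with
  | zero =>
    have := Finset.card_filter_le S (fun i => Blk M es i)
    omega
  | succ d ih =>
    set B := S.filter (fun i => Blk M es i) with hB
    set Y : Finset V := es.toFinset.biUnion id ∪ B.biUnion M with hY
    have hYc : Y.card ≤ 2 * N * (insert i0 B).card := by
      have h1 : (es.toFinset.biUnion id).card ≤ es.length * N :=
        (Finset.card_biUnion_le_card_mul _ _ N (fun e he' => he e (by simpa using he'))).trans
          (Nat.mul_le_mul_right _ (List.toFinset_card_le _))
      have h2 : (B.biUnion M).card ≤ B.card * N :=
        Finset.card_biUnion_le_card_mul _ _ N (fun i hi => hN i _ (hM.1 i (Finset.mem_filter.1 hi).1))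
      have h3 := Finset.card_union_le (es.toFinset.biUnion id) (B.biUnion M)
      have h4 : B.card ≤ (insert i0 B).card := Finset.card_le_card (Finset.subset_insert _ _)
      have h5 : es.length * N ≤ B.card * N := Nat.mul_le_mul_right _ hlen
      have h6 : B.card * N ≤ (insert i0 B).card * N := Nat.mul_le_mul_right _ h4
      calc Y.card ≤ _ := h3
        _ ≤ (insert i0 B).card * N + (insert i0 B).card * N := by omega
        _ = _ := by ring
    obtain ⟨o, ho, e, hPe, hdis⟩ := cond (insert i0 B)
      (Finset.insert_subset_insert _ (Finset.filter_subset _ _)) ⟨i0, by simp⟩ Y hYc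
    have hee : ∀ e' ∈ es, Disjoint e e' := by
      intro e' he'
      refine Finset.disjoint_of_subset_right ?_ hdis
      intro x hx
      exact Finset.mem_union_left _ (Finset.mem_biUnion.2 ⟨e', by simpa using he', hx⟩)
    have heM : ∀ i ∈ S, Blk M es i → Disjoint (M i) e := by
      intro i hi hb
      refine (Finset.disjoint_of_subset_right ?_ hdis).symm
      intro x hx
      exact Finset.mem_union_right _ (Finset.mem_biUnion.2 ⟨i, Finset.mem_filter.2 ⟨hi, hb⟩, hx⟩)
    have hagree : ∀ M', AgreeOn S M M' es → ∀ i ∈ S, (Blk M' es i ↔ Blk M es i) := by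
      intro M' h i hi
      constructor
      · intro hb
        obtain ⟨e', h1, h2⟩ := hb
        exact ⟨e', h1, by rw [← h i hi (Or.inr ⟨e', h1, h2⟩)]; exact h2⟩
      · intro hb
        obtain ⟨e', h1, h2⟩ := hb
        exact ⟨e', h1, by rw [h i hi (Or.inl ⟨e', h1, h2⟩)]; exact h2⟩
    -- inner induction
    suffices inner : ∀ b : ℕ, ∀ M1, SysOf S P M1 → AgreeOn S M M1 es → (blkOne S M1 e).card = b →
        (∃ F, SysOf (insert i0 S) P F) ∨ ∃ new e old M', es = new ++ e :: old ∧ SysOf S P M' ∧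
      AgreeOn S M M' old ∧ (blkOne S M' e).card < (blkOne S M e).card from
      inner _ M hM (fun i _ _ => rfl) rfl
    intro b
    induction b using Nat.strong_induction_on with
    | _ b ihb =>
    intro M1 hM1 hag hb
    by_cases hb0 : blkOne S M1 e = ∅
    · have hfree : ∀ i ∈ S, Disjoint (M1 i) e := by
        intro i hi
        by_contra hc
        have : i ∈ blkOne S M1 e := Finset.mem_filter.2 ⟨hi, hc⟩
        rw [hb0] at this; simp at this
      by_cases hoi : o = i0
      · left
        subst hoi
        refine ⟨Function.update M1 o e, ?_, ?_⟩
        · intro i hi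
          by_cases hio : i = o
          · subst hio; simpa using hPe
          · rw [Function.update_of_ne hio]; exact hM1.1 i (Finset.mem_of_mem_insert_of_ne hi hio)
        · intro i hi j hj hij
          by_cases hio : i = o
          · have hjo : j ≠ o := fun h => hij (hio.trans h.symm)
            rw [hio, Function.update_self, Function.update_of_ne hjo]
            exact (hfree j (Finset.mem_of_mem_insert_of_ne hj hjo)).symm
          · by_cases hjo : j = o
            · rw [hjo, Function.update_self, Function.update_of_ne hio]
              exact hfree i (Finset.mem_of_mem_insert_of_ne hi hio)
            · rw [Function.update_of_ne hio, Function.update_of_ne hjo]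
              exact hM1.2 i (Finset.mem_of_mem_insert_of_ne hi hio) j (Finset.mem_of_mem_insert_of_ne hj hjo) hij
      · right
        have hoB : o ∈ B := Finset.mem_of_mem_insert_of_ne ho hoi
        obtain ⟨hoS, hoblk⟩ := Finset.mem_filter.1 hoB
        have hMo : M1 o = M o := hag o hoS (Or.inl hoblk)
        obtain ⟨new, w, old, hsp, hw, hold⟩ := last_split (fun e' => ¬ Disjoint (M o) e') es hoblk
        refine ⟨new, w, old, Function.update M1 o e, hsp, ⟨?_, ?_⟩, ?_, ?_⟩
        · intro i hi
          by_cases hio : i = o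
          · subst hio; simpa using hPe
          · rw [Function.update_of_ne hio]; exact hM1.1 i hi
        · intro i hi j hj hij
          by_cases hio : i = o
          · have hjo : j ≠ o := fun h => hij (hio.trans h.symm)
            rw [hio, Function.update_self, Function.update_of_ne hjo]
            exact (hfree j hj).symm
          · by_cases hjo : j = o
            · rw [hjo, Function.update_self, Function.update_of_ne hio]
              exact hfree i hi
            · rw [Function.update_of_ne hio, Function.update_of_ne hjo]
              exact hM1.2 i hi j hj hij
        · intro i hi hbb
          have hsubs : ∀ e' ∈ old, e' ∈ es := fun e' h => by rw [hsp]; simp [h]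
          by_cases hio : i = o
          · exfalso
            subst hio
            rcases hbb with ⟨e', h1, h2⟩ | ⟨e', h1, h2⟩
            · exact hold e' h1 h2
            · rw [Function.update_self] at h2; exact h2 (hee e' (hsubs e' h1))
          · rw [Function.update_of_ne hio]
            refine hag i hi (hbb.imp ?_ ?_)
            · rintro ⟨e', h1, h2⟩; exact ⟨e', hsubs _ h1, h2⟩
            · rintro ⟨e', h1, h2⟩; rw [Function.update_of_ne hio] at h2; exact ⟨e', hsubs _ h1, h2⟩
        · have hwes : w ∈ es := by rw [hsp]; simp
          apply Finset.card_lt_card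
          refine ⟨?_, fun hh => ?_⟩
          · intro i hi
            obtain ⟨h1, h2⟩ := Finset.mem_filter.1 hi
            refine Finset.mem_filter.2 ⟨h1, ?_⟩
            by_cases hio : i = o
            · subst hio; exact hw
            · rw [Function.update_of_ne hio] at h2
              rw [← hag i h1 (Or.inr ⟨w, hwes, h2⟩)]; exact h2
          · have := hh (Finset.mem_filter.2 ⟨hoS, hw⟩)
            have := (Finset.mem_filter.1 this).2
            rw [Function.update_self] at this
            exact this (hee w hwes)
    · -- apply ih to the longer list
      have hBe : (S.filter (fun i => Blk M1 es i)) = B := by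
        apply Finset.filter_congr
        intro i hi; exact hagree M1 hag i hi
      obtain ⟨i1, hi1⟩ := Finset.nonempty_iff_ne_empty.2 hb0
      obtain ⟨hi1S, hi1e⟩ := Finset.mem_filter.1 hi1
      have hlen' : (e :: es).length ≤ (S.filter (fun i => Blk M1 (e :: es) i)).card := by
        have hi1B : i1 ∉ B := by
          intro h
          have hb1 := (Finset.mem_filter.1 h).2
          rw [hag i1 hi1S (Or.inl hb1)] at hi1e
          exact hi1e (heM i1 hi1S hb1)
        have : insert i1 B ⊆ S.filter (fun i => Blk M1 (e :: es) i) := by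
          intro i hi
          rcases Finset.mem_insert.1 hi with rfl | hi
          · exact Finset.mem_filter.2 ⟨hi1S, e, by simp, hi1e⟩
          · rw [← hBe] at hi
            obtain ⟨h1, e', h2, h3⟩ := Finset.mem_filter.1 hi
            exact Finset.mem_filter.2 ⟨h1, e', by simp [h2], h3⟩
        have := Finset.card_le_card this
        rw [Finset.card_insert_of_notMem hi1B] at this
        simp; omega
      have := ih M1 hM1 (e :: es) (by
        intro e' he'
        rcases List.mem_cons.1 he' with rfl | h
        exacts [hN o _ hPe, he e' h]) hlen' (by simp; omega)
      rcases this with h | ⟨new, e1, old, M2, hsp, hM2, hag2, hlt⟩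
      · exact Or.inl h
      · cases new with
        | nil =>
          simp only [List.nil_append, List.cons.injEq] at hsp
          obtain ⟨rfl, rfl⟩ := hsp
          refine ihb _ (hb ▸ hlt) M2 hM2 ?_ rfl
          intro i hi hbb
          have h12 := hag2 i hi
          have h01 := hag i hi
          rcases hbb with h | h
          · have h1 := h01 (Or.inl h)
            have : Blk M1 es i := (hagree M1 hag i hi).2 h
            rw [h12 (Or.inl this), h1]
          · have h1 := h12 (Or.inr h)
            have : Blk M1 es i := by
              obtain ⟨e', h2, h3⟩ := h
              exact ⟨e', h2, by rw [← h1]; exact h3⟩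
            rw [h1, h01 (Or.inr this)]
        | cons a new =>
          simp only [List.cons_append, List.cons.injEq] at hsp
          obtain ⟨rfl, hsp⟩ := hsp
          right
          have hsubs : ∀ e' ∈ old, e' ∈ es := fun e' h => by rw [hsp]; simp [h]
          have he1 : e1 ∈ es := by rw [hsp]; simp
          refine ⟨new, e1, old, M2, hsp, hM2, ?_, ?_⟩
          · intro i hi hbb
            have h12 := hag2 i hi
            have h01 := hag i hi
            rcases hbb with ⟨e', h2, h3⟩ | ⟨e', h2, h3⟩
            · have h1 := h01 (Or.inl ⟨e', hsubs _ h2, h3⟩)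
              rw [h12 (Or.inl ⟨e', h2, by rw [h1]; exact h3⟩), h1]
            · have h1 := h12 (Or.inr ⟨e', h2, h3⟩)
              rw [h1, h01 (Or.inr ⟨e', hsubs _ h2, by rw [← h1]; exact h3⟩)]
          · have : blkOne S M1 e1 = blkOne S M e1 := by
              apply Finset.filter_congr
              intro i hi
              constructor
              · intro h; rw [← hag i hi (Or.inr ⟨e1, he1, h⟩)]; exact h
              · intro h; rw [hag i hi (Or.inl ⟨e1, he1, h⟩)]; exact h
            rw [← this]; exact hlt

theorem haxell (S : Finset ι) (P : ι → Finset V → Prop) (N : ℕ)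
    (hN : ∀ i F, P i F → F.card ≤ N)
    (cond : ∀ I ⊆ S, I.Nonempty → ∀ Y : Finset V, Y.card ≤ 2 * N * I.card →
      ∃ i ∈ I, ∃ F, P i F ∧ Disjoint F Y) :
    ∃ F, SysOf S P F := by
  induction S using Finset.induction_on with
  | empty => exact ⟨fun _ => ∅, by intro i hi; simp at hi, by intro i hi; simp at hi⟩
  | insert i0 S hi0 ih =>
    obtain ⟨M, hM⟩ := ih (fun I hI => cond I (hI.trans (Finset.subset_insert _ _)))
    rcases haxell_step S i0 hi0 P N hN cond (S.card + 1) M hM [] (by simp) (by simp) (by simp) with h | h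
    · exact h
    · obtain ⟨new, e, old, M', h, _⟩ := h
      simp at h

end PartThree

section PartFour
open Finset Classical
variable {V : Type*}

theorem chain_walk {ι : Type*} (G : SimpleGraph V) (col : Sym2 V → ι) (i : ι) (c : V) (t : List V) (b : V)
    (h : List.IsChain (fun u v => G.Adj u v ∧ col s(u, v) = i) (c :: (t ++ [b]))) :
    ∃ w : G.Walk c b, w.support = c :: (t ++ [b]) ∧ ∀ e ∈ w.edges, col e = i := by
  induction t generalizing c with
  | nil =>
    simp at h
    exact ⟨SimpleGraph.Walk.cons h.1 SimpleGraph.Walk.nil, by simp, by simp [h.2]⟩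
  | cons d t ih =>
    rw [List.cons_append, List.isChain_cons_cons] at h
    obtain ⟨w, h1, h2⟩ := ih d h.2
    refine ⟨SimpleGraph.Walk.cons h.1.1 w, by simp [h1], ?_⟩
    intro e he
    rw [SimpleGraph.Walk.edges_cons, List.mem_cons] at he
    rcases he with rfl | he
    exacts [h.1.2, h2 e he]

theorem chain_cycle {ι : Type*} (G : SimpleGraph V) (col : Sym2 V → ι) (i : ι) (a : V) (t : List V)
    (hnd : (a :: t).Nodup) (hlen : 3 ≤ (a :: t).length)
    (h : List.IsChain (fun u v => G.Adj u v ∧ col s(u, v) = i) (a :: (t ++ [a]))) :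
    IsMonoCycle G col i {x | x ∈ a :: t} := by
  match t, hlen with
  | [], hlen => simp at hlen
  | [b], hlen => simp at hlen
  | b :: c :: t, _ =>
    rw [List.cons_append, List.isChain_cons_cons, List.cons_append, List.isChain_cons_cons] at h
    obtain ⟨w, h1, h2⟩ := chain_walk G col i c t a h.2.2
    right; right
    refine ⟨a, SimpleGraph.Walk.cons h.1.1 (SimpleGraph.Walk.cons h.2.1.1 w), ?_, ?_, ?_⟩
    · rw [SimpleGraph.Walk.cons_isCycle_iff, SimpleGraph.Walk.isPath_def]
      have hndb : b ∉ w.support := by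
        rw [h1]; simp at hnd ⊢; tauto
      refine ⟨?_, ?_⟩
      · rw [SimpleGraph.Walk.support_cons, List.nodup_cons]
        refine ⟨hndb, ?_⟩
        rw [h1, ← List.cons_append, List.nodup_append]
        simp at hnd ⊢
        refine ⟨⟨hnd.2.2.1, hnd.2.2.2⟩, ?_, ?_⟩
        · rintro rfl; tauto
        · rintro x hx rfl; tauto
      · rw [SimpleGraph.Walk.edges_cons, List.mem_cons, not_or]
        refine ⟨?_, fun he => hndb (w.snd_mem_support_of_mem_edges he)⟩
        intro he
        simp at hnd he
        rcases he with ⟨h3, h4⟩ | h3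
        · exact hnd.1.1 h3
        · exact hnd.1.2.1 h3
    · intro e he
      simp only [SimpleGraph.Walk.edges_cons, List.mem_cons] at he
      rcases he with rfl | rfl | he
      exacts [h.1.2, h.2.1.2, h2 e he]
    · ext x
      simp [h1]; tauto

end PartFour

section PartFive
open Finset Classical
variable {V : Type*}

def NiceS (G : SimpleGraph V) (ℓ : ℕ) (Y : Finset V) : Prop :=
  ∀ v, v ∉ Y → (Y.filter (fun y => G.Adj v y)).card < ℓ

def PathIn (A : V → V → Prop) (U : Finset V) (N : ℕ) (u v : V) (p : List V) : Prop :=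
  p ≠ [] ∧ p.length ≤ N ∧ (∀ x ∈ p, x ∈ U) ∧ List.IsChain A (u :: (p ++ [v]))

def Lk (G : SimpleGraph V) (ℓ : ℕ) (A : V → V → Prop) (U : Finset V) (N : ℕ) (u v : V) : Prop :=
  ∀ Y : Finset V, NiceS G ℓ Y → u ∉ Y → v ∉ Y → ∃ p, PathIn A U N u v p ∧ ∀ x ∈ p, x ∉ Y

theorem PathIn.symm {A : V → V → Prop} (hA : ∀ x y, A x y → A y x) {U : Finset V} {N : ℕ} {u v : V}
    {p : List V} (h : PathIn A U N u v p) : PathIn A U N v u p.reverse := by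
  obtain ⟨h1, h2, h3, h4⟩ := h
  refine ⟨by simpa using h1, by simpa using h2, by simpa using h3, ?_⟩
  have := List.isChain_reverse.2 (h4.imp (fun x y hxy => (hA x y hxy : flip A x y)))
  simpa [flip] using this

theorem Lk.symm {G : SimpleGraph V} {ℓ : ℕ} {A : V → V → Prop} (hA : ∀ x y, A x y → A y x)
    {U : Finset V} {N : ℕ} {u v : V} (h : Lk G ℓ A U N u v) : Lk G ℓ A U N v u := by
  intro Y hY hv hu
  obtain ⟨p, hp, hpY⟩ := h Y hY hu hv
  exact ⟨p.reverse, hp.symm hA, by simpa using hpY⟩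

theorem path_nodup {A : V → V → Prop} (u v : V) (p : List V) (hne : p ≠ [])
    (h : List.IsChain A (u :: (p ++ [v]))) :
    ∃ q : List V, q ≠ [] ∧ q.Nodup ∧ q.length ≤ p.length ∧ (∀ x ∈ q, x ∈ p) ∧
      List.IsChain A (u :: (q ++ [v])) := by
  induction p generalizing u with
  | nil => exact absurd rfl hne
  | cons w p ih =>
    rw [List.cons_append, List.isChain_cons_cons] at h
    by_cases hp : p = []
    · subst hp
      exact ⟨[w], by simp, by simp, by simp, by simp, by simpa using h⟩
    obtain ⟨q, h1, h2, h3, h4, h5⟩ := ih w hp h.2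
    by_cases hw : w ∈ q
    · obtain ⟨q1, q2, rfl⟩ := List.append_of_mem hw
      refine ⟨w :: q2, by simp, ?_, ?_, ?_, ?_⟩
      · exact (List.nodup_append.1 h2).2.1
      · simp at h3 ⊢; omega
      · intro x hx
        have := h4 x (by simp at hx ⊢; tauto)
        simp [this]
      · rw [List.cons_append, List.isChain_cons_cons]
        refine ⟨h.1, ?_⟩
        have : w :: (q1 ++ w :: q2 ++ [v]) = (w :: q1) ++ (w :: (q2 ++ [v])) := by simp
        rw [this] at h5
        exact (List.isChain_append.1 h5).2.1
    · refine ⟨w :: q, by simp, List.nodup_cons.2 ⟨hw, h2⟩, by simpa using h3, ?_, ?_⟩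
      · intro x hx
        simp at hx ⊢
        rcases hx with rfl | hx
        · simp
        · right; exact h4 x hx
      · rw [List.cons_append, List.isChain_cons_cons]
        exact ⟨h.1, h5⟩

/-- hypothesis `H` -/
def ExpH (G : SimpleGraph V) (m ν ℓ : ℕ) : Prop :=
  ∀ X Y : Finset V, X.Nonempty → X.card ≤ m → Y.card ≤ ν * X.card →
    ∃ x ∈ X, (Y.filter (fun y => G.Adj x y)).card < ℓ

theorem closure_nice (G : SimpleGraph V) (m ν ℓ : ℕ) (hH : ExpH G m ν ℓ) (Y : Finset V) (z : ℕ)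
    (hz : 0 < z) (hzm : z ≤ m) (hY : Y.card + z ≤ ν * z) :
    ∃ Z : Finset V, Z.card < z ∧ NiceS G ℓ (Y ∪ Z) := by
  by_contra! hcon
  have key : ∀ k ≤ z, ∃ Z : Finset V, Z.card = k ∧ ∀ x ∈ Z, ℓ ≤ ((Y ∪ Z).filter (fun y => G.Adj x y)).card := by
    intro k
    induction k with
    | zero => intro _; exact ⟨∅, by simp, by simp⟩
    | succ k ih =>
      intro hk
      obtain ⟨Z, h1, h2⟩ := ih (by omega)
      have h3 := hcon Z (by omega)
      unfold NiceS at h3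
      push Not at h3
      obtain ⟨v, hv, hv2⟩ := h3
      refine ⟨insert v Z, ?_, ?_⟩
      · rw [Finset.card_insert_of_notMem (by simp at hv; tauto), h1]
      · have hmono : ∀ x, ((Y ∪ Z).filter (fun y => G.Adj x y)).card ≤ ((Y ∪ insert v Z).filter (fun y => G.Adj x y)).card := by
          intro x
          apply Finset.card_le_card
          apply Finset.filter_subset_filter
          exact Finset.union_subset_union_right (Finset.subset_insert _ _)
        intro x hx
        rcases Finset.mem_insert.1 hx with rfl | hx
        · exact hv2.trans (hmono _)
        · exact (h2 x hx).trans (hmono _)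
  obtain ⟨Z, h1, h2⟩ := key z le_rfl
  obtain ⟨x, hx, hlt⟩ := hH Z (Y ∪ Z) (Finset.card_pos.1 (by omega)) (by omega)
    ((Finset.card_union_le _ _).trans (by rw [h1]; exact hY))
  exact absurd (h2 x hx) (by omega)

theorem chain_flatMap {A : V → V → Prop} (f : V → V) (p : V → List V) (l : List V) (a b : V)
    (hf : (a :: l).map f = l ++ [b])
    (h : ∀ u ∈ a :: l, List.IsChain A (u :: (p u ++ [f u]))) :
    List.IsChain A ((a :: l).flatMap (fun u => u :: p u) ++ [b]) := by
  induction l generalizing a with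
  | nil =>
    simp at hf
    have := h a (by simp)
    rw [hf] at this
    simpa using this
  | cons c l ih =>
    simp only [List.map_cons, List.cons_append, List.cons.injEq] at hf
    have h1 := ih c (by simpa using hf.2) (fun u hu => h u (by simp at hu ⊢; tauto))
    have h2 := h a (by simp)
    rw [hf.1] at h2
    rw [List.flatMap_cons, List.append_assoc]
    rw [List.flatMap_cons] at h1 ⊢
    simp only [List.cons_append, List.append_assoc] at h1 ⊢
    have := List.isChain_split (R := A) (l₁ := a :: p a) (c := c) (l₂ := p c ++ (List.flatMap (fun u => u :: p u) l ++ [b]))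
    simp only [List.cons_append] at this
    exact this.2 ⟨h2, h1⟩

theorem realize (G : SimpleGraph V) (m ν ℓ N : ℕ) (hH : ExpH G m ν ℓ) (hN : 4 * N + 1 ≤ ν)
    (A : V → V → Prop) (hA : ∀ x y, A x y → A y x) (U : Finset V) (a b : V) (t : List V)
    (hnd : (a :: b :: t).Nodup) (hU : ∀ x ∈ a :: b :: t, x ∉ U) (hm : (a :: b :: t).length ≤ m)
    (hc : List.IsChain (Lk G ℓ A U N) (a :: (b :: t ++ [a]))) :
    ∃ s : List V, (a :: s).Nodup ∧ 3 ≤ (a :: s).length ∧ List.IsChain A (a :: (s ++ [a])) ∧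
      ∀ x ∈ a :: b :: t, x ∈ a :: s := by
  obtain ⟨f, hf⟩ := exists_map_list (a :: b :: t) (b :: t ++ [a]) hnd (by simp)
  have hlk : ∀ u ∈ a :: b :: t, Lk G ℓ A U N u (f u) := (chain_iff_map _ f a (b :: t) a hf).1 hc
  have hfnd : ((a :: b :: t).map f).Nodup := by
    rw [hf]
    simp only [List.nodup_cons, List.mem_cons, not_or, List.cons_append, List.mem_append, List.nodup_append] at hnd ⊢
    simp
    refine ⟨⟨hnd.2.1, fun h => hnd.1.1 h.symm⟩, hnd.2.2, ?_⟩
    intro x hx hxa; subst hxa; exact hnd.1.2 hx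
  have hfinj := List.inj_on_of_nodup_map hfnd
  have hfmem : ∀ u ∈ a :: b :: t, f u ∈ a :: b :: t := by
    intro u hu
    have : f u ∈ (a :: b :: t).map f := List.mem_map_of_mem hu
    rw [hf] at this
    simp at this ⊢; tauto
  set P : V → Finset V → Prop := fun u F => ∃ p : List V, p.Nodup ∧ p.toFinset = F ∧ PathIn A U N u (f u) p with hP
  obtain ⟨F, hF1, hF2⟩ := haxell (a :: b :: t).toFinset P N (by
      rintro i F ⟨p, h1, rfl, h2⟩
      exact (List.toFinset_card_le p).trans h2.2.1) (by
      intro I hI hIne Y hY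
      have hIpos := Finset.card_pos.2 hIne
      set z := (I.card + 1) / 2 with hz
      have hIm : I.card ≤ m := (Finset.card_le_card hI).trans ((List.toFinset_card_le _).trans hm)
      obtain ⟨Z, hZ, hnice⟩ := closure_nice G m ν ℓ hH (Y ∩ U) z (by omega) (by omega) (by
        have h1 : (Y ∩ U).card ≤ Y.card := Finset.card_le_card Finset.inter_subset_left
        have h2 : 2 * N * I.card ≤ 2 * N * (2 * z) := Nat.mul_le_mul_left _ (by omega)
        have h3 : (4 * N + 1) * z ≤ ν * z := Nat.mul_le_mul_right _ hN
        nlinarith)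
      have hex : ∃ u ∈ I, u ∉ Z ∧ f u ∉ Z := by
        by_contra! hcon
        have h1 : I ⊆ Z ∪ I.filter (fun u => f u ∈ Z) := by
          intro u hu
          by_cases h : u ∈ Z
          · simp [h]
          · simp [hu, hcon u hu h]
        have h2 : (I.filter (fun u => f u ∈ Z)).card ≤ Z.card := by
          refine Finset.card_le_card_of_injOn f (fun u hu => (Finset.mem_filter.1 hu).2) ?_
          intro x hx y hy hxy
          have hx' := hI (Finset.mem_filter.1 hx).1
          have hy' := hI (Finset.mem_filter.1 hy).1
          exact hfinj (List.mem_toFinset.1 hx') (List.mem_toFinset.1 hy') hxy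
        have h3 := (Finset.card_le_card h1).trans (Finset.card_union_le _ _)
        omega
      obtain ⟨u, hu, hu1, hu2⟩ := hex
      have huL : u ∈ a :: b :: t := List.mem_toFinset.1 (hI hu)
      obtain ⟨p, hp, hpY⟩ := hlk u huL ((Y ∩ U) ∪ Z) hnice
        (by simp only [Finset.mem_union, Finset.mem_inter, not_or]; exact ⟨fun h => hU u huL h.2, hu1⟩)
        (by simp only [Finset.mem_union, Finset.mem_inter, not_or]; exact ⟨fun h => hU _ (hfmem u huL) h.2, hu2⟩)
      obtain ⟨q, q1, q2, q3, q4, q5⟩ := path_nodup u (f u) p hp.1 hp.2.2.2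
      refine ⟨u, hu, q.toFinset, ⟨q, q2, rfl, q1, q3.trans hp.2.1, fun x hx => hp.2.2.1 x (q4 x hx), q5⟩, ?_⟩
      rw [Finset.disjoint_left]
      intro x hx hxY
      have hx' := q4 x (List.mem_toFinset.1 hx)
      exact hpY x hx' (Finset.mem_union_left _ (Finset.mem_inter.2 ⟨hxY, hp.2.2.1 x hx'⟩)))
  have hF1' : ∀ u, ∃ p : List V, u ∈ a :: b :: t → p.Nodup ∧ p.toFinset = F u ∧ PathIn A U N u (f u) p := by
    intro u
    by_cases hu : u ∈ a :: b :: t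
    · obtain ⟨p, hp⟩ := hF1 u (List.mem_toFinset.2 hu)
      exact ⟨p, fun _ => hp⟩
    · exact ⟨[], fun h => absurd h hu⟩
  choose p hp using hF1'
  have hchain := chain_flatMap (A := A) f p (b :: t) a a hf (fun u hu => (hp u hu).2.2.2.2.2)
  refine ⟨p a ++ (b :: t).flatMap (fun u => u :: p u), ?_, ?_, ?_, ?_⟩
  · have : a :: (p a ++ (b :: t).flatMap (fun u => u :: p u)) = (a :: b :: t).flatMap (fun u => u :: p u) := by simp
    rw [this, List.nodup_flatMap]
    constructor
    · intro u hu
      rw [List.nodup_cons]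
      exact ⟨fun h => hU u hu ((hp u hu).2.2.2.2.1 u h), (hp u hu).1⟩
    · refine List.Pairwise.imp_of_mem ?_ hnd
      intro u v hu hv huv
      rw [Function.onFun, List.disjoint_left]
      intro x hx hx'
      simp only [List.mem_cons] at hx hx'
      have hxU : ∀ w ∈ a :: b :: t, x ∈ p w → x ∈ U := fun w hw hxw => (hp w hw).2.2.2.2.1 x hxw
      rcases hx with rfl | hx <;> rcases hx' with h | hx'
      · exact huv h
      · exact hU _ hu (hxU v hv hx')
      · subst h; exact hU _ hv (hxU u hu hx)
      · have h1 := hF2 u (List.mem_toFinset.2 hu) v (List.mem_toFinset.2 hv) huv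
        rw [← (hp u hu).2.1, ← (hp v hv).2.1, Finset.disjoint_left] at h1
        exact h1 (List.mem_toFinset.2 hx) (List.mem_toFinset.2 hx')
  · have h1 := List.length_pos_of_ne_nil (hp a (by simp)).2.2.1
    simp; omega
  · simpa using hchain
  · intro x hx
    simp only [List.mem_cons, List.mem_append, List.mem_flatMap] at hx ⊢
    rcases hx with h | h | h
    · exact Or.inl h
    · exact Or.inr (Or.inr ⟨x, Or.inl h, Or.inl rfl⟩)
    · exact Or.inr (Or.inr ⟨x, Or.inr h, Or.inl rfl⟩)

end PartFive

section PartSix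
open Finset Classical
variable {V : Type*} {r : ℕ}

/-- reachability from `u` in colour `c` through `U` minus a bad set -/
def Rch (A : Fin r → V → V → Prop) (U : Finset V) (Bad : V → Fin r → Finset V) (c : Fin r) (u : V) : ℕ → V → Prop
  | 0, y => y = u
  | k + 1, z => Rch A U Bad c u k z ∨ (z ∈ U ∧ z ∉ Bad u c ∧ ∃ y, Rch A U Bad c u k y ∧ A c y z)

theorem Rch.self {A : Fin r → V → V → Prop} {U : Finset V} {Bad : V → Fin r → Finset V} {c : Fin r} {u : V} (k : ℕ) :
    Rch A U Bad c u k u := by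
  induction k with
  | zero => rfl
  | succ k ih => exact Or.inl ih

theorem Rch.list {A : Fin r → V → V → Prop} {U : Finset V} {Bad : V → Fin r → Finset V} {c : Fin r} {u : V} {k : ℕ} {x : V}
    (h : Rch A U Bad c u k x) : ∃ p : List V, p.length ≤ k ∧ (∀ y ∈ p, y ∈ U ∧ y ∉ Bad u c) ∧
      List.IsChain (A c) (u :: p) ∧ (u :: p).getLast? = some x := by
  induction k generalizing x with
  | zero =>
    have : x = u := h
    subst this
    exact ⟨[], by simp, by simp, by simp, by simp⟩
  | succ k ih =>
    rcases h with h | ⟨h1, h2, y, h3, h4⟩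
    · obtain ⟨p, a, b⟩ := ih h
      exact ⟨p, by omega, b⟩
    · obtain ⟨p, a, b, d, e⟩ := ih h3
      refine ⟨p ++ [x], by simp; omega, ?_, ?_, by rw [← List.cons_append, List.getLast?_append]; simp⟩
      · intro z hz
        rcases List.mem_append.1 hz with hz | hz
        · exact b z hz
        · rw [List.mem_singleton.1 hz]; exact ⟨h1, h2⟩
      · rw [← List.cons_append, List.isChain_append]
        refine ⟨d, by simp, ?_⟩
        intro z hz w hw
        rw [e] at hz
        simp at hz hw
        subst hz; subst hw; exact h4

theorem Rch.notBad {A : Fin r → V → V → Prop} {U : Finset V} {Bad : V → Fin r → Finset V} {c : Fin r} {u : V} {k : ℕ} {x : V}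
    (hu : u ∉ Bad u c) (h : Rch A U Bad c u k x) : x ∉ Bad u c := by
  induction k generalizing x with
  | zero => have : x = u := h
            subst this; exact hu
  | succ k ih =>
    rcases h with h | ⟨h1, h2, y, h3, h4⟩
    · exact ih h
    · exact h2

theorem join_path {A : Fin r → V → V → Prop} (hA : ∀ c x y, A c x y → A c y x) {U : Finset V}
    {Bad : V → Fin r → Finset V} {c : Fin r} {u v x x' : V} {k k' N : ℕ}
    (h : Rch A U Bad c u k x) (h' : Rch A U Bad c v k' x') (hx' : x' ≠ v) (hxx : A c x x') (hN : k + k' ≤ N) :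
    ∃ p, PathIn (A c) U N u v p ∧ ∀ y ∈ p, y ∉ Bad u c ∨ y ∉ Bad v c := by
  obtain ⟨p, a, b, d, e⟩ := h.list
  obtain ⟨p', a', b', d', e'⟩ := h'.list
  have hne : p' ≠ [] := by
    rintro rfl
    simp at e'; exact hx' e'.symm
  refine ⟨p ++ p'.reverse, ⟨by simp [hne], by simp; omega, ?_, ?_⟩, ?_⟩
  · intro y hy
    simp at hy
    rcases hy with hy | hy
    exacts [(b y hy).1, (b' y hy).1]
  · have h1 : u :: (p ++ p'.reverse ++ [v]) = (u :: p) ++ (v :: p').reverse := by simp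
    rw [h1, List.isChain_append]
    refine ⟨d, ?_, ?_⟩
    · rw [List.isChain_reverse]
      exact d'.imp (fun x y hxy => hA c _ _ hxy)
    · intro z hz w hw
      rw [e] at hz
      rw [List.head?_reverse, e'] at hw
      simp at hz hw
      subst hz; subst hw; exact hxx
  · intro y hy
    simp at hy
    rcases hy with hy | hy
    exacts [Or.inl (b y hy).2, Or.inr (b' y hy).2]

/-- common neighbours hypothesis -/
def ComH (G : SimpleGraph V) (U : Finset V) (r L : ℕ) : Prop :=
  ∀ P : Finset V, P.card = r → L ≤ (U.filter (fun u => ∀ y ∈ P, G.Adj y u)).card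

def ExH (G : SimpleGraph V) (m : ℕ) : Prop :=
  ∀ X X' : Finset V, X.card = m → X'.card = m → Disjoint X X' → ∃ x ∈ X, ∃ x' ∈ X', G.Adj x x'

def InvR (A : Fin r → V → V → Prop) (U : Finset V) (Bad : V → Fin r → Finset V) (I : Finset V) (k : ℕ) (z : V) : Prop :=
  z ∈ U ∧ ∃ φ : Fin r → V, Function.Injective φ ∧ ∀ c, φ c ∈ I ∧ Rch A U Bad c (φ c) k z

theorem step_lemma (G : SimpleGraph V) (A : Fin r → V → V → Prop) (hA : ∀ c x y, A c x y → A c y x)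
    (hGA : ∀ x y, G.Adj x y → ∃ c, A c x y) (hAu : ∀ c c' x y, A c x y → A c' x y → c = c')
    (U : Finset V) (Bad : V → Fin r → Finset V) (T : Finset V) (hTU : ∀ u ∈ T, u ∉ U) (b ℓ N : ℕ)
    (hself : ∀ u ∈ T, ∀ c, u ∉ Bad u c)
    (hbad : ∀ u ∈ T, ∀ c, ∀ y, y ∉ Bad u c → ((Bad u c).filter (fun x => G.Adj y x)).card ≤ b)
    (hjoin : ∀ u ∈ T, ∀ v ∈ T, u ≠ v → ∀ c k k' x x', Rch A U Bad c u k x → Rch A U Bad c v k' x' → x' ≠ v →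
      A c x x' → k + k' ≤ N → False)
    (hcom : ComH G U r (r * (r * b) + ℓ)) (I : Finset V) (hIT : I ⊆ T) (k : ℕ) (hk : 2 * k + 1 ≤ N)
    (P : Finset V) (hP : P.card = r) (ρ : V → Fin r → V) (hρ : ∀ y ∈ P, ∀ c, ρ y c ∈ I ∧ Rch A U Bad c (ρ y c) k y)
    (hρne : ∀ y ∈ P, ∀ y' ∈ P, y ≠ y' → ∀ c c', ρ y c ≠ ρ y' c') :
    ∃ S : Finset V, ℓ ≤ S.card ∧ ∀ z ∈ S, (∀ y ∈ P, G.Adj y z) ∧ InvR A U Bad I (k + 1) z := by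
  set C := U.filter (fun u => ∀ y ∈ P, G.Adj y u) with hC
  set D := P.biUnion (fun y => (Finset.univ : Finset (Fin r)).biUnion
    (fun c => (Bad (ρ y c) c).filter (fun x => G.Adj y x))) with hD
  have hDc : D.card ≤ r * (r * b) := by
    rw [← hP]
    refine Finset.card_biUnion_le_card_mul _ _ _ (fun y hy => ?_)
    refine (Finset.card_biUnion_le_card_mul _ _ b (fun c _ => ?_)).trans (by simp [hP])
    have h1 := hρ y hy c
    exact hbad _ (hIT h1.1) c y (h1.2.notBad (hself _ (hIT h1.1) c))
  refine ⟨C \ D, ?_, ?_⟩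
  · have h1 : r * (r * b) + ℓ ≤ C.card := by convert hcom P hP
    have h2 := Finset.le_card_sdiff D C
    omega
  intro z hz
  obtain ⟨hzC, hzD⟩ := Finset.mem_sdiff.1 hz
  obtain ⟨hzU, hzP⟩ := Finset.mem_filter.1 hzC
  refine ⟨hzP, hzU, ?_⟩
  have hznb : ∀ y ∈ P, ∀ c, z ∉ Bad (ρ y c) c := by
    intro y hy c hzb
    apply hzD
    rw [hD, Finset.mem_biUnion]
    refine ⟨y, hy, Finset.mem_biUnion.2 ⟨c, Finset.mem_univ _, Finset.mem_filter.2 ⟨hzb, hzP y hy⟩⟩⟩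
  have hcol : ∀ y : P, ∃ c, A c y.1 z := fun y => hGA _ _ (hzP y.1 y.2)
  choose g hg using hcol
  have hR : ∀ y ∈ P, ∀ c, A c y z → Rch A U Bad c (ρ y c) (k + 1) z := fun y hy c hc =>
    Or.inr ⟨hzU, hznb y hy c, y, (hρ y hy c).2, hc⟩
  have hginj : Function.Injective g := by
    intro y y' hyy
    by_contra hne
    have hne' : y.1 ≠ y'.1 := fun h => hne (Subtype.ext h)
    have h1 := hg y
    have h2 := hg y'
    rw [← hyy] at h2
    have h3 := hρ y.1 y.2 (g y)
    have h4 := hρ y'.1 y'.2 (g y)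
    refine hjoin _ (hIT h4.1) _ (hIT h3.1) (hρne _ y'.2 _ y.2 (Ne.symm hne') _ _) (g y) k (k+1) y'.1 z h4.2 (hR y.1 y.2 _ h1) ?_ h2 (by omega)
    rintro h; exact hTU _ (hIT h3.1) (h ▸ hzU)
  have hgs : Function.Surjective g := by
    have := (Fintype.bijective_iff_injective_and_card g).2 ⟨hginj, by simp [hP]⟩
    exact this.2
  choose y hy using hgs
  refine ⟨fun c => ρ (y c).1 c, ?_, ?_⟩
  · intro c c' hcc
    by_contra hne
    refine hρne _ (y c).2 _ (y c').2 ?_ c c' hcc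
    intro h
    apply hne
    rw [← hy c, ← hy c', Subtype.ext h]
  · intro c
    refine ⟨(hρ _ (y c).2 c).1, hR _ (y c).2 c ?_⟩
    have := hg (y c)
    rwa [hy c] at this

theorem grow (G : SimpleGraph V) (A : Fin r → V → V → Prop) (hr : 0 < r) (hA : ∀ c x y, A c x y → A c y x)
    (hGA : ∀ x y, G.Adj x y → ∃ c, A c x y) (hAu : ∀ c c' x y, A c x y → A c' x y → c = c')
    (U : Finset V) (Bad : V → Fin r → Finset V) (T : Finset V) (hTU : ∀ u ∈ T, u ∉ U) (b ℓ N m ν J : ℕ)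
    (hself : ∀ u ∈ T, ∀ c, u ∉ Bad u c)
    (hbad : ∀ u ∈ T, ∀ c, ∀ y, y ∉ Bad u c → ((Bad u c).filter (fun x => G.Adj y x)).card ≤ b)
    (hjoin : ∀ u ∈ T, ∀ v ∈ T, u ≠ v → ∀ c k k' x x', Rch A U Bad c u k x → Rch A U Bad c v k' x' → x' ≠ v →
      A c x x' → k + k' ≤ N → False)
    (hcom : ComH G U r (r * (r * b) + ℓ)) (hℓ : 0 < ℓ) (hm : 0 < m) (hν : 2 ≤ ν) (hH : ExpH G m ν ℓ)
    (I : Finset V) (hIT : I ⊆ T) (hI : I.card = 2 * r - 1) (hJ : 2 * J + 3 ≤ N) :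
    ∃ X : Finset V, min (ν ^ J) (2 * m) ≤ X.card ∧ ∀ z ∈ X, InvR A U Bad I (J + 1) z := by
  induction J with
  | zero =>
    obtain ⟨P, hPI, hP⟩ := Finset.exists_subset_card_eq (show r ≤ I.card by omega)
    obtain ⟨S, hS1, hS2⟩ := step_lemma G A hA hGA hAu U Bad T hTU b ℓ N hself hbad hjoin hcom I hIT 0 (by omega)
      P hP (fun y _ => y) (fun y hy c => ⟨hPI hy, rfl⟩) (fun y _ y' _ h _ _ => h)
    refine ⟨S, ?_, fun z hz => (hS2 z hz).2⟩
    exact (min_le_left _ _).trans (by rw [pow_zero]; omega)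
  | succ J ih =>
    obtain ⟨X, hX1, hX2⟩ := ih (by omega)
    obtain ⟨X0, h01, h02⟩ := Finset.exists_subset_card_eq (show min (ν ^ J) m ≤ X.card by omega)
    have hpos : 0 < min (ν ^ J) m := lt_min (by positivity) hm
    have hch : ∀ z : V, ∃ S : Finset V, z ∈ X0 → ℓ ≤ S.card ∧ ∀ w ∈ S, G.Adj z w ∧ InvR A U Bad I (J + 1 + 1) w := by
      intro z
      by_cases hz : z ∈ X0
      · obtain ⟨hzU, φ, hφ, hφ2⟩ := hX2 z (h01 hz)
        have hzI : z ∉ I := fun h => hTU z (hIT h) hzU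
        have himg : Finset.univ.image φ ⊆ I := by
          intro x hx
          obtain ⟨c, _, rfl⟩ := Finset.mem_image.1 hx
          exact (hφ2 c).1
        have hni : ∀ c, z ≠ φ c := fun c h => hzI (h ▸ (hφ2 c).1)
        have hcardP : (insert z (I \ Finset.univ.image φ)).card = r := by
          rw [Finset.card_insert_of_notMem (by simp [hzI]), Finset.card_sdiff_of_subset himg,
            Finset.card_image_of_injective _ hφ, hI]
          simp; omega
        obtain ⟨S, hS1, hS2⟩ := step_lemma G A hA hGA hAu U Bad T hTU b ℓ N hself hbad hjoin hcom I hIT (J+1) (by omega)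
          (insert z (I \ Finset.univ.image φ)) hcardP (fun y c => if y = z then φ c else y) (by
            intro y hy c
            by_cases hyz : y = z
            · subst hyz; simpa using hφ2 c
            · simp only [if_neg hyz]
              refine ⟨?_, Rch.self _⟩
              rcases Finset.mem_insert.1 hy with h | h
              · exact absurd h hyz
              · exact (Finset.mem_sdiff.1 h).1) (by
            intro y hy y' hy' hne c c'
            have hout : ∀ w ∈ insert z (I \ Finset.univ.image φ), w ≠ z → ∀ d, φ d ≠ w := by
              intro w hw hwz d hd
              rcases Finset.mem_insert.1 hw with h | h
              · exact hwz h
              · exact (Finset.mem_sdiff.1 h).2 (Finset.mem_image.2 ⟨d, Finset.mem_univ _, hd⟩)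
            by_cases h1 : y = z
            · have h2 : y' ≠ z := fun h => hne (h1.trans h.symm)
              simp only [if_pos h1, if_neg h2]
              exact hout y' hy' h2 c
            · by_cases h2 : y' = z
              · simp only [if_neg h1, if_pos h2]
                exact (hout y hy h1 c').symm
              · simpa only [if_neg h1, if_neg h2] using hne)
        exact ⟨S, fun _ => ⟨hS1, fun w hw => ⟨(hS2 w hw).1 z (by simp), (hS2 w hw).2⟩⟩⟩
      · exact ⟨∅, fun h => absurd h hz⟩
    choose S hS using hch
    refine ⟨X0.biUnion S, ?_, ?_⟩
    · by_contra hlt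
      have h1 : (X0.biUnion S).card ≤ ν * X0.card := by
        rw [h02]
        have : min (ν ^ (J+1)) (2 * m) ≤ ν * min (ν ^ J) m := by
          rcases le_total (ν ^ J) m with h | h
          · rw [min_eq_left h, pow_succ, mul_comm]; exact min_le_left _ _
          · rw [min_eq_right h]; exact (min_le_right _ _).trans (Nat.mul_le_mul_right _ hν)
        omega
      obtain ⟨x, hx, hlt2⟩ := hH X0 (X0.biUnion S) (Finset.card_pos.1 (by omega)) (by rw [h02]; exact min_le_right _ _) h1
      have h2 : S x ⊆ (X0.biUnion S).filter (fun y => G.Adj x y) := by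
        intro w hw
        exact Finset.mem_filter.2 ⟨Finset.mem_biUnion.2 ⟨x, hx, hw⟩, ((hS x hx).2 w hw).1⟩
      have h3 := Finset.card_le_card h2
      have h4 := (hS x hx).1
      omega
    · intro z hz
      obtain ⟨x, hx, hz⟩ := Finset.mem_biUnion.1 hz
      exact ((hS x hx).2 z hz).2

theorem indep_claim (G : SimpleGraph V) (A : Fin r → V → V → Prop) (hr : 0 < r) (hA : ∀ c x y, A c x y → A c y x)
    (hGA : ∀ x y, G.Adj x y → ∃ c, A c x y) (hAu : ∀ c c' x y, A c x y → A c' x y → c = c')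
    (U : Finset V) (T : Finset V) (hTU : ∀ u ∈ T, u ∉ U) (ℓ N m ν J : ℕ)
    (hcom : ComH G U r (r * (r * (4 * r * (2 * ℓ))) + ℓ)) (hℓ : 0 < ℓ) (hm : 0 < m) (hν : 2 ≤ ν) (hH : ExpH G m ν ℓ)
    (hEX : ExH G m) (hJ : 2 * J + 3 ≤ N) (hνJ : 2 * m ≤ ν ^ J)
    (hT : T.card = 4 * r - 2) (hind : IndS (fun x y => ∃ c, Lk G ℓ (A c) U N x y) T) : False := by
  have hY : ∀ (u v : V) (c : Fin r), ∃ Y : Finset V, (u ∈ T → v ∈ T → u ≠ v → NiceS G ℓ Y ∧ u ∉ Y ∧ v ∉ Y ∧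
      ∀ p, PathIn (A c) U N u v p → ∃ x ∈ p, x ∈ Y) := by
    intro u v c
    by_cases h : u ∈ T ∧ v ∈ T ∧ u ≠ v
    · obtain ⟨h1, h2, h3⟩ := h
      have h4 := hind u h1 v h2 h3
      have h5 : ¬ Lk G ℓ (A c) U N u v := fun h => h4 ⟨c, h⟩
      unfold Lk at h5
      push Not at h5
      obtain ⟨Y, a, b, d, e⟩ := h5
      exact ⟨Y, fun _ _ _ => ⟨a, b, d, e⟩⟩
    · exact ⟨∅, fun h1 h2 h3 => absurd ⟨h1, h2, h3⟩ h⟩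
  choose Y hY using hY
  set Bad : V → Fin r → Finset V := fun u c => (T.erase u).biUnion (fun v => Y u v c ∪ Y v u c) with hBad
  have hself : ∀ u ∈ T, ∀ c, u ∉ Bad u c := by
    intro u hu c h
    obtain ⟨v, hv, h⟩ := Finset.mem_biUnion.1 h
    obtain ⟨hvu, hvT⟩ := Finset.mem_erase.1 hv
    rcases Finset.mem_union.1 h with h | h
    · exact (hY u v c hu hvT (Ne.symm hvu)).2.1 h
    · exact (hY v u c hvT hu hvu).2.2.1 h
  have hbad : ∀ u ∈ T, ∀ c, ∀ y, y ∉ Bad u c → ((Bad u c).filter (fun x => G.Adj y x)).card ≤ 4 * r * (2 * ℓ) := by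
    intro u hu c y hy
    simp only [hBad]
    rw [Finset.filter_biUnion]
    refine (Finset.card_biUnion_le_card_mul _ _ (2 * ℓ) ?_).trans (Nat.mul_le_mul_right _ ?_)
    · intro v hv
      obtain ⟨hvu, hvT⟩ := Finset.mem_erase.1 hv
      have hy' : y ∉ Y u v c ∧ y ∉ Y v u c := by
        constructor
        · intro h; exact hy (Finset.mem_biUnion.2 ⟨v, hv, Finset.mem_union_left _ h⟩)
        · intro h; exact hy (Finset.mem_biUnion.2 ⟨v, hv, Finset.mem_union_right _ h⟩)
      have h1 := (hY u v c hu hvT (Ne.symm hvu)).1 y hy'.1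
      have h2 := (hY v u c hvT hu hvu).1 y hy'.2
      rw [Finset.filter_union]
      refine (Finset.card_union_le _ _).trans (by omega)
    · refine (Finset.card_erase_le).trans (by omega)
  have hjoin : ∀ u ∈ T, ∀ v ∈ T, u ≠ v → ∀ c k k' x x', Rch A U Bad c u k x → Rch A U Bad c v k' x' → x' ≠ v →
      A c x x' → k + k' ≤ N → False := by
    intro u hu v hv huv c k k' x x' h h' hx hxx hk
    obtain ⟨p, hp, hpb⟩ := join_path hA h h' hx hxx hk
    obtain ⟨y, hyp, hyY⟩ := (hY u v c hu hv huv).2.2.2 p hp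
    rcases hpb y hyp with hb | hb
    · exact hb (Finset.mem_biUnion.2 ⟨v, Finset.mem_erase.2 ⟨Ne.symm huv, hv⟩, Finset.mem_union_left _ hyY⟩)
    · exact hb (Finset.mem_biUnion.2 ⟨u, Finset.mem_erase.2 ⟨huv, hu⟩, Finset.mem_union_right _ hyY⟩)
  obtain ⟨I, hIT, hI⟩ := Finset.exists_subset_card_eq (show 2 * r - 1 ≤ T.card by omega)
  have hI' : (T \ I).card = 2 * r - 1 := by
    rw [Finset.card_sdiff_of_subset hIT]; omega
  obtain ⟨X, hX1, hX2⟩ := grow G A hr hA hGA hAu U Bad T hTU _ ℓ N m ν J hself hbad hjoin hcom hℓ hm hν hH I hIT hI hJ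
  obtain ⟨X', hX1', hX2'⟩ := grow G A hr hA hGA hAu U Bad T hTU _ ℓ N m ν J hself hbad hjoin hcom hℓ hm hν hH (T \ I)
    Finset.sdiff_subset hI' hJ
  rw [min_eq_right hνJ] at hX1 hX1'
  obtain ⟨B, hB, hBc⟩ := Finset.exists_subset_card_eq (show m ≤ X.card by omega)
  obtain ⟨B', hB', hBc'⟩ := Finset.exists_subset_card_eq (show m ≤ (X' \ B).card by
    have := Finset.le_card_sdiff B X'; omega)
  obtain ⟨x, hx, x', hx', hadj⟩ := hEX B B' hBc hBc' (Finset.disjoint_of_subset_right hB' Finset.disjoint_sdiff)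
  obtain ⟨c, hc⟩ := hGA x x' hadj
  obtain ⟨hxU, φ, _, hφ⟩ := hX2 x (hB hx)
  obtain ⟨hxU', φ', _, hφ'⟩ := hX2' x' ((Finset.sdiff_subset) (hB' hx'))
  have h1 := hφ c
  have h2 := hφ' c
  have h3 := Finset.mem_sdiff.1 h2.1
  refine hjoin _ (hIT h1.1) _ h3.1 (fun h => h3.2 (h ▸ h1.1)) c _ _ x x' h1.2 h2.2 ?_ hc (by omega)
  intro h; exact hTU _ h3.1 (h ▸ hxU')

end PartSix

section PartSeven
open Finset Classical
variable {V : Type*} {r : ℕ}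

theorem det_main (G : SimpleGraph V) (col : Sym2 V → Fin r) (hr : 0 < r) (U Q : Finset V)
    (hQU : ∀ u ∈ Q, u ∉ U) (ℓ N m ν J s : ℕ)
    (hcom : ComH G U r (r * (r * (4 * r * (2 * ℓ))) + ℓ)) (hℓ : 0 < ℓ) (hm : 0 < m) (hν : 2 ≤ ν) (hH : ExpH G m ν ℓ)
    (hEX : ExH G m) (hJ : 2 * J + 3 ≤ N) (hνJ : 2 * m ≤ ν ^ J) (hNν : 4 * N + 1 ≤ ν) (hQ : Q.card ≤ m)
    (hs : (1 - 1 / (2 * ((4 * r : ℕ) : ℝ) * r : ℝ)) ^ s * (8 * (((4 * r : ℕ) : ℝ) * r) ^ 2) ≤ 1) :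
    ∃ 𝒞 : Finset (Set V), 𝒞.card ≤ (4 * r) * (s + 4 * (4 * r * r) * r) ∧
      (∀ S ∈ 𝒞, ∃ i, IsMonoCycle G col i S) ∧ (Q : Set V) ⊆ ⋃₀ (𝒞 : Set (Set V)) := by
  set A : Fin r → V → V → Prop := fun c u v => G.Adj u v ∧ col s(u, v) = c with hAdef
  have hA : ∀ c x y, A c x y → A c y x := fun c x y h => ⟨h.1.symm, by rw [Sym2.eq_swap]; exact h.2⟩
  have hGA : ∀ x y, G.Adj x y → ∃ c, A c x y := fun x y h => ⟨_, h, rfl⟩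
  have hAu : ∀ c c' x y, A c x y → A c' x y → c = c' := fun c c' x y h h' => h.2.symm.trans h'.2
  have hcov := abstract_cover (fun c => Lk G ℓ (A c) U N) (fun c x y h => h.symm (hA c)) (4 * r) hr (by omega) s hs (4 * r) le_rfl Q (by
    intro I hI hind
    by_contra hlt
    obtain ⟨T, hTI, hT⟩ := Finset.exists_subset_card_eq (show 4 * r - 2 ≤ I.card by omega)
    exact indep_claim G A hr hA hGA hAu U T (fun u hu => hQU u (hI (hTI hu))) ℓ N m ν J hcom hℓ hm hν hH hEX hJ hνJ hT
      (fun x hx y hy hxy => hind x (hTI hx) y (hTI hy) hxy))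
  obtain ⟨L, hL1, hL2, hL3⟩ := hcov
  have hreal : ∀ l : List V, ∃ S : Set V, l ∈ L → (∃ i, IsMonoCycle G col i S) ∧ ∀ x ∈ l, x ∈ S := by
    intro l
    by_cases hl : l ∈ L
    · obtain ⟨i, ⟨hnd, a, t, rfl, ht⟩, hlQ⟩ := hL2 l hl
      match t, ht with
      | [], _ => exact ⟨{a}, fun _ => ⟨⟨i, Or.inl ⟨a, rfl⟩⟩, by simp⟩⟩
      | b :: t, ht =>
        have hc := ht.resolve_left (by simp)
        obtain ⟨s', h1, h2, h3, h4⟩ := realize G m ν ℓ N hH hNν (A i) (hA i) U a b t hnd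
          (fun x hx => hQU x (hlQ x hx)) (by
            rw [← List.toFinset_card_of_nodup hnd]
            exact (Finset.card_le_card (fun x hx => hlQ x (List.mem_toFinset.1 hx))).trans hQ) hc
        exact ⟨{x | x ∈ a :: s'}, fun _ => ⟨⟨i, chain_cycle G col i a s' h1 h2 h3⟩, h4⟩⟩
    · exact ⟨∅, fun h => absurd h hl⟩
  choose S hS using hreal
  refine ⟨(L.map S).toFinset, ?_, ?_, ?_⟩
  · refine (List.toFinset_card_le _).trans ?_
    rw [List.length_map]; exact hL1
  · intro T hT
    obtain ⟨l, hl, rfl⟩ := List.mem_map.1 (List.mem_toFinset.1 hT)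
    exact (hS l hl).1
  · intro x hx
    obtain ⟨l, hl, hxl⟩ := hL3 x hx
    exact Set.mem_sUnion.2 ⟨S l, by simpa using ⟨l, hl, rfl⟩, (hS l hl).2 x hxl⟩

/-- number of cycles -/
theorem count_bound (r : ℕ) (hr : 2 ≤ r) : ∃ s : ℕ,
    (1 - 1 / (2 * ((4 * r : ℕ) : ℝ) * r : ℝ)) ^ s * (8 * (((4 * r : ℕ) : ℝ) * r) ^ 2) ≤ 1 ∧
    (((4 * r) * (s + 4 * (4 * r * r) * r) : ℕ) : ℝ) ≤ 400 * r ^ 4 * Real.log (4 * r ^ 2) := by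
  have hr' : (2:ℝ) ≤ r := by exact_mod_cast hr
  set x : ℝ := 8 * r ^ 2 with hx
  set B : ℝ := 128 * r ^ 4 with hB
  have hxpos : 0 < x := by positivity
  have hBpos : 0 < B := by positivity
  have hL2 : Real.log 16 ≤ Real.log (4 * r ^ 2) := Real.log_le_log (by norm_num) (by nlinarith)
  have h16 : Real.log 16 = 4 * Real.log 2 := by
    rw [show (16:ℝ) = 2 ^ 4 by norm_num, Real.log_pow]; norm_num
  have hl2 := Real.log_two_gt_d9
  set L := Real.log (4 * (r:ℝ) ^ 2) with hL
  have hBL : Real.log B = Real.log 8 + 2 * L := by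
    rw [hB, show (128:ℝ) * r ^ 4 = 8 * (4 * r ^ 2) ^ 2 by ring, Real.log_mul (by norm_num) (by positivity), Real.log_pow]
    norm_num [hL]
  have h8 : Real.log 8 = 3 * Real.log 2 := by
    rw [show (8:ℝ) = 2 ^ 3 by norm_num, Real.log_pow]; norm_num
  have hBle : Real.log B ≤ 3 * L := by linarith
  have hBnn : 0 ≤ Real.log B := Real.log_nonneg (by rw [hB]; nlinarith [sq_nonneg ((r:ℝ)^2), pow_le_pow_left₀ (by norm_num) hr' 4])
  refine ⟨⌈x * Real.log B⌉₊, ?_, ?_⟩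
  · set s := ⌈x * Real.log B⌉₊ with hs
    have h1 : x * Real.log B ≤ s := Nat.le_ceil _
    have h2 : (1 - 1 / (2 * ((4 * r : ℕ) : ℝ) * r : ℝ)) = 1 - 1 / x := by
      push_cast; rw [hx]; ring_nf
    have h3 : (8 * (((4 * r : ℕ) : ℝ) * r) ^ 2) = B := by push_cast; rw [hB]; ring
    rw [h2, h3]
    have h4 : 1 - 1 / x ≤ Real.exp (-(1 / x)) := by
      have := Real.add_one_le_exp (-(1/x)); linarith
    have h5 : 0 ≤ 1 - 1 / x := by
      rw [sub_nonneg, div_le_one hxpos]; nlinarith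
    calc (1 - 1 / x) ^ s * B ≤ (Real.exp (-(1 / x))) ^ s * Real.exp (Real.log B) := by
          rw [Real.exp_log hBpos]; gcongr
      _ = Real.exp (s * (-(1/x)) + Real.log B) := by rw [← Real.exp_nat_mul, ← Real.exp_add]
      _ ≤ 1 := by
          rw [Real.exp_le_one_iff]
          have : Real.log B ≤ s / x := by rw [le_div_iff₀ hxpos]; linarith
          have h6 : (s:ℝ) * (-(1/x)) = - (s / x) := by ring
          linarith
  · have h1 : (⌈x * Real.log B⌉₊ : ℝ) ≤ x * Real.log B + 1 := (Nat.ceil_lt_add_one (by positivity)).le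
    push_cast
    have h2 : x * Real.log B ≤ x * (3 * L) := by gcongr
    have hLge : (2.7:ℝ) ≤ L := by linarith
    calc (4 * (r:ℝ)) * (⌈x * Real.log B⌉₊ + 4 * (4 * r * r) * r) ≤ 4 * r * (8 * r ^ 2 * (3 * L) + 1 + 16 * r ^ 3) := by
          refine mul_le_mul_of_nonneg_left ?_ (by positivity)
          rw [hx] at h1 h2
          have : (4:ℝ) * (4 * r * r) * r = 16 * r ^ 3 := by ring
          linarith
      _ = 96 * r ^ 3 * L + 4 * r + 64 * r ^ 4 := by ring
      _ ≤ 400 * r ^ 4 * L := by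
          have hr3 : (0:ℝ) < r ^ 3 := by positivity
          have e1 : (r:ℝ) ^ 3 * L ≤ r ^ 4 * L := by
            refine mul_le_mul_of_nonneg_right ?_ (by linarith)
            rw [pow_succ (r:ℝ) 3]; nlinarith
          have e2 : (r:ℝ) ≤ r ^ 4 := by
            have : (1:ℝ) ≤ r ^ 3 := one_le_pow₀ (by linarith)
            rw [pow_succ (r:ℝ) 3]; nlinarith
          have e3 : (r:ℝ) ^ 4 * 2.7 ≤ r ^ 4 * L := by gcongr
          nlinarith

end PartSeven

section PartEight
open Finset Classical MeasureTheory
variable {n : ℕ}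

theorem bern_prob (q : ℝ) (h0 : 0 ≤ q) (h1 : q ≤ 1) : IsProbabilityMeasure (bernoulliM q) := by
  constructor
  simp [bernoulliM]
  rw [← ENNReal.ofReal_add h0 (by linarith)]
  simp

theorem gnp_prob (n : ℕ) (q : ℝ) (h0 : 0 ≤ q) (h1 : q ≤ 1) : IsProbabilityMeasure (gnp n q) := by
  have := bern_prob q h0 h1
  unfold gnp; infer_instance

theorem gnp_all (n : ℕ) (q : ℝ) (h0 : 0 ≤ q) (h1 : q ≤ 1) (F : Finset (Sym2 (Fin n))) :
    (gnp n q).real {ω | ∀ e ∈ F, ω e = true} = q ^ F.card := by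
  have := bern_prob q h0 h1
  have hset : {ω : Sym2 (Fin n) → Bool | ∀ e ∈ F, ω e = true} =
      Set.pi Set.univ (fun e => if e ∈ F then {true} else Set.univ) := by
    ext ω
    simp only [Set.mem_ofPred_eq, Set.mem_pi, Set.mem_univ, true_imp_iff]
    constructor
    · intro h e; split_ifs with he
      · exact h e he
      · trivial
    · intro h e he; have := h e; rw [if_pos he] at this; exact this
  rw [hset, Measure.real, gnp, Measure.pi_pi]
  have : ∀ e, (bernoulliM q) (if e ∈ F then {true} else Set.univ) = if e ∈ F then ENNReal.ofReal q else 1 := by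
    intro e
    split_ifs
    · simp [bernoulliM]
    · exact measure_univ
  simp_rw [this]
  rw [Finset.prod_ite]
  simp [ENNReal.toReal_ofReal h0]

theorem block_mgf (n : ℕ) (q : ℝ) (h0 : 0 ≤ q) (h1 : q ≤ 1) {ι : Type*} (s : Finset ι)
    (B : ι → Finset (Sym2 (Fin n))) (k : ℕ) (hk : ∀ i ∈ s, (B i).card = k)
    (hd : ∀ i ∈ s, ∀ j ∈ s, i ≠ j → Disjoint (B i) (B j)) (a : ℝ) :
    ∫ ω, ∏ i ∈ s, (if ∀ e ∈ B i, ω e = true then a else 1) ∂(gnp n q) = (1 + (a - 1) * q ^ k) ^ s.card := by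
  have := gnp_prob n q h0 h1
  have hω : ∀ ω : Sym2 (Fin n) → Bool, ∏ i ∈ s, (if ∀ e ∈ B i, ω e = true then a else 1)
      = ∑ t ∈ s.powerset, (a - 1) ^ t.card * Set.indicator {ω : Sym2 (Fin n) → Bool | ∀ e ∈ t.biUnion B, ω e = true} (fun _ => (1:ℝ)) ω := by
    intro ω
    have : ∀ i ∈ s, (if ∀ e ∈ B i, ω e = true then a else 1) = 1 + (if ∀ e ∈ B i, ω e = true then a - 1 else 0) := by
      intro i _; split_ifs <;> ring
    rw [Finset.prod_congr rfl this, Finset.prod_one_add]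
    refine Finset.sum_congr rfl (fun t ht => ?_)
    by_cases h : ∀ e ∈ t.biUnion B, ω e = true
    · rw [Set.indicator_of_mem (by exact h), mul_one, ← Finset.prod_const]
      refine Finset.prod_congr rfl (fun i hi => if_pos ?_)
      intro e he
      exact h e (Finset.mem_biUnion.2 ⟨i, hi, he⟩)
    · rw [Set.indicator_of_notMem (by exact h), mul_zero]
      push Not at h
      obtain ⟨e, he, hne⟩ := h
      obtain ⟨i, hi, he⟩ := Finset.mem_biUnion.1 he
      exact Finset.prod_eq_zero hi (if_neg (fun h => hne (h e he)))
  simp_rw [hω]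
  rw [integral_finsetSum _ (fun t _ => Integrable.of_finite)]
  have : ∀ t ∈ s.powerset, ∫ ω, (a - 1) ^ t.card * Set.indicator {ω : Sym2 (Fin n) → Bool | ∀ e ∈ t.biUnion B, ω e = true} (fun _ => (1:ℝ)) ω ∂(gnp n q)
      = ((a - 1) * q ^ k) ^ t.card := by
    intro t ht
    have hts := Finset.mem_powerset.1 ht
    rw [integral_const_mul, integral_indicator_const _ (Set.toFinite _).measurableSet, gnp_all n q h0 h1]
    rw [Finset.card_biUnion (fun i hi j hj hij => hd i (hts hi) j (hts hj) hij),
      Finset.sum_congr rfl (fun i hi => hk i (hts hi))]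
    simp [mul_pow, pow_mul, mul_comm]
  rw [Finset.sum_congr rfl this, add_comm 1, ← Finset.sum_pow_mul_eq_add_pow]
  simp

theorem lower_tail (n : ℕ) (q : ℝ) (h0 : 0 ≤ q) (h1 : q ≤ 1) {ι : Type*} (s : Finset ι)
    (B : ι → Finset (Sym2 (Fin n))) (k : ℕ) (hk : ∀ i ∈ s, (B i).card = k)
    (hd : ∀ i ∈ s, ∀ j ∈ s, i ≠ j → Disjoint (B i) (B j)) (t : ℕ) :
    (gnp n q).real {ω | (s.filter (fun i => ∀ e ∈ B i, ω e = true)).card < t} ≤ Real.exp (t - s.card * q ^ k / 2) := by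
  have := gnp_prob n q h0 h1
  have hM := mul_meas_ge_le_integral_of_nonneg (μ := gnp n q)
    (f := fun ω => ∏ i ∈ s, (if ∀ e ∈ B i, ω e = true then Real.exp (-1) else 1))
    (Filter.Eventually.of_forall (fun ω => Finset.prod_nonneg (fun i _ => by split_ifs <;> positivity)))
    Integrable.of_finite (Real.exp (-t))
  rw [block_mgf n q h0 h1 s B k hk hd] at hM
  have hsub : (gnp n q).real {ω | (s.filter (fun i => ∀ e ∈ B i, ω e = true)).card < t} ≤
      (gnp n q).real {ω | Real.exp (-t) ≤ ∏ i ∈ s, (if ∀ e ∈ B i, ω e = true then Real.exp (-1) else 1)} := by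
    refine measureReal_mono (fun ω hω => ?_) (measure_ne_top _ _)
    simp only [Set.mem_ofPred_eq] at hω ⊢
    rw [Finset.prod_ite, Finset.prod_const, Finset.prod_const_one, mul_one, ← Real.exp_nat_mul]
    refine Real.exp_le_exp.2 ?_
    have : ((s.filter (fun i => ∀ e ∈ B i, ω e = true)).card : ℝ) ≤ t := by exact_mod_cast hω.le
    linarith
  have hqk : 0 ≤ q ^ k := pow_nonneg h0 k
  have hqk1 : q ^ k ≤ 1 := pow_le_one₀ h0 h1
  have he : Real.exp (-1) ≤ 1 / 2 := by
    rw [Real.exp_neg, inv_eq_one_div]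
    refine one_div_le_one_div_of_le (by norm_num) ?_
    have := Real.exp_one_gt_d9; linarith
  have hb : (1 + (Real.exp (-1) - 1) * q ^ k) ^ s.card ≤ Real.exp (- (s.card * q ^ k / 2)) := by
    have h2 : 1 + (Real.exp (-1) - 1) * q ^ k ≤ Real.exp (-(q ^ k / 2)) := by
      have := Real.add_one_le_exp (-(q ^ k / 2))
      nlinarith
    have h3 : 0 ≤ 1 + (Real.exp (-1) - 1) * q ^ k := by
      have := Real.exp_pos (-1); nlinarith
    calc _ ≤ (Real.exp (-(q ^ k / 2))) ^ s.card := pow_le_pow_left₀ h3 h2 _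
      _ = _ := by rw [← Real.exp_nat_mul]; congr 1; ring
  have h5 : Real.exp (t - s.card * q ^ k / 2) = Real.exp t * Real.exp (- (s.card * q ^ k / 2)) := by
    rw [← Real.exp_add]; congr 1
  have h6 : Real.exp t * Real.exp (-t) = 1 := by rw [← Real.exp_add]; simp
  refine hsub.trans ?_
  rw [h5]
  have h7 := mul_le_mul_of_nonneg_left (hM.trans hb) (Real.exp_pos (t:ℝ)).le
  rw [← mul_assoc, h6, one_mul] at h7
  exact h7

theorem upper_tail (n : ℕ) (q : ℝ) (h0 : 0 ≤ q) (h1 : q ≤ 1) (s : Finset (Sym2 (Fin n))) (t : ℝ) :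
    (gnp n q).real {ω | t ≤ (s.filter (fun e => ω e = true)).card} ≤ Real.exp (2 * q * s.card - t) := by
  have := gnp_prob n q h0 h1
  have hM := mul_meas_ge_le_integral_of_nonneg (μ := gnp n q)
    (f := fun ω => ∏ i ∈ s, (if ∀ e ∈ ({i} : Finset (Sym2 (Fin n))), ω e = true then Real.exp 1 else 1))
    (Filter.Eventually.of_forall (fun ω => Finset.prod_nonneg (fun i _ => by split_ifs <;> positivity)))
    Integrable.of_finite (Real.exp t)
  rw [block_mgf n q h0 h1 s (fun i => {i}) 1 (by simp) (by simp)] at hM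
  have hsub : (gnp n q).real {ω | t ≤ (s.filter (fun e => ω e = true)).card} ≤
      (gnp n q).real {ω | Real.exp t ≤ ∏ i ∈ s, (if ∀ e ∈ ({i} : Finset (Sym2 (Fin n))), ω e = true then Real.exp 1 else 1)} := by
    refine measureReal_mono (fun ω hω => ?_) (measure_ne_top _ _)
    simp only [Set.mem_ofPred_eq, Finset.mem_singleton, forall_eq] at hω ⊢
    rw [Finset.prod_ite, Finset.prod_const, Finset.prod_const_one, mul_one, ← Real.exp_nat_mul]
    refine Real.exp_le_exp.2 ?_
    linarith
  have hb : (1 + (Real.exp 1 - 1) * q ^ 1) ^ s.card ≤ Real.exp (2 * q * s.card) := by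
    have he := Real.exp_one_lt_d9
    have he0 := Real.exp_one_gt_d9
    have h2 : 1 + (Real.exp 1 - 1) * q ^ 1 ≤ Real.exp (2 * q) := by
      have := Real.add_one_le_exp (2 * q)
      nlinarith
    calc _ ≤ (Real.exp (2 * q)) ^ s.card := pow_le_pow_left₀ (by nlinarith) h2 _
      _ = _ := by rw [← Real.exp_nat_mul]; congr 1; ring
  have h5 : Real.exp (2 * q * s.card - t) = Real.exp (-t) * Real.exp (2 * q * s.card) := by
    rw [← Real.exp_add]; congr 1; ring
  have h6 : Real.exp (-t) * Real.exp t = 1 := by rw [← Real.exp_add]; simp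
  refine hsub.trans ?_
  rw [h5]
  have h7 := mul_le_mul_of_nonneg_left (hM.trans hb) (Real.exp_pos (-t)).le
  rw [← mul_assoc, h6, one_mul] at h7
  exact h7

theorem adj_iff {n : ℕ} (ω : Sym2 (Fin n) → Bool) (u v : Fin n) :
    (graphOf ω).Adj u v ↔ u ≠ v ∧ ω s(u, v) = true := by
  unfold graphOf
  rw [SimpleGraph.fromRel_adj, Sym2.eq_swap (a := v), or_self]

end PartEight

section PartNine
open Finset Classical MeasureTheory
variable {n : ℕ}

theorem pow_le_exp_log (n k : ℕ) : ((n:ℝ)) ^ k ≤ Real.exp (k * Real.log (n + 1)) := by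
  rw [Real.exp_nat_mul, Real.exp_log (by positivity)]
  gcongr; linarith

theorem card_powersetCard_le (n k : ℕ) :
    (((Finset.univ : Finset (Fin n)).powersetCard k).card : ℝ) ≤ Real.exp (k * Real.log (n + 1)) := by
  rw [Finset.card_powersetCard, Finset.card_univ, Fintype.card_fin]
  refine le_trans ?_ (pow_le_exp_log n k)
  exact_mod_cast Nat.choose_le_pow n k

theorem com_fail (n : ℕ) (q : ℝ) (h0 : 0 ≤ q) (h1 : q ≤ 1) (U : Finset (Fin n)) (r L t0 : ℕ) (hU : t0 + r ≤ U.card) :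
    (gnp n q).real {ω | ¬ ComH (graphOf ω) U r L} ≤ Real.exp (r * Real.log (n + 1) + (L - t0 * q ^ r / 2)) := by
  have := gnp_prob n q h0 h1
  set B : Finset (Fin n) → Fin n → Finset (Sym2 (Fin n)) := fun P u => P.image (fun y => s(y, u)) with hB
  have hsub : {ω | ¬ ComH (graphOf ω) U r L} ⊆ ⋃ P ∈ (Finset.univ : Finset (Fin n)).powersetCard r,
      {ω : Sym2 (Fin n) → Bool | ((U \ P).filter (fun u => ∀ e ∈ B P u, ω e = true)).card < L} := by
    intro ω hω
    simp only [Set.mem_ofPred_eq] at hω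
    unfold ComH at hω
    push Not at hω
    obtain ⟨P, hP, hlt⟩ := hω
    simp only [Set.mem_iUnion]
    refine ⟨P, by simp [hP], lt_of_le_of_lt (Finset.card_le_card ?_) hlt⟩
    intro u hu
    simp only [Finset.mem_filter, Finset.mem_sdiff] at hu ⊢
    refine ⟨hu.1.1, fun y hy => ?_⟩
    rw [adj_iff]
    exact ⟨fun h => hu.1.2 (h ▸ hy), hu.2 _ (Finset.mem_image.2 ⟨y, hy, rfl⟩)⟩
  refine (measureReal_mono hsub (measure_ne_top _ _)).trans ((measureReal_biUnion_finset_le _ _).trans ?_)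
  rw [Real.exp_add]
  refine (Finset.sum_le_card_nsmul _ _ (Real.exp (L - t0 * q ^ r / 2)) ?_).trans ?_
  · intro P hP
    obtain ⟨_, hP⟩ := Finset.mem_powersetCard.1 hP
    refine (lower_tail n q h0 h1 (U \ P) (B P) r ?_ ?_ L).trans (Real.exp_le_exp.2 ?_)
    · intro u _
      rw [hB, ← hP]
      exact Finset.card_image_of_injective _ (fun y y' h => Sym2.congr_left.1 h)
    · intro u hu u' hu' hne
      rw [Finset.disjoint_left]
      intro e he he'
      obtain ⟨y, hy, rfl⟩ := Finset.mem_image.1 he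
      obtain ⟨y', hy', h⟩ := Finset.mem_image.1 he'
      rcases Sym2.eq_iff.1 h with ⟨_, h⟩ | ⟨h, h'⟩
      · exact hne h.symm
      · exact (Finset.mem_sdiff.1 hu).2 (h ▸ hy')
    · have h2 := Finset.le_card_sdiff P U
      have h3 : (t0:ℝ) ≤ (U \ P).card := by exact_mod_cast (by omega : t0 ≤ (U \ P).card)
      have : (t0:ℝ) * q ^ r ≤ (U \ P).card * q ^ r := by gcongr
      linarith
  · rw [nsmul_eq_mul]
    gcongr
    exact card_powersetCard_le n r

theorem ex_fail (n : ℕ) (q : ℝ) (h0 : 0 ≤ q) (h1 : q ≤ 1) (m : ℕ) :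
    (gnp n q).real {ω | ¬ ExH (graphOf ω) m} ≤ Real.exp (m * Real.log (n + 1) + (m * Real.log (n + 1) + (1 - m * m * q / 2))) := by
  have := gnp_prob n q h0 h1
  set S := (Finset.univ : Finset (Fin n)).powersetCard m with hS
  set T := (S ×ˢ S).filter (fun z => Disjoint z.1 z.2) with hT
  have hsub : {ω | ¬ ExH (graphOf ω) m} ⊆ ⋃ z ∈ T,
      {ω : Sym2 (Fin n) → Bool | ((z.1 ×ˢ z.2).filter (fun w => ∀ e ∈ ({s(w.1, w.2)} : Finset (Sym2 (Fin n))), ω e = true)).card < 1} := by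
    intro ω hω
    simp only [Set.mem_ofPred_eq] at hω
    unfold ExH at hω
    push Not at hω
    obtain ⟨X, X', hX, hX', hd, hno⟩ := hω
    simp only [Set.mem_iUnion]
    refine ⟨(X, X'), by simp [hT, hS, hX, hX', hd], ?_⟩
    simp only [Set.mem_ofPred_eq, Nat.lt_one_iff, Finset.card_eq_zero, Finset.filter_eq_empty_iff, Finset.mem_singleton, forall_eq]
    rintro ⟨x, x'⟩ hx hω
    obtain ⟨hx, hx'⟩ := Finset.mem_product.1 hx
    exact hno x hx x' hx' ((adj_iff _ _ _).2 ⟨fun h => Finset.disjoint_left.1 hd hx (by dsimp at h hx'; rw [h]; exact hx'), hω⟩)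
  refine (measureReal_mono hsub (measure_ne_top _ _)).trans ((measureReal_biUnion_finset_le _ _).trans ?_)
  rw [Real.exp_add, Real.exp_add]
  refine (Finset.sum_le_card_nsmul _ _ (Real.exp (1 - m * m * q / 2)) ?_).trans ?_
  · rintro ⟨X, X'⟩ hz
    obtain ⟨hz, hd⟩ := Finset.mem_filter.1 hz
    obtain ⟨hX, hX'⟩ := Finset.mem_product.1 hz
    obtain ⟨_, hX⟩ := Finset.mem_powersetCard.1 hX
    obtain ⟨_, hX'⟩ := Finset.mem_powersetCard.1 hX'
    dsimp only at hX hX' hd ⊢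
    refine (lower_tail n q h0 h1 (X ×ˢ X') (fun w => {s(w.1, w.2)}) 1 (by simp) ?_ 1).trans (Real.exp_le_exp.2 ?_)
    · rintro ⟨x, x'⟩ hx ⟨y, y'⟩ hy hne
      obtain ⟨hx, hx'⟩ := Finset.mem_product.1 hx
      obtain ⟨hy, hy'⟩ := Finset.mem_product.1 hy
      rw [Finset.disjoint_singleton]
      intro h
      rcases Sym2.eq_iff.1 h with ⟨h, h'⟩ | ⟨h, h'⟩
      · dsimp at h h'; exact hne (by rw [h, h'])
      · dsimp at h h' hx hy'
        exact Finset.disjoint_left.1 hd hx (h ▸ hy')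
    · rw [Finset.card_product, hX, hX']
      push_cast
      rw [pow_one]
  · rw [nsmul_eq_mul, ← mul_assoc]
    gcongr
    refine (Nat.cast_le.2 (Finset.card_filter_le _ _)).trans ?_
    rw [Finset.card_product]
    push_cast
    gcongr <;> exact card_powersetCard_le n m

theorem small_sets_card (n y : ℕ) :
    (((Finset.univ : Finset (Finset (Fin n))).filter (fun Y => Y.card ≤ y)).card : ℝ) ≤ Real.exp (y * Real.log (n + 1)) := by
  have h1 : ((Finset.univ : Finset (Finset (Fin n))).filter (fun Y => Y.card ≤ y)) ⊆
      (Finset.range (y + 1)).biUnion (fun j => (Finset.univ : Finset (Fin n)).powersetCard j) := by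
    intro Y hY
    have := (Finset.mem_filter.1 hY).2
    simp; omega
  have h2 : ((Finset.univ : Finset (Finset (Fin n))).filter (fun Y => Y.card ≤ y)).card ≤ (n + 1) ^ y := by
    refine (Finset.card_le_card h1).trans (Finset.card_biUnion_le.trans ?_)
    rw [add_pow]
    refine Finset.sum_le_sum (fun j hj => ?_)
    rw [Finset.card_powersetCard, Finset.card_univ, Fintype.card_fin, one_pow, mul_one]
    calc n.choose j ≤ n ^ j * 1 := by rw [mul_one]; exact Nat.choose_le_pow n j
      _ ≤ _ := Nat.mul_le_mul_left _ (by
        have := Finset.mem_range.1 hj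
        simp only [Nat.cast_id]
        exact Nat.succ_le_of_lt (Nat.choose_pos (by omega : j ≤ y)))
  rw [Real.exp_nat_mul, Real.exp_log (by positivity)]
  exact_mod_cast h2

theorem pairs_edges (ω : Sym2 (Fin n) → Bool) (X Y : Finset (Fin n)) (ℓ : ℕ)
    (h : ∀ x ∈ X, ℓ ≤ (Y.filter (fun y => (graphOf ω).Adj x y)).card) :
    ℓ * X.card ≤ 2 * (((X ×ˢ Y).image (fun z => s(z.1, z.2))).filter (fun e => ω e = true)).card := by
  set E := ((X ×ˢ Y).image (fun z => s(z.1, z.2))).filter (fun e => ω e = true) with hE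
  set D := X.sigma (fun x => Y.filter (fun y => (graphOf ω).Adj x y)) with hD
  have h1 : ℓ * X.card ≤ D.card := by
    rw [hD, Finset.card_sigma, mul_comm, ← smul_eq_mul]
    exact Finset.card_nsmul_le_sum _ _ _ h
  refine h1.trans ?_
  refine (Finset.card_le_mul_card_image_of_maps_to (f := fun z : (Σ _ : Fin n, Fin n) => s(z.1, z.2)) (t := E) ?_ 2 ?_)
  · rintro ⟨x, y⟩ hz
    obtain ⟨hx, hy⟩ := Finset.mem_sigma.1 hz
    obtain ⟨hy, hadj⟩ := Finset.mem_filter.1 hy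
    exact Finset.mem_filter.2 ⟨Finset.mem_image.2 ⟨(x, y), Finset.mem_product.2 ⟨hx, hy⟩, rfl⟩, ((adj_iff _ _ _).1 hadj).2⟩
  · intro e he
    induction e using Sym2.ind with
    | _ u v =>
    have : (D.filter (fun z : (Σ _ : Fin n, Fin n) => s(z.1, z.2) = s(u, v))) ⊆ {⟨u, v⟩, ⟨v, u⟩} := by
      rintro ⟨x, y⟩ hz
      have := (Finset.mem_filter.1 hz).2
      rcases Sym2.eq_iff.1 this with ⟨h, h'⟩ | ⟨h, h'⟩ <;> dsimp at h h' <;> subst h <;> subst h' <;> simp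
    exact (Finset.card_le_card this).trans Finset.card_le_two

theorem exp_fail (n : ℕ) (q : ℝ) (h0 : 0 ≤ q) (h1 : q ≤ 1) (m ν ℓ : ℕ) (M D : ℝ) (hM : q * m ≤ M) (hD : 0 ≤ D)
    (hDle : D + (1 + ν) * Real.log (n + 1) + 2 * M * ν ≤ ℓ / 2) :
    (gnp n q).real {ω | ¬ ExpH (graphOf ω) m ν ℓ} ≤ Real.exp (Real.log (n + 1) - D) := by
  have := gnp_prob n q h0 h1
  have hsub : {ω | ¬ ExpH (graphOf ω) m ν ℓ} ⊆ ⋃ x ∈ (Finset.Icc 1 n).filter (fun x => x ≤ m),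
      ⋃ X ∈ (Finset.univ : Finset (Fin n)).powersetCard x,
      ⋃ Y ∈ (Finset.univ : Finset (Finset (Fin n))).filter (fun Y => Y.card ≤ ν * x),
      {ω : Sym2 (Fin n) → Bool | ((ℓ * x : ℕ) : ℝ) / 2 ≤ (((X ×ˢ Y).image (fun z => s(z.1, z.2))).filter (fun e => ω e = true)).card} := by
    intro ω hω
    simp only [Set.mem_ofPred_eq] at hω
    unfold ExpH at hω
    push Not at hω
    obtain ⟨X, Y, hne, hX, hY, hno⟩ := hω
    simp only [Set.mem_iUnion]
    refine ⟨X.card, ?_, X, by simp, Y, by simpa using hY, ?_⟩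
    · have := Finset.card_pos.2 hne
      have h3 := Finset.card_le_univ X
      rw [Fintype.card_fin] at h3
      simp only [Finset.mem_filter, Finset.mem_Icc]; omega
    · have h4 := pairs_edges ω X Y ℓ hno
      have h5 : ((ℓ * X.card : ℕ) : ℝ) ≤ 2 * (((X ×ˢ Y).image (fun z => s(z.1, z.2))).filter (fun e => ω e = true)).card := by
        exact_mod_cast h4
      simp only [Set.mem_ofPred_eq]
      linarith
  refine (measureReal_mono hsub (measure_ne_top _ _)).trans ((measureReal_biUnion_finset_le _ _).trans ?_)
  have hinner : ∀ x ∈ (Finset.Icc 1 n).filter (fun x => x ≤ m), (gnp n q).real (⋃ X ∈ (Finset.univ : Finset (Fin n)).powersetCard x,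
      ⋃ Y ∈ (Finset.univ : Finset (Finset (Fin n))).filter (fun Y => Y.card ≤ ν * x),
      {ω : Sym2 (Fin n) → Bool | ((ℓ * x : ℕ) : ℝ) / 2 ≤ (((X ×ˢ Y).image (fun z => s(z.1, z.2))).filter (fun e => ω e = true)).card})
      ≤ Real.exp (-D) := by
    intro x hx
    simp only [Finset.mem_filter, Finset.mem_Icc] at hx
    obtain ⟨⟨hx1, hxn⟩, hxm⟩ := hx
    refine (measureReal_biUnion_finset_le _ _).trans ?_
    refine (Finset.sum_le_card_nsmul _ _ (Real.exp ((ν * x : ℕ) * Real.log (n + 1)) * Real.exp (2 * M * ν * x - ℓ * x / 2)) ?_).trans ?_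
    · intro X hX
      obtain ⟨_, hX⟩ := Finset.mem_powersetCard.1 hX
      refine (measureReal_biUnion_finset_le _ _).trans ?_
      refine (Finset.sum_le_card_nsmul _ _ (Real.exp (2 * M * ν * x - ℓ * x / 2)) ?_).trans ?_
      · intro Y hY
        have hY := (Finset.mem_filter.1 hY).2
        refine (upper_tail n q h0 h1 _ _).trans (Real.exp_le_exp.2 ?_)
        have h3 : (((X ×ˢ Y).image (fun z => s(z.1, z.2))).card : ℝ) ≤ x * (ν * x) := by
          have : ((X ×ˢ Y).image (fun z => s(z.1, z.2))).card ≤ x * (ν * x) := by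
            refine Finset.card_image_le.trans ?_
            rw [Finset.card_product, hX]
            exact Nat.mul_le_mul_left _ hY
          exact_mod_cast this
        have h4 : 2 * q * (((X ×ˢ Y).image (fun z => s(z.1, z.2))).card : ℝ) ≤ 2 * M * ν * x := by
          calc _ ≤ 2 * q * (x * (ν * x) : ℝ) := by gcongr
            _ ≤ 2 * q * (m * (ν * x) : ℝ) := by gcongr
            _ = 2 * (q * m) * (ν * x) := by ring
            _ ≤ 2 * M * (ν * x) := by gcongr
            _ = _ := by ring
        push_cast
        linarith
      · rw [nsmul_eq_mul]
        gcongr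
        exact small_sets_card n (ν * x)
    · rw [nsmul_eq_mul]
      refine (mul_le_mul_of_nonneg_right (card_powersetCard_le n x) (by positivity)).trans ?_
      rw [← Real.exp_add, ← Real.exp_add]
      refine Real.exp_le_exp.2 ?_
      have hx1' : (1:ℝ) ≤ x := by exact_mod_cast hx1
      push_cast
      have := mul_le_mul_of_nonneg_right hDle (by linarith : (0:ℝ) ≤ x)
      nlinarith
  refine (Finset.sum_le_card_nsmul _ _ _ hinner).trans ?_
  rw [nsmul_eq_mul, sub_eq_add_neg, Real.exp_add, Real.exp_log (by positivity)]
  gcongr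
  have h3 : ((Finset.Icc 1 n).filter (fun x => x ≤ m)).card ≤ n + 1 := by
    refine (Finset.card_filter_le _ _).trans ?_
    simp
  exact_mod_cast h3

end PartNine

section PartTen
open Classical MeasureTheory

theorem bad_bound (n r : ℕ) (hr : 2 ≤ r) (q : ℝ) (h0 : 0 < q) (h1 : q ≤ 1) (U : Finset (Fin n)) (x : ℝ) (ν m : ℕ)
    (hU : (n:ℝ) / 2 ≤ U.card) (hn : 4 * r ≤ n) (hνx : (ν:ℝ) ≤ x) (hxν : x ≤ 2 * ν)
    (hx : 8 * (8 * (r:ℝ) ^ 3 + r + 2) ≤ x) (hlog : 32 * Real.log (n + 1) ≤ x)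
    (hnq : x ^ 4 ≤ n * q ^ r) (hm1 : ν ≤ q * m) (hm2 : q * m ≤ ν + 1) :
    (gnp n q).real {ω | ¬ (ComH (graphOf ω) U r (r * (r * (4 * r * (2 * ν ^ 3))) + ν ^ 3) ∧ ExH (graphOf ω) m ∧
      ExpH (graphOf ω) m ν (ν ^ 3))} ≤ 5 / (n + 1) := by
  have := gnp_prob n q h0.le h1
  have hr' : (2:ℝ) ≤ r := by exact_mod_cast hr
  have hr3 : (8:ℝ) ≤ r ^ 3 := by
    have := pow_le_pow_left₀ (by norm_num) hr' 3; linarith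
  set lam := Real.log ((n:ℝ) + 1) with hlam
  have hlam0 : 0 ≤ lam := Real.log_nonneg (by have : (0:ℝ) ≤ n := Nat.cast_nonneg n
                                              linarith)
  have hx16 : (500:ℝ) ≤ x := by nlinarith
  have hν16 : (250:ℝ) ≤ ν := by linarith
  have hlν : 16 * lam ≤ ν := by linarith
  have hexp : Real.exp (-lam) = 1 / (n + 1) := by
    rw [Real.exp_neg, hlam, Real.exp_log (by positivity), inv_eq_one_div]
  have hmpos : (0:ℝ) < m := by
    by_contra h
    have : (m:ℝ) = 0 := le_antisymm (not_lt.1 h) (Nat.cast_nonneg m)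
    rw [this] at hm1; linarith
  have hm1' : (1:ℝ) ≤ m := by
    have : 0 < m := by exact_mod_cast hmpos
    exact_mod_cast this
  have hc : (gnp n q).real {ω | ¬ ComH (graphOf ω) U r (r * (r * (4 * r * (2 * ν ^ 3))) + ν ^ 3)} ≤ 1 / (n + 1) := by
    have hUn : n ≤ 2 * U.card := by
      have : (n:ℝ) ≤ 2 * U.card := by linarith
      exact_mod_cast this
    refine (com_fail n q h0.le h1 U r _ (U.card - r) (by omega)).trans ?_
    rw [← hexp]
    refine Real.exp_le_exp.2 ?_
    have ht0 : (n:ℝ) / 4 ≤ ((U.card - r : ℕ) : ℝ) := by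
      have : n ≤ 4 * (U.card - r) := by omega
      have : (n:ℝ) ≤ 4 * ((U.card - r : ℕ) : ℝ) := by exact_mod_cast this
      linarith
    have h3 : x ^ 4 / 4 ≤ ((U.card - r : ℕ) : ℝ) * q ^ r := by
      have : (n:ℝ) / 4 * q ^ r ≤ ((U.card - r : ℕ) : ℝ) * q ^ r := by gcongr
      linarith
    have hν3 : (ν:ℝ) ^ 3 ≤ x ^ 3 := by gcongr
    have h4 : (((r * (r * (4 * r * (2 * ν ^ 3))) + ν ^ 3 : ℕ)) : ℝ) = (8 * r ^ 3 + 1) * ν ^ 3 := by push_cast; ring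
    rw [h4, ← hlam]
    have h5 : (8 * (r:ℝ) ^ 3 + 1) * ν ^ 3 ≤ (8 * r ^ 3 + 1) * x ^ 3 := by gcongr
    have h6 : lam ≤ x ^ 3 := by
      have h7 : x ≤ x ^ 3 := by
        have : x * 1 ≤ x * x ^ 2 := by gcongr; nlinarith
        calc x ≤ x * x ^ 2 := by linarith
          _ = x ^ 3 := by ring
      linarith
    have h7 : (r + 1) * lam ≤ (r + 1) * x ^ 3 := by gcongr
    have h8 : 8 * (8 * (r:ℝ) ^ 3 + r + 2) * x ^ 3 ≤ x * x ^ 3 := by gcongr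
    have h9 : x * x ^ 3 = x ^ 4 := by ring
    linarith
  have he : (gnp n q).real {ω | ¬ ExH (graphOf ω) m} ≤ 3 * (1 / (n + 1)) := by
    refine (ex_fail n q h0.le h1 m).trans ?_
    rw [← hexp]
    have h3 : Real.exp (1 + -lam) ≤ 3 * Real.exp (-lam) := by
      rw [Real.exp_add]
      have := Real.exp_one_lt_d9
      gcongr; linarith
    refine le_trans (Real.exp_le_exp.2 ?_) h3
    rw [← hlam]
    have h4 : (m:ℝ) * ν ≤ m * (q * m) := by gcongr
    have h5 : (m:ℝ) * (16 * lam) ≤ m * ν := by gcongr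
    have h6 : 1 * lam ≤ m * lam := by gcongr
    nlinarith
  have hp : (gnp n q).real {ω | ¬ ExpH (graphOf ω) m ν (ν ^ 3)} ≤ 1 / (n + 1) := by
    refine (exp_fail n q h0.le h1 m ν (ν ^ 3) (ν + 1) (2 * lam) hm2 (by linarith) ?_).trans ?_
    · rw [← hlam]
      push_cast
      have h3 : (ν:ℝ) * lam ≤ ν * ν := by gcongr; linarith
      have h4 : (ν:ℝ) ^ 2 * 250 ≤ ν ^ 2 * ν := by gcongr
      have h5 : (ν:ℝ) ^ 3 = ν ^ 2 * ν := by ring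
      nlinarith
    · rw [← hexp, ← hlam]
      refine Real.exp_le_exp.2 (by linarith)
  have hsub : {ω | ¬ (ComH (graphOf ω) U r (r * (r * (4 * r * (2 * ν ^ 3))) + ν ^ 3) ∧ ExH (graphOf ω) m ∧
      ExpH (graphOf ω) m ν (ν ^ 3))} ⊆ {ω | ¬ ComH (graphOf ω) U r (r * (r * (4 * r * (2 * ν ^ 3))) + ν ^ 3)} ∪
      ({ω | ¬ ExH (graphOf ω) m} ∪ {ω | ¬ ExpH (graphOf ω) m ν (ν ^ 3)}) := by
    intro ω hω
    simp only [Set.mem_union, Set.mem_ofPred_eq] at hω ⊢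
    tauto
  refine (measureReal_mono hsub (measure_ne_top _ _)).trans ((measureReal_union_le _ _).trans ?_)
  have h3 := measureReal_union_le (μ := gnp n q) {ω | ¬ ExH (graphOf ω) m} {ω | ¬ ExpH (graphOf ω) m ν (ν ^ 3)}
  have h4 : (5:ℝ) / (n + 1) = 5 * (1 / (n + 1)) := by ring
  rw [h4]
  linarith

theorem one_n (r : ℕ) (hr : 2 ≤ r) (ε K : ℝ) (hε : 0 < ε) (hK : 0 < K) (n : ℕ) (W : Finset (Fin n))
    (hW : (W.card : ℝ) ≤ (n : ℝ) / 2) (q : ℝ) (h1 : q ≤ 1) (hq : q ≥ (n : ℝ) ^ (-(1 : ℝ) / r + ε))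
    (J : ℕ) (hJ : J = ⌈20 / ε⌉₊) (hn : 4 * r ≤ n)
    (hx : 8 * (8 * (r:ℝ) ^ 3 + r + 2) ≤ (n:ℝ) ^ (ε / 10)) (hlog : 32 * Real.log (n + 1) ≤ (n:ℝ) ^ (ε / 10))
    (hx2 : K + 100 * (J + 10) ≤ (n:ℝ) ^ (ε / 10)) :
    (gnp n q).real {ω | ∀ c : Sym2 (Fin n) → Fin r,
        ∀ Q : Finset (Fin n), Q ⊆ W → ((Q.card : ℝ) ≤ K / q) →
          ∃ 𝒞 : Finset (Set (Fin n)),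
            (𝒞.card : ℝ) ≤ 400 * r ^ 4 * Real.log (4 * r ^ 2) ∧
            (∀ S ∈ 𝒞, ∃ i, IsMonoCycle (graphOf ω) c i S) ∧
            (Q : Set (Fin n)) ⊆ ⋃₀ (𝒞 : Set (Set (Fin n)))}ᶜ ≤ 5 / (n + 1) := by
  have hr' : (2:ℝ) ≤ r := by exact_mod_cast hr
  have hn1 : (1:ℝ) ≤ n := by exact_mod_cast (by omega : 1 ≤ n)
  have hn0 : (0:ℝ) < n := by linarith
  have h0 : 0 < q := lt_of_lt_of_le (Real.rpow_pos_of_pos hn0 _) hq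
  have := gnp_prob n q h0.le h1
  set x := (n:ℝ) ^ (ε / 10) with hxdef
  have hJ0 : (0:ℝ) ≤ J := Nat.cast_nonneg J
  have hx1000 : K + 1000 ≤ x := by linarith
  set ν := ⌊x⌋₊ with hν
  have hνx : (ν:ℝ) ≤ x := Nat.floor_le (by linarith)
  have hxν1 : x < ν + 1 := Nat.lt_floor_add_one x
  have hxν : x ≤ 2 * ν := by linarith
  set m := ⌈(ν:ℝ) / q⌉₊ with hm
  have hm1 : (ν:ℝ) ≤ q * m := by
    have := Nat.le_ceil ((ν:ℝ) / q)
    rw [div_le_iff₀ h0] at this; linarith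
  have hmlt : (m:ℝ) < ν / q + 1 := Nat.ceil_lt_add_one (by positivity)
  have hm2 : q * m ≤ ν + 1 := by
    have : q * m ≤ q * (ν / q + 1) := by gcongr
    have h3 : q * (ν / q + 1) = ν + q := by field_simp
    linarith
  have hnq : x ^ 4 ≤ n * q ^ r := by
    have h3 : ((n : ℝ) ^ (-(1 : ℝ) / r + ε)) ^ r ≤ q ^ r := pow_le_pow_left₀ (Real.rpow_nonneg hn0.le _) hq r
    have h4 : (n:ℝ) * ((n : ℝ) ^ (-(1 : ℝ) / r + ε)) ^ r = (n:ℝ) ^ (r * ε) := by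
      rw [← Real.rpow_natCast, ← Real.rpow_mul hn0.le]
      nth_rewrite 1 [← Real.rpow_one (n:ℝ)]
      rw [← Real.rpow_add hn0]
      congr 1
      field_simp
      ring
    have h5 : x ^ 4 = (n:ℝ) ^ (ε / 10 * 4) := by
      rw [hxdef, ← Real.rpow_natCast, ← Real.rpow_mul hn0.le]; norm_num
    rw [h5]
    calc (n:ℝ) ^ (ε / 10 * 4) ≤ (n:ℝ) ^ (r * ε) := Real.rpow_le_rpow_of_exponent_le hn1 (by nlinarith)
      _ = _ := h4.symm
      _ ≤ _ := by gcongr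
  have hnν : (n:ℝ) ≤ (ν:ℝ) ^ J := by
    have h3 : x ≤ (ν:ℝ) ^ 2 := by nlinarith
    have h4 : (n:ℝ) = x ^ (10 / ε) := by
      rw [hxdef, ← Real.rpow_mul hn0.le]
      have : ε / 10 * (10 / ε) = 1 := by field_simp
      rw [this, Real.rpow_one]
    calc (n:ℝ) = x ^ (10 / ε) := h4
      _ ≤ ((ν:ℝ) ^ 2) ^ (10 / ε) := Real.rpow_le_rpow (by linarith) h3 (by positivity)
      _ = (ν:ℝ) ^ (20 / ε) := by
          rw [← Real.rpow_natCast, ← Real.rpow_mul (Nat.cast_nonneg _)]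
          congr 1; push_cast; ring
      _ ≤ (ν:ℝ) ^ (J:ℝ) := Real.rpow_le_rpow_of_exponent_le (by linarith) (by rw [hJ]; exact Nat.le_ceil _)
      _ = _ := Real.rpow_natCast _ _
  have hqn : 1 / q ≤ n := by
    rw [div_le_iff₀ h0]
    have h3 : (n:ℝ) ^ (-1:ℝ) ≤ q := by
      refine le_trans (Real.rpow_le_rpow_of_exponent_le hn1 ?_) hq
      have : (1:ℝ) / r ≤ 1 := by rw [div_le_one (by linarith)]; linarith
      have h5 : -(1:ℝ) / r = - (1 / r) := by ring
      rw [h5]; linarith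
    rw [Real.rpow_neg_one] at h3
    calc (1:ℝ) = n * (n:ℝ)⁻¹ := by field_simp
      _ ≤ n * q := by gcongr
  have hνJ : 2 * m ≤ ν ^ (J + 3) := by
    have h3 : (m:ℝ) ≤ ν * n + 1 := by
      have : (ν:ℝ) / q = ν * (1 / q) := by ring
      have h4 : (ν:ℝ) * (1 / q) ≤ ν * n := by gcongr
      linarith
    have h4 : (2:ℝ) * m ≤ ν ^ (J + 3) := by
      have h5 : (1:ℝ) ≤ ν * n := by nlinarith
      calc (2:ℝ) * m ≤ 4 * (ν * n) := by linarith
        _ ≤ (ν ^ 2) * (ν * n) := by gcongr; nlinarith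
        _ ≤ (ν ^ 2) * (ν * ν ^ J) := by gcongr
        _ = _ := by ring
    exact_mod_cast h4
  set U : Finset (Fin n) := Finset.univ.filter (fun u => u ∉ W) with hU
  have hUc : (n:ℝ) / 2 ≤ U.card := by
    have h3 : U.card + W.card = n := by
      have := Finset.card_filter_add_card_filter_not (s := (Finset.univ : Finset (Fin n))) (fun u => u ∉ W)
      have h4 : (Finset.univ.filter (fun u => ¬ u ∉ W)) = W := by ext; simp
      rw [h4, Finset.card_univ, Fintype.card_fin] at this
      exact this
    have h4 : (U.card : ℝ) + W.card = n := by exact_mod_cast h3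
    linarith
  have hbad := bad_bound n r hr q h0 h1 U x ν m hUc hn hνx hxν hx hlog hnq hm1 hm2
  refine le_trans (measureReal_mono ?_ (measure_ne_top _ _)) hbad
  intro ω hω
  simp only [Set.mem_compl_iff, Set.mem_ofPred_eq] at hω ⊢
  intro hgood
  apply hω
  obtain ⟨hcom, hex, hexp⟩ := hgood
  intro c Q hQ hQc
  obtain ⟨s, hs1, hs2⟩ := count_bound r hr
  have hν1000 : 999 ≤ ν := by
    have : (999:ℝ) ≤ ν := by linarith
    exact_mod_cast this
  have hmpos : 0 < m := Nat.ceil_pos.2 (by positivity)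
  obtain ⟨C, hC1, hC2, hC3⟩ := det_main (graphOf ω) c (by omega) U Q (fun u hu => by simp [hU, hQ hu]) (ν ^ 3) (2 * (J + 3) + 3) m ν (J + 3) s
    hcom (by positivity) hmpos (by omega) hexp hex le_rfl hνJ (by
      have h3 : (4 * (2 * (J + 3) + 3) + 1 : ℝ) ≤ ν := by linarith
      exact_mod_cast h3) (by
      have h3 : (Q.card : ℝ) ≤ m := by
        refine hQc.trans (le_trans ?_ (Nat.le_ceil _))
        gcongr
        linarith
      exact_mod_cast h3) hs1
  exact ⟨C, (Nat.cast_le.2 hC1).trans hs2, hC2, hC3⟩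

end PartTen

/-- Let `r ≥ 2` and `ε, K > 0` be constants, `W = W(n) ⊆ [n]` fixed sets of at
most `n/2` vertices, and `p = p(n) ≥ n^{-1/r+ε}`. Then w.h.p. in every `r`-coloring of the edges
of `G ~ G(n,p)`, every subset `Q ⊆ W` of size at most `K/p` can be covered by
`400 r^4 log(4r^2)` monochromatic cycles. -/
theorem stmt2 (r : ℕ) (hr : 2 ≤ r) (ε K : ℝ) (hε : 0 < ε) (hK : 0 < K)
    (W : (n : ℕ) → Finset (Fin n)) (hW : ∀ n : ℕ, ((W n).card : ℝ) ≤ (n : ℝ) / 2)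
    (p : ℕ → ℝ) (hp0 : ∀ n, 0 ≤ p n) (hp1 : ∀ n, p n ≤ 1)
    (hplb : ∀ n : ℕ, p n ≥ (n : ℝ) ^ (-(1 : ℝ) / r + ε)) :
    Tendsto (fun n => gnp n (p n)
      {ω | ∀ c : Sym2 (Fin n) → Fin r,
        ∀ Q : Finset (Fin n), Q ⊆ W n → ((Q.card : ℝ) ≤ K / p n) →
          ∃ 𝒞 : Finset (Set (Fin n)),
            (𝒞.card : ℝ) ≤ 400 * r ^ 4 * Real.log (4 * r ^ 2) ∧
            (∀ S ∈ 𝒞, ∃ i, IsMonoCycle (graphOf ω) c i S) ∧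
            (Q : Set (Fin n)) ⊆ ⋃₀ (𝒞 : Set (Set (Fin n)))})
      atTop (nhds 1) := by
  set J := ⌈20 / ε⌉₊ with hJ
  have htop : Tendsto (fun n : ℕ => (n:ℝ) ^ (ε / 10)) atTop atTop :=
    (tendsto_rpow_atTop (by positivity)).comp tendsto_natCast_atTop_atTop
  have hlogo : ∀ᶠ n : ℕ in atTop, Real.log (n:ℝ) ≤ (1/64) * (n:ℝ) ^ (ε / 10) := by
    have h := (isLittleO_log_rpow_atTop (show 0 < ε / 10 by positivity)).bound (show (0:ℝ) < 1/64 by norm_num)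
    filter_upwards [tendsto_natCast_atTop_atTop.eventually h, eventually_ge_atTop 1] with n hn hn1
    rw [Real.norm_of_nonneg (Real.rpow_nonneg (Nat.cast_nonneg n) _)] at hn
    exact (le_abs_self _).trans hn
  have hev : ∀ᶠ n : ℕ in atTop, ENNReal.ofReal (1 - 5 / ((n:ℝ) + 1)) ≤ gnp n (p n)
      {ω | ∀ c : Sym2 (Fin n) → Fin r,
        ∀ Q : Finset (Fin n), Q ⊆ W n → ((Q.card : ℝ) ≤ K / p n) →
          ∃ 𝒞 : Finset (Set (Fin n)),
            (𝒞.card : ℝ) ≤ 400 * r ^ 4 * Real.log (4 * r ^ 2) ∧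
            (∀ S ∈ 𝒞, ∃ i, IsMonoCycle (graphOf ω) c i S) ∧
            (Q : Set (Fin n)) ⊆ ⋃₀ (𝒞 : Set (Set (Fin n)))} := by
    filter_upwards [htop.eventually_ge_atTop (8 * (8 * (r:ℝ) ^ 3 + r + 2)), htop.eventually_ge_atTop (K + 100 * (J + 10)),
      htop.eventually_ge_atTop 64, hlogo, eventually_ge_atTop (4 * r)] with n h1 h2 h3 h4 h5
    have hprob := gnp_prob n (p n) (hp0 n) (hp1 n)
    have hlog : 32 * Real.log (n + 1) ≤ (n:ℝ) ^ (ε / 10) := by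
      have hn1 : (1:ℝ) ≤ n := by exact_mod_cast (by omega : 1 ≤ n)
      have h6 : Real.log ((n:ℝ) + 1) ≤ Real.log (2 * n) := Real.log_le_log (by linarith) (by linarith)
      rw [Real.log_mul (by norm_num) (by linarith)] at h6
      have := Real.log_two_lt_d9
      linarith
    have hb := one_n r hr ε K hε hK n (W n) (hW n) (p n) (hp1 n) (hplb n) J hJ h5 h1 hlog h2
    rw [probReal_compl_eq_one_sub (Set.toFinite _).measurableSet] at hb
    rw [ENNReal.ofReal_le_iff_le_toReal (measure_ne_top _ _)]
    rw [Measure.real] at hb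
    linarith
  refine tendsto_of_tendsto_of_tendsto_of_le_of_le' (g := fun n : ℕ => ENNReal.ofReal (1 - 5 / ((n:ℝ) + 1))) (h := fun _ => 1) ?_ tendsto_const_nhds hev ?_
  · have h1 : Tendsto (fun n : ℕ => 1 - 5 / ((n:ℝ) + 1)) atTop (nhds (1 - 0)) := by
      refine tendsto_const_nhds.sub (Tendsto.div_atTop tendsto_const_nhds ?_)
      exact tendsto_atTop_add_const_right _ _ tendsto_natCast_atTop_atTop
    have := ENNReal.tendsto_ofReal h1
    simpa using this
  · filter_upwards with n
    have hprob := gnp_prob n (p n) (hp0 n) (hp1 n)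
    exact prob_le_one
end

section
/- Let m ≥ 1 and k ≥ 2 be integers, and assume that G is a graph whose complement is K_k^m-free. Then G contains a collection of at most k − 1 vertex-disjoint cycles covering all but at most 2k^2·m + k^3 vertices. -/
/-- `G` contains a (not necessarily induced) copy of `H`. -/
def ContainsCopy {α β : Type*} (H : SimpleGraph α) (G : SimpleGraph β) : Prop :=
  ∃ f : α → β, Function.Injective f ∧ ∀ a b, H.Adj a b → G.Adj (f a) (f b)

/-- `S` is the vertex set of a cycle in `G`; single vertices and single edges count as
degenerate cycles. -/
def IsCycleSet {V : Type*} (G : SimpleGraph V) (S : Set V) : Prop :=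
  (∃ v, S = {v}) ∨
  (∃ u v, G.Adj u v ∧ S = {u, v}) ∨
  (∃ (v : V) (w : G.Walk v v), w.IsCycle ∧ S = {x | x ∈ w.support})

open Classical in
/-- iterated version of containing `K_k^m` in the complement, inside `W` -/
def HasK {V : Type*} (G : SimpleGraph V) (m : ℕ) : ℕ → Finset V → Prop
  | 0, _ => True
  | k + 1, W => ∃ A ⊆ W, m ≤ A.card ∧ ∃ W' ⊆ W \ A,
      (∀ a ∈ A, ∀ b ∈ W', ¬ G.Adj a b) ∧ HasK G m k W'

theorem HasK.mono {V : Type*} {G : SimpleGraph V} {m : ℕ} {k : ℕ} {W W' : Finset V}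
    (h : HasK G m k W) (hW : W ⊆ W') : HasK G m k W' := by
  classical
  cases k with
  | zero => trivial
  | succ k =>
    obtain ⟨A, hA, hm, X, hX, hh⟩ := h
    refine ⟨A, hA.trans hW, hm, X, fun x hx => ?_, hh⟩
    have := hX hx
    simp only [Finset.mem_sdiff] at this ⊢
    exact ⟨hW this.1, this.2⟩

theorem HasK.exists_fun {V : Type*} {G : SimpleGraph V} {m : ℕ} : ∀ (k : ℕ) (W : Finset V),
    HasK G m k W → ∃ f : Fin k → Fin m → V, (∀ i a, f i a ∈ W) ∧
      (∀ i, Function.Injective (f i)) ∧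
      ∀ i j, i ≠ j → ∀ a b, f i a ≠ f j b ∧ ¬ G.Adj (f i a) (f j b) := by
  classical
  intro k
  induction k with
  | zero => intro W _; exact ⟨fun i => i.elim0, fun i => i.elim0, fun i => i.elim0, fun i => i.elim0⟩
  | succ k ih =>
    rintro W ⟨A, hA, hm, X, hX, hadj, hK⟩
    obtain ⟨f, hf, hinj, hne⟩ := ih X hK
    obtain ⟨g⟩ : Nonempty (Fin m ↪ A) := by
      apply Function.Embedding.nonempty_of_card_le
      simpa using hm
    have key : ∀ a j b, ((g a : V) ≠ f j b) ∧ ¬ G.Adj (g a : V) (f j b) := by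
      intro a j b
      refine ⟨fun h => ?_, hadj _ (g a).2 _ (hf j b)⟩
      have := hX (hf j b)
      rw [← h] at this
      simp at this
    refine ⟨Fin.cons (fun a => (g a : V)) f, ?_, ?_, ?_⟩
    · intro i
      refine Fin.cases ?_ ?_ i
      · intro a; exact hA (g a).2
      · intro i a; exact (Finset.mem_sdiff.1 (hX (hf i a))).1
    · intro i
      refine Fin.cases ?_ ?_ i
      · intro a b h
        apply g.injective
        exact Subtype.ext h
      · intro i; exact hinj i
    · intro i j
      refine Fin.cases ?_ ?_ i
      · refine Fin.cases ?_ ?_ j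
        · intro h; exact absurd rfl h
        · intro j _ a b; exact key a j b
      · intro i
        refine Fin.cases ?_ ?_ j
        · intro _ a b
          have := key b i a
          exact ⟨fun h => this.1 h.symm, fun h => this.2 h.symm⟩
        · intro j h a b
          exact hne i j (fun e => h (by rw [e])) a b

theorem walk_of_list {V : Type*} {G : SimpleGraph V} (y : V) : ∀ (l : List V) (x : V),
    (x :: (l ++ [y])).IsChain G.Adj → ∃ w : G.Walk x y, w.support = x :: (l ++ [y]) := by
  intro l
  induction l with
  | nil =>
    intro x h
    have h : G.Adj x y := by simpa using h
    exact ⟨h.toWalk, by simp⟩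
  | cons z l ih =>
    intro x h
    rw [List.cons_append, List.isChain_cons_cons] at h
    obtain ⟨w, hw⟩ := ih z h.2
    exact ⟨SimpleGraph.Walk.cons h.1 w, by simp [hw]⟩

theorem dfs {V : Type*} [Fintype V] (G : SimpleGraph V) (W : Finset V) (n : ℕ) (hn : n ≤ W.card) :
    ∃ (P : List V) (D : Finset V), D.card = n ∧ D ⊆ W ∧ P.IsChain G.Adj ∧ P.Nodup ∧
      (∀ x ∈ P, x ∈ W ∧ x ∉ D) ∧ ∀ d ∈ D, ∀ u ∈ W, u ∉ D → u ∉ P → ¬ G.Adj d u := by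
  classical
  induction n with
  | zero => exact ⟨[], ∅, by simp⟩
  | succ n ih =>
    let Q : ℕ → Prop := fun t => ∃ (P : List V) (D : Finset V), P.length = t ∧
      D.card = n ∧ D ⊆ W ∧ P.IsChain G.Adj ∧ P.Nodup ∧
      (∀ x ∈ P, x ∈ W ∧ x ∉ D) ∧ ∀ d ∈ D, ∀ u ∈ W, u ∉ D → u ∉ P → ¬ G.Adj d u
    have hbd : ∀ t, Q t → t ≤ Fintype.card V := by
      rintro t ⟨P, D, rfl, _, _, _, h, _⟩
      exact h.length_le_card
    obtain ⟨P0, D0, h0⟩ := ih (by omega)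
    have hex : Q (Nat.findGreatest Q (Fintype.card V)) :=
      Nat.findGreatest_spec (m := P0.length) (hbd _ ⟨P0, D0, rfl, h0⟩) ⟨P0, D0, rfl, h0⟩
    obtain ⟨P, D, hlen, hD, hDW, hch, hnd, hP, hno⟩ := hex
    have hmax : ¬ Q (P.length + 1) := by
      intro h
      have := Nat.le_findGreatest (hbd _ h) h
      omega
    have hext : ∀ u ∈ W, u ∉ D → u ∉ P → ¬ (u :: P).IsChain G.Adj := by
      intro u hu huD huP hc
      refine hmax ⟨u :: P, D, by simp, hD, hDW, hc, by simp [huP, hnd], ?_, ?_⟩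
      · intro x hx
        rcases List.mem_cons.1 hx with rfl | hx
        · exact ⟨hu, huD⟩
        · exact hP x hx
      · intro d hd v hv hvD hvP
        exact hno d hd v hv hvD (fun h => hvP (List.mem_cons_of_mem _ h))
    cases P with
    | nil =>
      obtain ⟨u, hu, huD⟩ := Finset.exists_mem_notMem_of_card_lt_card (s := D) (t := W) (by omega)
      exact absurd (by simp) (hext u hu huD (by simp))
    | cons v P =>
      have hv := hP v (by simp)
      refine ⟨P, insert v D, by rw [Finset.card_insert_of_notMem hv.2, hD], ?_, ?_, ?_, ?_, ?_⟩
      · exact Finset.insert_subset hv.1 hDW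
      · exact hch.tail
      · exact (List.nodup_cons.1 hnd).2
      · intro x hx
        have := hP x (by simp [hx])
        refine ⟨this.1, ?_⟩
        rw [Finset.mem_insert, not_or]
        refine ⟨?_, this.2⟩
        rintro rfl
        exact (List.nodup_cons.1 hnd).1 hx
      · intro d hd u hu huD huP
        rw [Finset.mem_insert, not_or] at huD
        have huP' : u ∉ v :: P := by simp [huD.1, huP]
        rcases Finset.mem_insert.1 hd with rfl | hd
        · intro h
          exact hext u hu huD.2 huP' (List.isChain_cons_cons.2 ⟨h.symm, hch⟩)
        · exact hno d hd u hu huD.2 huP'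

/-- A connected piece. -/
theorem conn {V : Type*} (G : SimpleGraph V) (m : ℕ) (hm : 1 ≤ m) :
    ∀ (k : ℕ) (D : Finset V), 2 * k * m ≤ D.card → ¬ HasK G m k D →
    ∃ S ⊆ D, m ≤ S.card ∧ (∀ a ∈ S, ∀ b ∈ D, b ∉ S → ¬ G.Adj a b) ∧
      ∀ a ∈ S, ∀ b ∈ S, ∃ p : G.Walk a b, p.IsPath ∧ ∀ v ∈ p.support, v ∈ S := by
  classical
  intro k
  induction k with
  | zero => intro D _ h; exact absurd trivial h
  | succ k ih =>
    intro D hcard hK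
    let Q : Finset V → Prop := fun X => X ⊆ D ∧ m ≤ X.card ∧ ∀ a ∈ X, ∀ b ∈ D, b ∉ X → ¬ G.Adj a b
    have hQ : ∃ n, ∃ X, Q X ∧ X.card = n :=
      ⟨_, D, ⟨subset_rfl, by nlinarith, fun a _ b hb hb' => absurd hb hb'⟩, rfl⟩
    obtain ⟨X, ⟨hXD, hXm, hXc⟩, hXn⟩ := Nat.find_spec hQ
    have hmin : ∀ Y, Q Y → X.card ≤ Y.card := by
      intro Y hY
      rw [hXn]
      exact Nat.find_min' hQ ⟨Y, hY, rfl⟩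
    obtain ⟨x, hx⟩ : X.Nonempty := Finset.card_pos.1 (by omega)
    let H : SimpleGraph V :=
      { Adj := fun a b => G.Adj a b ∧ a ∈ D ∧ b ∈ D
        symm := ⟨fun a b h => ⟨h.1.symm, h.2.2, h.2.1⟩⟩
        loopless := ⟨fun a h => G.loopless.irrefl a h.1⟩ }
    have hHG : H ≤ G := fun a b h => h.1
    let S : Finset V := D.filter (fun v => H.Reachable x v)
    have hScl : ∀ a ∈ S, ∀ b ∈ D, b ∉ S → ¬ G.Adj a b := by
      intro a ha b hb hbS hab
      have ha' := Finset.mem_filter.1 ha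
      apply hbS
      refine Finset.mem_filter.2 ⟨hb, ha'.2.trans ?_⟩
      exact SimpleGraph.Adj.reachable (G := H) ⟨hab, ha'.1, hb⟩
    have hreach : ∀ v, H.Reachable x v → v ∈ D := by
      rintro v ⟨w⟩
      cases w.reverse with
      | nil => exact hXD hx
      | cons h _ => exact h.2.1
    by_cases hS : m ≤ S.card
    · refine ⟨S, Finset.filter_subset _ _, hS, hScl, ?_⟩
      intro a ha b hb
      have ha' := Finset.mem_filter.1 ha
      have hb' := Finset.mem_filter.1 hb
      obtain ⟨p, hp⟩ := (ha'.2.symm.trans hb'.2).exists_isPath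
      refine ⟨p.mapLe hHG, by simpa using hp, ?_⟩
      intro v hv
      have hv : v ∈ p.support := by simpa using hv
      have hr : H.Reachable x v := ha'.2.trans ⟨p.takeUntil v hv⟩
      exact Finset.mem_filter.2 ⟨hreach v hr, hr⟩
    · have hxS : x ∈ S := Finset.mem_filter.2 ⟨hXD hx, SimpleGraph.Reachable.refl _⟩
      have hX2 : X.card < 2 * m := by
        by_contra hcon
        have h1 : m ≤ (X \ S).card := by
          have := Finset.le_card_sdiff S X
          omega
        have h2 := hmin (X \ S) ⟨Finset.sdiff_subset.trans hXD, h1, by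
          intro a ha b hb hbn hab
          rw [Finset.mem_sdiff] at ha hbn
          by_cases hbX : b ∈ X
          · have hbS : b ∈ S := by by_contra h; exact hbn ⟨hbX, h⟩
            exact hScl b hbS a (hXD ha.1) ha.2 hab.symm
          · exact hXc a ha.1 b hb hbX hab⟩
        have h3 : (X \ S).card < X.card := by
          apply Finset.card_lt_card
          refine Finset.ssubset_iff_subset_ne.2 ⟨Finset.sdiff_subset, fun h => ?_⟩
          rw [← h] at hx
          exact (Finset.mem_sdiff.1 hx).2 hxS
        omega
      have hc : 2 * k * m ≤ (D \ X).card := by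
        rw [Finset.card_sdiff_of_subset hXD]
        have : 2 * (k + 1) * m = 2 * k * m + 2 * m := by ring
        omega
      obtain ⟨T, hT, hTm, hTc, hTp⟩ := ih (D \ X) hc (fun h => hK
        ⟨X, hXD, hXm, D \ X, subset_rfl, fun a ha b hb =>
          hXc a ha b (Finset.mem_sdiff.1 hb).1 (Finset.mem_sdiff.1 hb).2, h⟩)
      refine ⟨T, hT.trans Finset.sdiff_subset, hTm, ?_, hTp⟩
      intro a ha b hb hbT hab
      have haX := Finset.mem_sdiff.1 (hT ha)
      by_cases hbX : b ∈ X
      · exact hXc b hbX a haX.1 haX.2 hab.symm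
      · exact hTc a ha b (Finset.mem_sdiff.2 ⟨hb, hbX⟩) hbT hab

/-- The cycle through `S` and all its neighbours on `P` (or nothing). -/
theorem cyc {V : Type*} (G : SimpleGraph V) (S : Finset V) (P : List V) (hch : P.IsChain G.Adj)
    (hnd : P.Nodup) (hdis : ∀ x ∈ P, x ∉ S)
    (hS : ∀ a ∈ S, ∀ b ∈ S, ∃ p : G.Walk a b, p.IsPath ∧ ∀ v ∈ p.support, v ∈ S) :
    ∃ C : Set V, (C = ∅ ∨ IsCycleSet G C) ∧ (∀ x ∈ C, x ∈ S ∨ x ∈ P) ∧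
      ∀ s ∈ S, ∀ x ∈ P, G.Adj s x → x ∈ C := by
  classical
  let Q : ℕ → Prop := fun n => ∃ P1 L P2 : List V, P = P1 ++ L ++ P2 ∧ L.length = n ∧
    ∀ s ∈ S, ∀ x ∈ P, G.Adj s x → x ∈ L
  have hQ : ∃ n, Q n := ⟨_, [], P, [], by simp, rfl, fun s _ x hx _ => hx⟩
  obtain ⟨P1, L, P2, hP, hn, hL⟩ := Nat.find_spec hQ
  have hmin : ∀ t, Q t → L.length ≤ t := fun t ht => by rw [hn]; exact Nat.find_min' hQ ht
  have hLP : ∀ x ∈ L, x ∈ P := fun x hx => by rw [hP]; simp [hx]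
  have hLnd : L.Nodup := by
    rw [hP] at hnd
    exact (hnd.of_append_left).of_append_right
  have hLch : L.IsChain G.Adj := by
    rw [hP] at hch
    exact (hch.left_of_append).right_of_append
  have hfirst : ∀ x L', L = x :: L' → ∃ s ∈ S, G.Adj s x := by
    rintro x L' rfl
    by_contra! hcon
    have := hmin L'.length ⟨P1 ++ [x], L', P2, by simp [hP], rfl, fun s hs y hy hsy => by
      rcases List.mem_cons.1 (hL s hs y hy hsy) with rfl | h
      · exact absurd hsy (hcon s hs)
      · exact h⟩
    simp at this
  have hlast : ∀ y L', L = L' ++ [y] → ∃ s ∈ S, G.Adj s y := by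
    rintro y L' rfl
    by_contra! hcon
    have := hmin L'.length ⟨P1, L', y :: P2, by simp [hP], rfl, fun s hs x hx hsx => by
      rcases List.mem_append.1 (hL s hs x hx hsx) with h | h
      · exact h
      · rw [List.mem_singleton] at h
        subst h
        exact absurd hsx (hcon s hs)⟩
    simp at this
  rcases L with _ | ⟨x, L'⟩
  · exact ⟨∅, Or.inl rfl, by simp, fun s hs x hx h => by simpa using hL s hs x hx h⟩
  rcases List.eq_nil_or_concat L' with rfl | ⟨M, y, rfl⟩
  · refine ⟨{x}, Or.inr (Or.inl ⟨x, rfl⟩), ?_, fun s hs z hz h => by simpa using hL s hs z hz h⟩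
    rintro z rfl
    exact Or.inr (hLP _ (by simp))
  simp only [List.concat_eq_append] at *
  obtain ⟨s, hs, hsx⟩ := hfirst x _ rfl
  obtain ⟨t, ht, hty⟩ := hlast y (x :: M) (by simp)
  obtain ⟨w, hw⟩ := walk_of_list y M x hLch
  obtain ⟨q, hq, hqS⟩ := hS t ht s hs
  let r : G.Walk x s := w.append (SimpleGraph.Walk.cons hty.symm q)
  have hr : r.support = (x :: (M ++ [y])) ++ q.support := by
    simp [r, SimpleGraph.Walk.support_append, hw]
  have hrp : r.IsPath := by
    rw [SimpleGraph.Walk.isPath_def, hr, List.nodup_append]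
    refine ⟨hLnd, hq.support_nodup, ?_⟩
    rintro a ha b hb rfl
    exact hdis a (hLP a ha) (hqS a hb)
  refine ⟨{v | v ∈ (SimpleGraph.Walk.cons hsx r).support}, Or.inr (Or.inr (Or.inr
    ⟨s, SimpleGraph.Walk.cons hsx r, ?_, rfl⟩)), ?_, ?_⟩
  · rw [SimpleGraph.Walk.cons_isCycle_iff]
    refine ⟨hrp, fun h => ?_⟩
    have h1 := hrp.length_eq_one_of_mem_edges (by rwa [Sym2.eq_swap])
    have h2 := r.length_support
    have h3 := q.length_support
    rw [hr, h1] at h2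
    simp at h2
    omega
  · intro z hz
    simp only [Set.mem_ofPred_eq, SimpleGraph.Walk.support_cons, hr, List.mem_cons] at hz
    rcases hz with rfl | hz
    · exact Or.inl hs
    · rcases List.mem_append.1 hz with h | h
      · exact Or.inr (hLP z h)
      · exact Or.inl (hqS z h)
  · intro a ha z hz h
    have := hL a ha z hz h
    simp only [Set.mem_ofPred_eq, SimpleGraph.Walk.support_cons, hr]
    exact List.mem_cons_of_mem _ (List.mem_append_left _ this)

theorem main_ind {V : Type*} [Fintype V] (G : SimpleGraph V) (m : ℕ) (hm : 1 ≤ m) :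
    ∀ (k : ℕ) (W : Finset V), ¬ HasK G m (k + 1) W →
    ∃ 𝒞 : Finset (Set V), 𝒞.card ≤ k ∧ (𝒞 : Set (Set V)).Pairwise Disjoint ∧
      (∀ S ∈ 𝒞, IsCycleSet G S) ∧ (∀ S ∈ 𝒞, S ⊆ W) ∧
      ((W : Set V) \ ⋃₀ (𝒞 : Set (Set V))).ncard ≤ 2 * (k + 1) ^ 2 * m := by
  classical
  intro k
  induction k with
  | zero =>
    intro W hW
    refine ⟨∅, by simp, by simp, by simp, by simp, ?_⟩
    have : ¬ m ≤ W.card := fun h => hW ⟨W, subset_rfl, h, ∅, by simp, by simp, trivial⟩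
    simp [Set.ncard_coe_finset]
    omega
  | succ k ih =>
    intro W hW
    by_cases hc : 2 * (k + 1 + 1) * m ≤ W.card
    · obtain ⟨P, D, hD, hDW, hch, hnd, hP, hno⟩ := dfs G W _ hc
      obtain ⟨S, hSD, hSm, hScl, hSp⟩ := conn G m hm (k + 1 + 1) D hD.ge
        (fun h => hW (h.mono hDW))
      obtain ⟨C, hC, hCsub, hCn⟩ := cyc G S P hch hnd (fun x hx h => (hP x hx).2 (hSD h)) hSp
      have hCW : C ⊆ W := by
        intro x hx
        rcases hCsub x hx with h | h
        · exact hDW (hSD h)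
        · exact (hP x h).1
      let W' : Finset V := W.filter (fun v => v ∉ D ∧ v ∉ C)
      have hW' : ¬ HasK G m (k + 1) W' := by
        intro h
        refine hW ⟨S, hSD.trans hDW, hSm, W', ?_, ?_, h⟩
        · intro v hv
          have := Finset.mem_filter.1 hv
          exact Finset.mem_sdiff.2 ⟨this.1, fun h => this.2.1 (hSD h)⟩
        · intro a ha b hb hab
          have hb' := Finset.mem_filter.1 hb
          by_cases hbP : b ∈ P
          · exact hb'.2.2 (hCn a ha b hbP hab)
          · exact hno a (hSD ha) b hb'.1 hb'.2.1 hbP hab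
      obtain ⟨F, hF1, hF2, hF3, hF4, hF5⟩ := ih W' hW'
      have hdisj : ∀ T ∈ F, Disjoint C T := by
        intro T hT
        rw [Set.disjoint_left]
        intro x hx hxT
        exact (Finset.mem_filter.1 (hF4 T hT hxT)).2.2 hx
      have hW'W : ∀ T ∈ F, T ⊆ (W : Set V) := fun T hT =>
        (hF4 T hT).trans (fun x hx => (Finset.mem_filter.1 hx).1)
      have hcount : ∀ U : Set V, (∀ x, x ∈ C → x ∈ U) → (∀ x, x ∈ ⋃₀ (F : Set (Set V)) → x ∈ U) →
          ((W : Set V) \ U).ncard ≤ 2 * (k + 1 + 1) ^ 2 * m := by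
        intro U h1 h2
        have hsub : (W : Set V) \ U ⊆ (D : Set V) ∪ ((W' : Set V) \ ⋃₀ (F : Set (Set V))) := by
          rintro x ⟨hx, hxU⟩
          by_cases hxD : x ∈ D
          · exact Or.inl hxD
          · exact Or.inr ⟨Finset.mem_coe.2 (Finset.mem_filter.2
              ⟨hx, hxD, fun h => hxU (h1 x h)⟩), fun h => hxU (h2 x h)⟩
        have h3 := Set.ncard_le_ncard hsub (Set.toFinite _)
        have h4 := Set.ncard_union_le (D : Set V) ((W' : Set V) \ ⋃₀ (F : Set (Set V)))
        rw [Set.ncard_coe_finset, hD] at h4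
        nlinarith
      rcases hC with rfl | hC
      · exact ⟨F, by omega, hF2, hF3, hW'W, hcount _ (by simp) (fun x hx => hx)⟩
      · refine ⟨insert C F, (Finset.card_insert_le _ _).trans (by omega), ?_, ?_, ?_, ?_⟩
        · rw [Finset.coe_insert]
          refine hF2.insert ?_
          intro T hT _
          exact ⟨hdisj T hT, (hdisj T hT).symm⟩
        · intro T hT
          rcases Finset.mem_insert.1 hT with rfl | h
          · exact hC
          · exact hF3 T h
        · intro T hT
          rcases Finset.mem_insert.1 hT with rfl | h
          · exact hCW
          · exact hW'W T h
        · refine hcount _ ?_ ?_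
          · intro x hx; exact ⟨C, by simp, hx⟩
          · rintro x ⟨T, hT, hx⟩; exact ⟨T, by simpa using Or.inr hT, hx⟩
    · refine ⟨∅, by simp, by simp, by simp, by simp, ?_⟩
      simp only [Finset.coe_empty, Set.sUnion_empty, Set.sdiff_empty, Set.ncard_coe_finset]
      nlinarith [Nat.zero_le (k * m), Nat.zero_le (k * k * m)]

/-- Let `m ≥ 1`, `k ≥ 2` be integers, and let `G` be a graph whose complement
contains no copy of the complete `k`-partite graph `K_k^m` with parts of size `m`. Then `G`
contains at most `k - 1` vertex-disjoint cycles covering all but at most `2k^2 m + k^3`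
vertices. -/
theorem stmt3 {V : Type*} [Fintype V] (m k : ℕ) (hm : 1 ≤ m) (hk : 2 ≤ k)
    (G : SimpleGraph V)
    (hfree : ¬ ContainsCopy (SimpleGraph.completeMultipartiteGraph fun _ : Fin k => Fin m) Gᶜ) :
    ∃ 𝒞 : Finset (Set V),
      𝒞.card ≤ k - 1 ∧
      (𝒞 : Set (Set V)).Pairwise Disjoint ∧
      (∀ S ∈ 𝒞, IsCycleSet G S) ∧
      (Set.univ \ ⋃₀ (𝒞 : Set (Set V))).ncard ≤ 2 * k ^ 2 * m + k ^ 3 := by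
  classical
  obtain ⟨k, rfl⟩ : ∃ j, k = j + 1 := ⟨k - 1, by omega⟩
  have hK : ¬ HasK G m (k + 1) Finset.univ := by
    intro h
    obtain ⟨f, -, hinj, hne⟩ := HasK.exists_fun _ _ h
    refine hfree ⟨fun p => f p.1 p.2, ?_, ?_⟩
    · rintro ⟨i, a⟩ ⟨j, b⟩ hab
      by_cases hij : i = j
      · subst hij
        have : a = b := hinj i hab
        rw [this]
      · exact absurd hab (hne i j hij a b).1
    · rintro ⟨i, a⟩ ⟨j, b⟩ hab
      have hij : i ≠ j := by simpa using hab
      rw [SimpleGraph.compl_adj]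
      exact hne i j hij a b
  obtain ⟨F, h1, h2, h3, -, h5⟩ := main_ind G m hm k Finset.univ hK
  refine ⟨F, by simpa using h1, h2, h3, ?_⟩
  rw [Finset.coe_univ] at h5
  exact h5.trans (Nat.le_add_right _ _)
end

section
/- Let G be a graph with at least m ≥ 1 vertices. Then there is a (possibly empty) path P in G and subsets D, U ⊆ V(G) such that |D| = m, there are no edges of G between D and U, and V(G) is the disjoint union of D, V(P) and U. -/
lemma dfs_aux {V : Type*} [Fintype V] [DecidableEq V] (m : ℕ) (G : SimpleGraph V)
    (hcard : m ≤ Fintype.card V) (n : ℕ) : ∀ (D U : Finset V) (l : List V),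
    l.Nodup → l.IsChain G.Adj → D.card ≤ m → (∀ d ∈ D, ∀ u ∈ U, ¬ G.Adj d u) →
    (∀ x ∈ D, x ∉ l) → (∀ x ∈ D, x ∉ U) → (∀ x ∈ l, x ∉ U) → (∀ x, x ∈ D ∨ x ∈ l ∨ x ∈ U) →
    2 * U.card + l.length ≤ n →
    ∃ (D U : Finset V) (l : List V), 
    l.Nodup ∧ l.IsChain G.Adj ∧ D.card = m ∧ (∀ d ∈ D, ∀ u ∈ U, ¬ G.Adj d u) ∧
    (∀ x ∈ D, x ∉ l) ∧ (∀ x ∈ D, x ∉ U) ∧ (∀ x ∈ l, x ∉ U) ∧ (∀ x, x ∈ D ∨ x ∈ l ∨ x ∈ U) := by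
  induction n using Nat.strong_induction_on with
  | _ n ih =>
  intro D U l h1 h2 h3 h4 h5 h6 h7 h8 hn
  by_cases hD : D.card = m
  · exact ⟨D, U, l, h1, h2, hD, h4, h5, h6, h7, h8⟩
  have push : ∀ u ∈ U, (u :: l).IsChain G.Adj → ∃ (D U : Finset V) (l : List V), 
    l.Nodup ∧ l.IsChain G.Adj ∧ D.card = m ∧ (∀ d ∈ D, ∀ u ∈ U, ¬ G.Adj d u) ∧
    (∀ x ∈ D, x ∉ l) ∧ (∀ x ∈ D, x ∉ U) ∧ (∀ x ∈ l, x ∉ U) ∧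
    (∀ x, x ∈ D ∨ x ∈ l ∨ x ∈ U) := by
    intro u hu hc
    have hcard' := Finset.card_erase_add_one hu
    refine ih (n - 1) (by grind) D (U.erase u) (u :: l) ?_ hc h3 ?_ ?_ ?_ ?_ ?_ ?_
    · grind
    · intro d hd v hv
      exact h4 d hd v (Finset.mem_of_mem_erase hv)
    · grind
    · grind
    · grind
    · grind
    · simp only [List.length_cons]; omega
  cases l with
  | nil =>
    have hU : U.Nonempty := by
      by_contra hU
      have : D = Finset.univ := by ext x; grind
      rw [this, Finset.card_univ] at h3 hD
      omega
    obtain ⟨u, hu⟩ := hU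
    exact push u hu (by simp)
  | cons a t =>
    by_cases ha : ∃ u ∈ U, G.Adj a u
    · obtain ⟨u, hu, hau⟩ := ha
      exact push u hu (List.isChain_cons_cons.2 ⟨hau.symm, h2⟩)
    · push Not at ha
      simp only [List.length_cons] at hn
      refine ih (n - 1) (by omega) (insert a D) U t ?_ h2.tail ?_ ?_ ?_ ?_ ?_ ?_ ?_
      · grind
      · have := Finset.card_insert_le a D
        omega
      · intro d hd u hu
        rcases Finset.mem_insert.1 hd with rfl | hd
        · exact ha u hu
        · exact h4 d hd u hu
      · grind
      · grind
      · grind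
      · grind
      · omega

lemma walk_of_chain {V : Type*} (G : SimpleGraph V) (t : List V) : ∀ a,
    (a :: t).IsChain G.Adj → ∃ (b : V) (w : G.Walk a b), w.support = a :: t := by
  induction t with
  | nil => intro a _; exact ⟨a, .nil, rfl⟩
  | cons c t ih =>
    intro a h
    rw [List.isChain_cons_cons] at h
    obtain ⟨b, w, hw⟩ := ih c h.2
    exact ⟨b, .cons h.1 w, by simp [hw]⟩


/-- Let `G` be a graph with at least `m ≥ 1` vertices. Then there is a
(possibly empty) path `P` in `G` and subsets `D, U ⊆ V(G)` such that `|D| = m`, there are no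
edges of `G` between `D` and `U`, and `V(G)` is the disjoint union of `D`, `V(P)` and `U`. -/
theorem stmt4 {V : Type*} [Fintype V] (m : ℕ) (hm : 1 ≤ m) (G : SimpleGraph V)
    (hcard : m ≤ Fintype.card V) :
    ∃ D P U : Set V,
      (P = ∅ ∨ ∃ (a b : V) (w : G.Walk a b), w.IsPath ∧ P = {x | x ∈ w.support}) ∧
      D.ncard = m ∧
      (∀ d ∈ D, ∀ u ∈ U, ¬ G.Adj d u) ∧
      Disjoint D P ∧ Disjoint D U ∧ Disjoint P U ∧
      D ∪ P ∪ U = Set.univ := by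

  classical
  obtain ⟨D, U, l, h1, h2, h3, h4, h5, h6, h7, h8⟩ :=
    dfs_aux m G hcard (2 * Fintype.card V) ∅ Finset.univ [] (by simp) (by simp) (by simp)
      (by simp) (by simp) (by simp) (by simp) (by simp) (by simp)
  refine ⟨D, {x | x ∈ l}, U, ?_, by simpa using h3, by simpa using h4, ?_, ?_, ?_, ?_⟩
  · cases l with
    | nil => left; simp
    | cons a t =>
      right
      obtain ⟨b, w, hw⟩ := walk_of_chain G t a h2
      exact ⟨a, b, w, by rw [SimpleGraph.Walk.isPath_def, hw]; exact h1, by rw [hw]⟩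
  · exact Set.disjoint_left.2 fun x hx => h5 x hx
  · exact Set.disjoint_left.2 fun x hx => h6 x hx
  · exact Set.disjoint_left.2 fun x hx => h7 x hx
  · ext x
    have := h8 x
    simp only [Set.mem_union, Set.mem_setOf_eq, Finset.mem_coe, Set.mem_univ, iff_true]
    tauto
end

section
/- Let m ≥ 1 and k ≥ 2 be integers, and let G be a graph whose complement is K_k^m-free. If G contains a Hamiltonian path, then G contains a collection of at most k − 1 vertex-disjoint cycles covering all but at most k·m vertices of G. -/
theorem aux_walk {V : Type*} (G : SimpleGraph V) (p : ℕ → V) (n : ℕ)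
    (hinj : ∀ i j, i < n → j < n → p i = p j → i = j)
    (hadj : ∀ i, i + 1 < n → G.Adj (p i) (p (i + 1))) (i d : ℕ) (h : i + d < n) :
    ∃ w : G.Walk (p i) (p (i + d)), w.IsPath ∧
      (∀ x, x ∈ w.support ↔ ∃ t, i ≤ t ∧ t ≤ i + d ∧ p t = x) ∧
      (∀ e ∈ w.edges, ∃ t, i ≤ t ∧ t < i + d ∧ e = s(p t, p (t + 1))) := by
  induction d with
  | zero =>
    refine ⟨SimpleGraph.Walk.nil, by simp, ?_, by simp⟩
    intro x
    simp only [SimpleGraph.Walk.support_nil, List.mem_singleton]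
    constructor
    · rintro rfl
      exact ⟨i, le_rfl, by omega, rfl⟩
    · rintro ⟨t, h1, h2, rfl⟩
      congr 1
      omega
  | succ d ih =>
    obtain ⟨w, hp, hs, he⟩ := ih (by omega)
    refine ⟨w.concat (hadj (i + d) (by omega)), ?_, ?_, ?_⟩
    · apply hp.concat
      intro hmem
      obtain ⟨t, h1, h2, h3⟩ := (hs _).1 hmem
      have := hinj _ _ (by omega) (by omega) h3
      omega
    · intro x
      rw [SimpleGraph.Walk.support_concat]
      simp only [List.concat_eq_append, List.mem_append, List.mem_singleton, hs]
      constructor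
      · rintro (⟨t, h1, h2, h3⟩ | rfl)
        · exact ⟨t, h1, by omega, h3⟩
        · exact ⟨i + d + 1, by omega, by omega, rfl⟩
      · rintro ⟨t, h1, h2, h3⟩
        by_cases ht : t ≤ i + d
        · exact Or.inl ⟨t, h1, ht, h3⟩
        · right
          have : t = i + d + 1 := by omega
          rw [← h3, this, Nat.add_assoc]
    · intro e hmem
      rw [SimpleGraph.Walk.edges_concat] at hmem
      simp only [List.concat_eq_append, List.mem_append, List.mem_singleton] at hmem
      rcases hmem with hmem | rfl
      · obtain ⟨t, h1, h2, h3⟩ := he e hmem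
        exact ⟨t, h1, by omega, h3⟩
      · exact ⟨i + d, by omega, by omega, rfl⟩

theorem aux_cycle {V : Type*} (G : SimpleGraph V) (p : ℕ → V) (n : ℕ)
    (hinj : ∀ i j, i < n → j < n → p i = p j → i = j)
    (hadj : ∀ i, i + 1 < n → G.Adj (p i) (p (i + 1))) (i j : ℕ) (hij : i < j) (hj : j < n)
    (h : G.Adj (p i) (p j)) : IsCycleSet G (p '' Set.Icc i j) := by
  obtain ⟨d, rfl⟩ : ∃ d, j = i + d := ⟨j - i, by omega⟩
  by_cases hd : d = 1
  · subst hd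
    right; left
    refine ⟨p i, p (i + 1), h, ?_⟩
    have : Set.Icc i (i + 1) = {i, i + 1} := by
      ext x
      simp only [Set.mem_Icc, Set.mem_insert_iff, Set.mem_singleton_iff]
      omega
    rw [this, Set.image_pair]
  · right; right
    obtain ⟨w, hp, hs, he⟩ := aux_walk G p n hinj hadj i d hj
    refine ⟨p (i + d), SimpleGraph.Walk.cons h.symm w, ?_, ?_⟩
    · rw [SimpleGraph.Walk.cons_isCycle_iff]
      refine ⟨hp, fun hmem => ?_⟩
      obtain ⟨t, h1, h2, h3⟩ := he _ hmem
      rw [Sym2.eq_iff] at h3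
      rcases h3 with ⟨h3, h4⟩ | ⟨h3, h4⟩
      · have := hinj _ _ (by omega) (by omega) h3
        omega
      · have := hinj _ _ (by omega) (by omega) h3
        have := hinj _ _ (by omega) (by omega) h4
        omega
    · ext x
      simp only [SimpleGraph.Walk.support_cons, List.mem_cons, Set.mem_setOf_eq, hs,
        Set.mem_image, Set.mem_Icc, and_assoc]
      constructor
      · intro hx; exact Or.inr hx
      · rintro (rfl | hx)
        · exact ⟨i + d, by omega, le_rfl, rfl⟩
        · exact hx

theorem aux_main {V : Type*} [Fintype V] [DecidableEq V] (G : SimpleGraph V) (p : ℕ → V) (n m : ℕ)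
    (hm : 1 ≤ m)
    (hinj : ∀ i j, i < n → j < n → p i = p j → i = j)
    (hadj : ∀ i, i + 1 < n → G.Adj (p i) (p (i + 1))) (k : ℕ) : ∀ s : ℕ, 
    (¬ ∃ f : Fin (k + 1) → Fin m → ℕ, (∀ i a, s ≤ f i a ∧ f i a < n) ∧
      (∀ i a j b, f i a = f j b → i = j ∧ a = b) ∧
      (∀ i a j b, i ≠ j → ¬ G.Adj (p (f i a)) (p (f j b)))) → 
    ∃ 𝒞 : Finset (Set V), 𝒞.card ≤ k ∧
      (𝒞 : Set (Set V)).Pairwise Disjoint ∧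
      (∀ S ∈ 𝒞, IsCycleSet G S ∧ S ⊆ p '' Set.Ico s n) ∧
      (p '' Set.Ico s n \ ⋃₀ (𝒞 : Set (Set V))).ncard ≤ (k + 1) * m := by
  have hcard : ∀ a b, (p '' Set.Ico a b).ncard ≤ b - a := by
    intro a b
    refine (Set.ncard_image_le (Set.finite_Ico a b)).trans ?_
    rw [← Finset.coe_Ico, Set.ncard_coe_finset, Nat.card_Ico]
  have triv : ∀ s k, n ≤ s + (k + 1) * m → ∃ 𝒞 : Finset (Set V), 𝒞.card ≤ k ∧
      (𝒞 : Set (Set V)).Pairwise Disjoint ∧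
      (∀ S ∈ 𝒞, IsCycleSet G S ∧ S ⊆ p '' Set.Ico s n) ∧
      (p '' Set.Ico s n \ ⋃₀ (𝒞 : Set (Set V))).ncard ≤ (k + 1) * m := by
    intro s k h
    refine ⟨∅, by simp, by simp, by simp, ?_⟩
    have := hcard s n
    simp only [Finset.coe_empty, Set.sUnion_empty, Set.sdiff_empty]
    omega
  induction k with
  | zero =>
    intro s hf
    apply triv
    by_contra hn
    apply hf
    refine ⟨fun _ a => s + a, fun i a => ⟨Nat.le_add_right _ _, ?_⟩, fun i a j b h => ⟨?_, ?_⟩, ?_⟩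
    · have := a.2
      dsimp only
      omega
    · ext; omega
    · ext; dsimp only at h; omega
    · intro i a j b h
      exact absurd (by ext; omega) h
  | succ k ih =>
    intro s hf
    by_cases hn : n ≤ s + (k + 1 + 1) * m
    · exact triv _ _ hn
    have hn' : s + m < n := by nlinarith
    classical
    -- largest index adjacent to the initial segment
    let P : ℕ → Prop := fun j => s + m ≤ j ∧ j < n ∧ ∃ i, s ≤ i ∧ i < s + m ∧ G.Adj (p i) (p j)
    have hP0 : P (s + m) := by
      refine ⟨le_rfl, hn', s + m - 1, by omega, by omega, ?_⟩
      have := hadj (s + m - 1) (by omega)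
      rwa [show s + m - 1 + 1 = s + m by omega] at this
    obtain ⟨j, hPj, hmax⟩ : ∃ j, P j ∧ ∀ t, P t → t ≤ j := by
      refine ⟨Nat.findGreatest P n, Nat.findGreatest_spec (P := P) hn'.le hP0, ?_⟩
      intro t ht
      exact Nat.le_findGreatest ht.2.1.le ht
    obtain ⟨h1, h2, i, h3, h4, h5⟩ := hPj
    obtain ⟨C, c1, c2, c3, c4⟩ := ih (j + 1) (by
      rintro ⟨f, f1, f2, f3⟩
      apply hf
      have hno : ∀ (a : Fin m) (i : Fin (k + 1)) (b : Fin m), ¬ G.Adj (p (s + a)) (p (f i b)) := by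
        intro a i b hab
        have := hmax (f i b) ⟨by have := f1 i b; omega, (f1 i b).2, s + a, by omega, by omega, hab⟩
        have := f1 i b
        omega
      refine ⟨Fin.cons (fun a => s + a) f, ?_, ?_, ?_⟩
      · intro i a
        refine Fin.cases ?_ (fun i => ?_) i
        · simp only [Fin.cons_zero]; omega
        · simp only [Fin.cons_succ]; have := f1 i a; omega
      · intro i a j' b
        refine Fin.cases ?_ (fun i => ?_) i <;> refine Fin.cases ?_ (fun j' => ?_) j'
        · simp only [Fin.cons_zero]
          intro h
          exact ⟨trivial, by ext; omega⟩
        · simp only [Fin.cons_zero, Fin.cons_succ]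
          intro h
          have := f1 j' b
          omega
        · simp only [Fin.cons_zero, Fin.cons_succ]
          intro h
          have := f1 i a
          omega
        · simp only [Fin.cons_succ]
          intro h
          have := f2 _ _ _ _ h
          exact ⟨by rw [this.1], this.2⟩
      · intro i a j' b
        refine Fin.cases ?_ (fun i => ?_) i <;> refine Fin.cases ?_ (fun j' => ?_) j'
        · intro h; exact absurd rfl h
        · intro _; simpa only [Fin.cons_zero, Fin.cons_succ] using hno a j' b
        · intro _ h
          simp only [Fin.cons_zero, Fin.cons_succ] at h
          exact hno b i a h.symm
        · intro h
          simp only [Fin.cons_succ]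
          exact f3 _ _ _ _ (fun e => h (by rw [e])))
    have hdis : ∀ S ∈ C, Disjoint (p '' Set.Icc i j) S := by
      intro S hS
      refine Set.disjoint_of_subset_right (c3 S hS).2 ?_
      rw [Set.disjoint_left]
      rintro _ ⟨x, hx, rfl⟩ ⟨y, hy, hxy⟩
      simp only [Set.mem_Icc, Set.mem_Ico] at hx hy
      have := hinj _ _ (by omega) (by omega) hxy
      omega
    refine ⟨insert (p '' Set.Icc i j) C, ?_, ?_, ?_, ?_⟩
    · exact (Finset.card_insert_le _ _).trans (by omega)
    · rw [Finset.coe_insert]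
      apply c2.insert
      intro S hS _
      exact ⟨hdis S hS, (hdis S hS).symm⟩
    · intro S hS
      rw [Finset.mem_insert] at hS
      rcases hS with rfl | hS
      · refine ⟨aux_cycle G p n hinj hadj i j (by omega) h2 h5, Set.image_mono ?_⟩
        intro x hx
        simp only [Set.mem_Icc, Set.mem_Ico] at hx ⊢
        omega
      · refine ⟨(c3 S hS).1, (c3 S hS).2.trans (Set.image_mono ?_)⟩
        intro x hx
        simp only [Set.mem_Ico] at hx ⊢
        omega
    · have hsub : p '' Set.Ico s n \ ⋃₀ ((insert (p '' Set.Icc i j) C : Finset (Set V)) : Set (Set V))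
          ⊆ p '' Set.Ico s (s + m) ∪ (p '' Set.Ico (j + 1) n \ ⋃₀ (C : Set (Set V))) := by
        rintro _ ⟨⟨x, hx, rfl⟩, hx2⟩
        rw [Finset.coe_insert, Set.sUnion_insert] at hx2
        simp only [Set.mem_Ico] at hx
        by_cases hxm : x < s + m
        · exact Or.inl ⟨x, ⟨hx.1, hxm⟩, rfl⟩
        · right
          refine ⟨⟨x, ⟨?_, hx.2⟩, rfl⟩, fun h => hx2 (Or.inr h)⟩
          by_contra hxj
          exact hx2 (Or.inl ⟨x, ⟨by omega, by omega⟩, rfl⟩)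
      refine (Set.ncard_le_ncard hsub (Set.toFinite _)).trans ((Set.ncard_union_le _ _).trans ?_)
      have := hcard s (s + m)
      have e : (k + 1 + 1) * m = (k + 1) * m + m := by ring
      omega


/-- Let `m ≥ 1`, `k ≥ 2` be integers, and let `G` be a graph whose complement
is `K_k^m`-free. If `G` contains a Hamiltonian path, then `G` contains at most `k - 1`
vertex-disjoint cycles covering all but at most `k·m` vertices of `G`. -/
theorem stmt5 {V : Type*} [Fintype V] [DecidableEq V] (m k : ℕ) (hm : 1 ≤ m) (hk : 2 ≤ k)
    (G : SimpleGraph V)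
    (hfree : ¬ ContainsCopy (SimpleGraph.completeMultipartiteGraph fun _ : Fin k => Fin m) Gᶜ)
    (hham : ∃ (a b : V) (w : G.Walk a b), w.IsHamiltonian) :
    ∃ 𝒞 : Finset (Set V),
      𝒞.card ≤ k - 1 ∧
      (𝒞 : Set (Set V)).Pairwise Disjoint ∧
      (∀ S ∈ 𝒞, IsCycleSet G S) ∧
      (Set.univ \ ⋃₀ (𝒞 : Set (Set V))).ncard ≤ k * m := by
  obtain ⟨k, rfl⟩ : ∃ l, k = l + 1 := ⟨k - 1, by omega⟩
  obtain ⟨a, b, w, hw⟩ := hham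
  have hinj : ∀ i j, i < w.length + 1 → j < w.length + 1 → w.getVert i = w.getVert j → i = j := by
    intro i j hi hj h
    exact hw.isPath.getVert_injOn (by simp; omega) (by simp; omega) h
  obtain ⟨C, c1, c2, c3, c4⟩ := aux_main G w.getVert (w.length + 1) m hm hinj
    (fun i hi => w.adj_getVert_succ (by omega)) k 0 (by
      rintro ⟨f, f1, f2, f3⟩
      apply hfree
      have hI : ∀ i a j b, w.getVert (f i a) = w.getVert (f j b) → i = j ∧ a = b :=
        fun i a j b h => f2 _ _ _ _ (hinj _ _ (f1 i a).2 (f1 j b).2 h)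
      refine ⟨fun x => w.getVert (f x.1 x.2), ?_, ?_⟩
      · rintro ⟨i, a⟩ ⟨j, b⟩ h
        obtain ⟨rfl, rfl⟩ := hI _ _ _ _ h
        rfl
      · rintro ⟨i, a⟩ ⟨j, b⟩ h
        have hne : i ≠ j := by simpa using h
        rw [SimpleGraph.compl_adj]
        exact ⟨fun e => hne (hI _ _ _ _ e).1, f3 _ _ _ _ hne⟩)
  refine ⟨C, by omega, c2, fun S hS => (c3 S hS).1, ?_⟩
  have hu : w.getVert '' Set.Ico 0 (w.length + 1) = Set.univ := by
    rw [Set.eq_univ_iff_forall]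
    intro x
    obtain ⟨t, h1, h2⟩ := SimpleGraph.Walk.mem_support_iff_exists_getVert.1 (hw.mem_support x)
    exact ⟨t, ⟨by omega, by omega⟩, h1⟩
  rwa [hu] at c4
end

section
/- Let m ≥ 1 and k ≥ 2 be integers, and let G be a graph whose complement is K_k^m-free. Let S_1, …, S_k ⊆ V(G) be disjoint sets of size at least m + k − 1 each. Then for some i ≠ j there are two vertex-disjoint edges of G between S_i and S_j. -/
/-- Let `m ≥ 1`, `k ≥ 2` be integers and let `G` be a graph whose complement is
`K_k^m`-free. Let `S_1, …, S_k ⊆ V(G)` be disjoint sets of size at least `m + k - 1` each. Then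
for some `i ≠ j` there are two vertex-disjoint edges of `G` between `S i` and `S j`. -/
theorem stmt6 {V : Type*} [Fintype V] (m k : ℕ) (hm : 1 ≤ m) (hk : 2 ≤ k)
    (G : SimpleGraph V)
    (hfree : ¬ ContainsCopy (SimpleGraph.completeMultipartiteGraph fun _ : Fin k => Fin m) Gᶜ)
    (S : Fin k → Finset V)
    (hdisj : Pairwise fun i j => Disjoint (S i) (S j))
    (hsize : ∀ i, m + k - 1 ≤ (S i).card) :
    ∃ i j, i ≠ j ∧ ∃ a b a' b', a ∈ S i ∧ a' ∈ S i ∧ b ∈ S j ∧ b' ∈ S j ∧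
      G.Adj a b ∧ G.Adj a' b' ∧ a ≠ a' ∧ a ≠ b' ∧ b ≠ a' ∧ b ≠ b' := by
  classical
  by_contra hcon
  have hne : ∀ i j, i ≠ j → ∀ x ∈ S i, ∀ y ∈ S j, x ≠ y := by
    intro i j hij x hx y hy hxy
    subst hxy
    exact Finset.disjoint_left.mp (hdisj hij) hx hy
  have key : ∀ i j, i ≠ j → ∀ a b a' b', a ∈ S i → a' ∈ S i → b ∈ S j → b' ∈ S j →
      G.Adj a b → G.Adj a' b' → a = a' ∨ b = b' := by
    intro i j hij a b a' b' ha ha' hb hb' h1 h2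
    by_contra hh
    rw [not_or] at hh
    exact hcon ⟨i, j, hij, a, b, a', b', ha, ha', hb, hb', h1, h2, hh.1,
      hne i j hij a ha b' hb', (hne i j hij a' ha' b hb).symm, hh.2⟩
  have i0 : Fin k := ⟨0, by omega⟩
  have hS0 : (S i0).Nonempty := by
    rw [← Finset.card_pos]
    have := hsize i0
    omega
  obtain ⟨v0, -⟩ := hS0
  have cover : ∀ i j, ∃ c, i ≠ j → ∀ a ∈ S i, ∀ b ∈ S j, G.Adj a b → a = c ∨ b = c := by
    intro i j
    by_cases hij : i = j
    · exact ⟨v0, fun h => absurd hij h⟩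
    by_contra hc
    push Not at hc
    obtain ⟨-, a, ha, b, hb, hab, -, -⟩ := hc v0
    obtain ⟨-, a1, ha1, b1, hb1, hab1, h1, h1'⟩ := hc a
    obtain ⟨-, a2, ha2, b2, hb2, hab2, h2, h2'⟩ := hc b
    have e1 := key i j hij a b a1 b1 ha ha1 hb hb1 hab hab1
    have e2 := key i j hij a b a2 b2 ha ha2 hb hb2 hab hab2
    have e3 := key i j hij a1 b1 a2 b2 ha1 ha2 hb1 hb2 hab1 hab2
    grind
  choose c hc using cover
  let d : Fin k → Fin k → V := fun i j => if i < j then c i j else c j i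
  have hd : ∀ i j, i ≠ j → d i j = d j i := by
    intro i j hij
    rcases lt_or_gt_of_ne hij with h | h <;> simp [d, h, h.not_gt]
  have hdc : ∀ i j, i ≠ j → ∀ a ∈ S i, ∀ b ∈ S j, G.Adj a b → a = d i j ∨ b = d i j := by
    intro i j hij a ha b hb hab
    by_cases h : i < j
    · simp only [d, h, if_true]
      exact hc i j hij a ha b hb hab
    · simp only [d, h, if_false]
      exact (hc j i hij.symm b hb a ha hab.symm).symm
  let T : Fin k → Finset V := fun i => S i \ ((Finset.univ.erase i).image (d i))
  have hT : ∀ i, m ≤ (T i).card := by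
    intro i
    have h1 : ((Finset.univ.erase i).image (d i)).card ≤ k - 1 := by
      refine Finset.card_image_le.trans ?_
      simp
    have h2 := Finset.le_card_sdiff ((Finset.univ.erase i).image (d i)) (S i)
    have h3 := hsize i
    change m ≤ (S i \ ((Finset.univ.erase i).image (d i))).card
    omega
  have hemb : ∀ i, ∃ f : Fin m → V, Function.Injective f ∧ ∀ x, f x ∈ T i := by
    intro i
    refine ⟨fun x => ((T i).equivFin.symm (Fin.castLE (hT i) x) : V), ?_, fun x => by simp⟩
    intro x y hxy
    simpa using hxy
  choose f hf hfT using hemb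
  have hTS : ∀ i x, f i x ∈ S i := fun i x => (Finset.mem_sdiff.mp (hfT i x)).1
  have hTd : ∀ i j x, i ≠ j → f i x ≠ d i j := by
    intro i j x hij h
    apply (Finset.mem_sdiff.mp (hfT i x)).2
    rw [h]
    exact Finset.mem_image_of_mem _ (by simp [hij.symm])
  apply hfree
  refine ⟨fun p => f p.1 p.2, ?_, ?_⟩
  · rintro ⟨i, x⟩ ⟨j, y⟩ h
    by_cases hij : i = j
    · subst hij
      have hxy : x = y := hf i h
      rw [hxy]
    · exact absurd h (hne i j hij _ (hTS i x) _ (hTS j y))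
  · rintro ⟨i, x⟩ ⟨j, y⟩ h
    have hij : i ≠ j := by simpa using h
    rw [SimpleGraph.compl_adj]
    refine ⟨hne i j hij _ (hTS i x) _ (hTS j y), fun hadj => ?_⟩
    rcases hdc i j hij _ (hTS i x) _ (hTS j y) hadj with h | h
    · exact hTd i j x hij h
    · exact hTd j i y hij.symm (h.trans (hd i j hij))
end
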